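/- arXiv:2010.15073 — 2 statements merged into one kernel-verified Lean document; each statement's English description precedes it below -/
import Mathlib

section
/- Let d ∈ ℕ with d ≥ 2, let (c_n) be a sequence of real numbers with c_n ≥ (1 + 2^(d+7)/log₂ n)^(1/d) for every n ≥ 2 (and c_1 ≥ 1), and let q ∈ ℝ with q ≥ 1 and q > 3/d. Then a random sequence (S_n) in the probability space 𝒢_{(c_n)} almost surely satisfies limsup_{n→∞} F_n(S_n)·(log₂ n)^(−q) < ∞; that is, ℙ[ limsup_{n→∞} F_n(S_n)·(log₂ n)^(−q) < ∞ ] = 1. -/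
open MeasureTheory

/-- Euclidean distance between two points of the integer lattice `ℤ^d`. -/
noncomputable def zdist {d : ℕ} (x y : Fin d → ℤ) : ℝ :=
  Real.sqrt (∑ i, ((x i : ℝ) - (y i : ℝ)) ^ 2)

/-- The grid `{1,…,n}^d` as a finset of `ℤ^d`. -/
noncomputable def grid (d n : ℕ) : Finset (Fin d → ℤ) :=
  Fintype.piFinset fun _ => Finset.Icc 1 (n : ℤ)

/-- `F_n(S)`: the least Lipschitz constant (Euclidean metric) of a surjection of `S`
onto the grid `{1,…,n}^d`. -/
noncomputable def Fleast (d n : ℕ) (S : Finset (Fin d → ℤ)) : ℝ :=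
  sInf {L : ℝ | ∃ f : (Fin d → ℤ) → (Fin d → ℤ),
    (∀ x ∈ S, f x ∈ grid d n) ∧
    (∀ y ∈ grid d n, ∃ x ∈ S, f x = y) ∧
    (∀ x ∈ S, ∀ y ∈ S, zdist (f x) (f y) ≤ L * zdist x y)}

/-- The grid `{1,…,m}^d` (with `m : ℤ`), as a finite type. -/
abbrev gridPt (d : ℕ) (m : ℤ) : Type := Fin d → (Finset.Icc (1 : ℤ) m : Finset ℤ)

/-- The space of configurations of `N` points inside the grid `{1,…,m}^d`. -/
abbrev Config (d : ℕ) (m : ℤ) (N : ℕ) : Type := {S : Finset (gridPt d m) // S.card = N}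

/-- A configuration in `gridPt d m`, regarded as a finset of the integer lattice. -/
def toLattice {d : ℕ} {m : ℤ} (S : Finset (gridPt d m)) : Finset (Fin d → ℤ) :=
  S.image fun x i => (x i : ℤ)

instance (d : ℕ) (m : ℤ) (N : ℕ) : MeasurableSpace (Config d m N) := ⊤

/-!
Cut the cube into `2 ^ (K * d)` cells of side about `(log₂ n) ^ q`, and let each point of the random
set spread its unit mass over the cells its unit cube meets. The Chernoff bound holds for sampling
without replacement (by Maclaurin's inequality for elementary symmetric polynomials), so with high
probability the mean mass over every dyadic box of `2 ^ t` cells is within `B / √(2 ^ t)` of its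
expectation `v`. Write the mass of a cell as a telescoping sum of differences of box means, where
consecutive boxes double one side in cyclic order, and sum over a set `A` of cells. At each level
the differences cancel along every row of cells in the doubled direction, so only rows that `A`
fills partially contribute, and each of those contains a boundary cell of `A`. Hence the mass of `A`
differs from `v * #A` by at most a small multiple of the size of the boundary. This is Hall's
condition for a bijection between the grid and the random set that moves rescaled points by
`O((log₂ n) ^ q)`, so its inverse is `O((log₂ n) ^ q)`-Lipschitz. The exceptional probabilities are
summable and Borel–Cantelli applies.
-/

open Finset

section Maclaurin

variable {X 𝕜 : Type*}

lemma esymm_cons [CommSemiring 𝕜] (a : 𝕜) (s : Multiset 𝕜) (k : ℕ) :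
    (a ::ₘ s).esymm (k + 1) = s.esymm (k + 1) + a * s.esymm k := by
  simp only [Multiset.esymm, Multiset.powersetCard_cons, Multiset.map_add, Multiset.sum_add,
    Multiset.map_map, Function.comp_def, Multiset.prod_cons, Multiset.sum_map_mul_left]

lemma esymm_eq_esymm_erase_add [DecidableEq X] [CommSemiring 𝕜] (z : X → 𝕜) (k : ℕ)
    {s : Finset X} {x : X} (hx : x ∈ s) :
    (s.val.map z).esymm (k + 1) =
      ((s.erase x).val.map z).esymm (k + 1) + z x * ((s.erase x).val.map z).esymm k := by
  rw [← esymm_cons, ← Multiset.map_cons, erase_val, Multiset.cons_erase hx]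

lemma sum_esymm_erase [DecidableEq X] [CommRing 𝕜] (z : X → 𝕜) (k : ℕ) (s : Finset X) :
    ∑ x ∈ s, ((s.erase x).val.map z).esymm k = ((#s : 𝕜) - k) * (s.val.map z).esymm k := by
  simp only [esymm_map_val, mul_sum]
  rw [sum_comm' (t' := s.powersetCard k) (s' := fun t => s \ t)]
  · refine sum_congr rfl fun t ht => ?_
    obtain ⟨hts, rfl⟩ := mem_powersetCard.1 ht
    rw [sum_const, card_sdiff_of_subset hts, nsmul_eq_mul, Nat.cast_sub (card_le_card hts)]
  · intro x t
    simp only [mem_powersetCard, mem_sdiff, subset_erase]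
    tauto

lemma sum_mul_esymm_erase [DecidableEq X] [CommRing 𝕜] (z : X → 𝕜) (k : ℕ) (s : Finset X) :
    ∑ x ∈ s, z x * ((s.erase x).val.map z).esymm k = (k + 1) * (s.val.map z).esymm (k + 1) := by
  have hterm : ∀ x ∈ s, z x * ((s.erase x).val.map z).esymm k =
      (s.val.map z).esymm (k + 1) - ((s.erase x).val.map z).esymm (k + 1) := fun x hx => by
    rw [esymm_eq_esymm_erase_add z k hx, add_sub_cancel_left]
  rw [sum_congr rfl hterm, sum_sub_distrib, sum_esymm_erase, sum_const, nsmul_eq_mul]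
  push_cast
  ring

variable [Field 𝕜] [LinearOrder 𝕜] [IsStrictOrderedRing 𝕜] {z : X → 𝕜} {s : Finset X}

lemma esymm_nonneg (hz : ∀ x ∈ s, 0 ≤ z x) (k : ℕ) : 0 ≤ (s.val.map z).esymm k := by
  rw [esymm_map_val]
  exact sum_nonneg fun t ht => prod_nonneg fun x hx => hz x ((mem_powersetCard.1 ht).1 hx)

lemma esymm_erase_le_esymm_erase [DecidableEq X] (hz : ∀ x ∈ s, 0 ≤ z x) (k : ℕ) {x y : X}
    (hx : x ∈ s) (hy : y ∈ s) (hxy : z x ≤ z y) :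
    ((s.erase y).val.map z).esymm k ≤ ((s.erase x).val.map z).esymm k := by
  obtain rfl | hne := eq_or_ne x y
  · rfl
  cases k with
  | zero => simp [Multiset.esymm]
  | succ k =>
    rw [esymm_eq_esymm_erase_add z k (mem_erase.2 ⟨hne, hx⟩),
      esymm_eq_esymm_erase_add z k (mem_erase.2 ⟨hne.symm, hy⟩), erase_right_comm]
    have hnonneg : 0 ≤ (((s.erase x).erase y).val.map z).esymm k :=
      esymm_nonneg (fun w hw => hz w (mem_of_mem_erase (mem_of_mem_erase hw))) k
    gcongr

-- Chebyshev's sum inequality: `x ↦ e_k(s \ {x})` is antitone in `z x`.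
lemma card_mul_esymm_succ_le (hz : ∀ x ∈ s, 0 ≤ z x) (k : ℕ) :
    #s * ((k + 1) * (s.val.map z).esymm (k + 1)) ≤
      (∑ x ∈ s, z x) * ((#s - k) * (s.val.map z).esymm k) := by
  classical
  rw [← sum_mul_esymm_erase, ← sum_esymm_erase]
  refine AntivaryOn.card_mul_sum_le_sum_mul_sum fun x hx y hy hlt => ?_
  exact le_of_not_gt fun hzxy => hlt.not_ge (esymm_erase_le_esymm_erase hz k hx hy hzxy.le)

theorem esymm_le_choose_mul_mean_pow (hz : ∀ x ∈ s, 0 ≤ z x) (k : ℕ) :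
    (s.val.map z).esymm k ≤ (#s).choose k * ((∑ x ∈ s, z x) / #s) ^ k := by
  induction k with
  | zero => simp [Multiset.esymm]
  | succ k ih =>
    obtain hks | hks := lt_or_ge k #s
    · have hs : (0 : 𝕜) < #s := by exact_mod_cast (Nat.zero_le k).trans_lt hks
      have hk : (0 : 𝕜) < k + 1 := by positivity
      have hsk : (0 : 𝕜) ≤ #s - k := sub_nonneg.2 (by exact_mod_cast hks.le)
      have hsum : 0 ≤ ∑ x ∈ s, z x := sum_nonneg hz
      have hchoose : ((#s).choose (k + 1) : 𝕜) * (k + 1) = (#s).choose k * (#s - k) := by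
        have := congrArg (Nat.cast (R := 𝕜)) (Nat.choose_succ_right_eq #s k)
        push_cast [Nat.cast_sub hks.le] at this
        exact this
      refine le_of_mul_le_mul_left (le_of_mul_le_mul_left ?_ hs) hk
      calc #s * ((k + 1) * (s.val.map z).esymm (k + 1))
          ≤ (∑ x ∈ s, z x) * ((#s - k) * (s.val.map z).esymm k) := card_mul_esymm_succ_le hz k
        _ ≤ (∑ x ∈ s, z x) * ((#s - k) * ((#s).choose k * ((∑ x ∈ s, z x) / #s) ^ k)) := by
            gcongr
        _ = (#s).choose k * (#s - k) * ((∑ x ∈ s, z x) * ((∑ x ∈ s, z x) / #s) ^ k) := by ring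
        _ = #s * ((k + 1) * ((#s).choose (k + 1) * ((∑ x ∈ s, z x) / #s) ^ (k + 1))) := by
            rw [← hchoose, pow_succ]
            field_simp
    · have hempty : s.powersetCard (k + 1) = ∅ := powersetCard_eq_empty.2 (by lia)
      rw [esymm_map_val, hempty, sum_empty, Nat.choose_eq_zero_of_lt (by lia)]
      simp

end Maclaurin

section SamplingWithoutReplacement

variable {X : Type*} {s : Finset X} {W : X → ℝ}

lemma mean_exp_mul_le_exp (h0 : ∀ x ∈ s, 0 ≤ W x) (h1 : ∀ x ∈ s, W x ≤ 1) (r : ℝ) :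
    (∑ x ∈ s, Real.exp (r * W x)) / #s ≤
      Real.exp ((Real.exp r - 1) * ((∑ x ∈ s, W x) / #s)) := by
  have hchord : ∀ x ∈ s, Real.exp (r * W x) ≤ 1 + (Real.exp r - 1) * W x := fun x hx => by
    have := convexOn_exp.2 (Set.mem_univ r) (Set.mem_univ 0) (h0 x hx)
      (sub_nonneg.2 (h1 x hx)) (by ring)
    simp only [smul_eq_mul, mul_zero, add_zero, Real.exp_zero, mul_one] at this
    rw [mul_comm]
    linarith
  calc (∑ x ∈ s, Real.exp (r * W x)) / #s
      ≤ (∑ x ∈ s, (1 + (Real.exp r - 1) * W x)) / #s := by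
        gcongr with x hx
        exact hchord x hx
    _ = #s / #s + (Real.exp r - 1) * ((∑ x ∈ s, W x) / #s) := by
        rw [sum_add_distrib, ← mul_sum, sum_const, nsmul_one]
        ring
    _ ≤ (Real.exp r - 1) * ((∑ x ∈ s, W x) / #s) + 1 := by
        rw [add_comm]
        gcongr
        exact div_self_le_one _
    _ ≤ Real.exp ((Real.exp r - 1) * ((∑ x ∈ s, W x) / #s)) := Real.add_one_le_exp _

variable {N : ℕ} {μ : ℝ}

-- Maclaurin's inequality for the values `exp (r * W x)` compares the moment generating function
-- with that of sampling with replacement.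
lemma sum_powersetCard_exp_le (h0 : ∀ x ∈ s, 0 ≤ W x) (h1 : ∀ x ∈ s, W x ≤ 1)
    (hμ : μ = N * ((∑ x ∈ s, W x) / #s)) {r : ℝ} (hr : |r| ≤ 1) :
    ∑ t ∈ s.powersetCard N, Real.exp (r * (∑ x ∈ t, W x - μ)) ≤
      (#s).choose N * Real.exp (μ * r ^ 2) := by
  have hμ0 : 0 ≤ μ := hμ ▸ mul_nonneg N.cast_nonneg (div_nonneg (sum_nonneg h0) (#s).cast_nonneg)
  have hexp : Real.exp r - 1 ≤ r + r ^ 2 := by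
    linarith [(abs_le.1 (Real.abs_exp_sub_one_sub_id_le hr)).2]
  have hesymm : ∑ t ∈ s.powersetCard N, Real.exp (r * (∑ x ∈ t, W x - μ)) =
      (s.val.map fun x => Real.exp (r * W x)).esymm N * Real.exp (-(μ * r)) := by
    rw [esymm_map_val, sum_mul]
    refine sum_congr rfl fun t _ => ?_
    rw [← Real.exp_sum, ← Real.exp_add, ← mul_sum]
    ring_nf
  calc ∑ t ∈ s.powersetCard N, Real.exp (r * (∑ x ∈ t, W x - μ))
      = (s.val.map fun x => Real.exp (r * W x)).esymm N * Real.exp (-(μ * r)) := hesymm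
    _ ≤ (#s).choose N * ((∑ x ∈ s, Real.exp (r * W x)) / #s) ^ N * Real.exp (-(μ * r)) := by
        gcongr
        exact esymm_le_choose_mul_mean_pow (fun x _ => (Real.exp_pos _).le) N
    _ ≤ (#s).choose N * Real.exp ((Real.exp r - 1) * ((∑ x ∈ s, W x) / #s)) ^ N *
          Real.exp (-(μ * r)) := by
        gcongr
        exact mean_exp_mul_le_exp h0 h1 r
    _ = (#s).choose N * Real.exp (μ * (Real.exp r - 1) - μ * r) := by
        rw [← Real.exp_nat_mul, mul_assoc, ← Real.exp_add, hμ]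
        ring_nf
    _ ≤ (#s).choose N * Real.exp (μ * r ^ 2) := by
        gcongr
        nlinarith

theorem card_powersetCard_deviation_le (h0 : ∀ x ∈ s, 0 ≤ W x) (h1 : ∀ x ∈ s, W x ≤ 1)
    (hμ : μ = N * ((∑ x ∈ s, W x) / #s)) {t : ℝ} (ht0 : 0 ≤ t) (ht : t ≤ 2 * μ) :
    (#{S ∈ s.powersetCard N | t < |∑ x ∈ S, W x - μ|} : ℝ) ≤
      2 * Real.exp (-(t ^ 2 / (4 * μ))) * (#s).choose N := by
  -- `r` minimises the Chernoff exponent `μ r² - r t`.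
  set r := t / (2 * μ) with hr
  have hμ0 : 0 ≤ 2 * μ := ht0.trans ht
  have hr0 : 0 ≤ r := div_nonneg ht0 hμ0
  have hr1 : r ≤ 1 := div_le_one_of_le₀ ht hμ0
  have hexponent : μ * r ^ 2 - r * t = -(t ^ 2 / (4 * μ)) := by
    obtain rfl | hμne := eq_or_ne μ 0
    · simp [hr]
    · rw [hr]
      field_simp
      ring
  have hmarkov : #{S ∈ s.powersetCard N | t < |∑ x ∈ S, W x - μ|} * Real.exp (r * t) ≤
      ∑ S ∈ s.powersetCard N, (Real.exp (r * (∑ x ∈ S, W x - μ)) +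
        Real.exp (-r * (∑ x ∈ S, W x - μ))) := by
    rw [← nsmul_eq_mul, ← sum_const]
    refine (sum_le_sum fun S hS => ?_).trans
      (sum_le_sum_of_subset_of_nonneg (filter_subset _ _) fun _ _ _ => by positivity)
    obtain h | h := lt_abs.1 (mem_filter.1 hS).2
    · exact le_add_of_le_of_nonneg (Real.exp_le_exp.2 (by gcongr)) (Real.exp_pos _).le
    · exact le_add_of_nonneg_of_le (Real.exp_pos _).le (Real.exp_le_exp.2 (by nlinarith))
  have hupper := sum_powersetCard_exp_le h0 h1 hμ (abs_le.2 ⟨by linarith, hr1⟩)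
  have hlower := sum_powersetCard_exp_le h0 h1 hμ (r := -r) (abs_le.2 ⟨by linarith, by linarith⟩)
  rw [sum_add_distrib] at hmarkov
  rw [neg_sq] at hlower
  rw [← hexponent, Real.exp_sub, mul_div_assoc', div_mul_eq_mul_div,
    le_div_iff₀ (Real.exp_pos (r * t))]
  linarith

end SamplingWithoutReplacement

section DyadicBoxes

lemma card_range_filter_div_eq {m M j : ℕ} (hj : j < M) : #{u ∈ range (m * M) | u / m = j} = m := by
  obtain rfl | hm := m.eq_zero_or_pos
  · simp
  have hIco : {u ∈ range (m * M) | u / m = j} = Ico (j * m) ((j + 1) * m) := by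
    ext u
    have hlast : (j + 1) * m ≤ m * M := by
      rw [mul_comm m]
      exact Nat.mul_le_mul_right m hj
    rw [mem_filter, mem_range, mem_Ico, Nat.div_eq_iff hm]
    lia
  rw [hIco, Nat.card_Ico, add_one_mul, Nat.add_sub_cancel_left]

lemma div_two_pow_eq_of_le {k l u v : ℕ} (hkl : k ≤ l) (huv : u / 2 ^ k = v / 2 ^ k) :
    u / 2 ^ l = v / 2 ^ l := by
  rw [← Nat.add_sub_cancel' hkl, pow_add, ← Nat.div_div_eq_div_mul, ← Nat.div_div_eq_div_mul, huv]

/-- The cells of the cube `[0, 1)^ι` subdivided into `2 ^ K` intervals along each axis. -/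
abbrev Cell (ι : Type*) (K : ℕ) : Type _ := ι → Fin (2 ^ K)

variable {ι : Type*} {K : ℕ}

/-- The indices of the aligned block of `2 ^ a i` consecutive cells along each axis `i` that
contains `x`. -/
def blockIndex (a : ι → ℕ) (x : Cell ι K) : ι → ℕ := fun i => (x i : ℕ) / 2 ^ a i

lemma blockIndex_eq_iff {a : ι → ℕ} {x y : Cell ι K} :
    blockIndex a y = blockIndex a x ↔ ∀ i, (y i : ℕ) / 2 ^ a i = (x i : ℕ) / 2 ^ a i :=
  funext_iff

/-- Adjacency of cells by a king's move, as on a chessboard; every cell is adjacent to itself. -/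
def KingAdj (x y : Cell ι K) : Prop := ∀ i, (x i : ℕ) ≤ y i + 1 ∧ (y i : ℕ) ≤ x i + 1

lemma KingAdj.refl (x : Cell ι K) : KingAdj x x := fun _ => ⟨Nat.le_succ _, Nat.le_succ _⟩

variable [Fintype ι]

open Classical in
/-- The cells outside `A` that are adjacent to a cell of `A`. -/
noncomputable def outerBoundary (A : Finset (Cell ι K)) : Finset (Cell ι K) :=
  {x | x ∉ A ∧ ∃ y ∈ A, KingAdj x y}

lemma mem_outerBoundary {A : Finset (Cell ι K)} {x : Cell ι K} :
    x ∈ outerBoundary A ↔ x ∉ A ∧ ∃ y ∈ A, KingAdj x y := by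
  simp [outerBoundary]

variable [DecidableEq ι]

/-- The aligned box of `∏ i, 2 ^ a i` cells that contains the cell `x`. -/
def dyadicBox (a : ι → ℕ) (x : Cell ι K) : Finset (Cell ι K) :=
  {y | blockIndex a y = blockIndex a x}

lemma mem_dyadicBox {a : ι → ℕ} {x y : Cell ι K} :
    y ∈ dyadicBox a x ↔ ∀ i, (y i : ℕ) / 2 ^ a i = (x i : ℕ) / 2 ^ a i := by
  simp [dyadicBox, blockIndex_eq_iff]

lemma mem_dyadicBox_comm {a : ι → ℕ} {x y : Cell ι K} : y ∈ dyadicBox a x ↔ x ∈ dyadicBox a y := by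
  simp [dyadicBox, eq_comm]

lemma dyadicBox_zero (x : Cell ι K) : dyadicBox 0 x = {x} := by
  ext y
  simp [mem_dyadicBox, funext_iff, Fin.ext_iff]

lemma dyadicBox_const_top (x : Cell ι K) : dyadicBox (fun _ => K) x = univ := by
  ext y
  simp [mem_dyadicBox, Nat.div_eq_of_lt]

lemma card_dyadicBox {a : ι → ℕ} (ha : ∀ i, a i ≤ K) (x : Cell ι K) :
    #(dyadicBox a x) = 2 ^ ∑ i, a i := by
  have hpi : dyadicBox a x =
      Fintype.piFinset fun i => {z : Fin (2 ^ K) | (z : ℕ) / 2 ^ a i = (x i : ℕ) / 2 ^ a i} := by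
    ext y
    simp [mem_dyadicBox]
  rw [hpi, Fintype.card_piFinset, ← prod_pow_eq_pow_sum]
  refine prod_congr rfl fun i _ => ?_
  have hsplit : 2 ^ K = 2 ^ a i * 2 ^ (K - a i) := by rw [← pow_add, Nat.add_sub_cancel' (ha i)]
  have hblock : (x i : ℕ) / 2 ^ a i < 2 ^ (K - a i) :=
    Nat.div_lt_of_lt_mul (hsplit ▸ (x i).isLt)
  rw [card_filter, Fin.sum_univ_eq_sum_range
    (fun u => if u / 2 ^ a i = (x i : ℕ) / 2 ^ a i then 1 else 0), ← card_filter]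
  exact congrArg (fun k => #{u ∈ range k | u / 2 ^ a i = (x i : ℕ) / 2 ^ a i}) hsplit |>.trans
    (card_range_filter_div_eq hblock)

lemma card_dyadicBox_inter {a b : ι → ℕ} (hb : ∀ i, b i ≤ K) {x y : Cell ι K}
    (hy : y ∈ dyadicBox (a ⊔ b) x) :
    #(dyadicBox b x ∩ dyadicBox a y) = 2 ^ ∑ i, min (a i) (b i) := by
  have hbox : dyadicBox b x ∩ dyadicBox a y =
      dyadicBox (a ⊓ b) fun i => if a i ≤ b i then y i else x i := by
    ext z
    rw [mem_inter, mem_dyadicBox, mem_dyadicBox, mem_dyadicBox, ← forall_and]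
    refine forall_congr' fun i => ?_
    have hyi := mem_dyadicBox.1 hy i
    obtain hab | hab := le_or_gt (a i) (b i)
    · simp only [Pi.sup_apply, sup_of_le_right hab, Pi.inf_apply, inf_of_le_left hab,
        if_pos hab] at hyi ⊢
      exact and_iff_right_of_imp fun hz => (div_two_pow_eq_of_le hab hz).trans hyi
    · simp only [Pi.sup_apply, sup_of_le_left hab.le, Pi.inf_apply, inf_of_le_right hab.le,
        if_neg hab.not_ge] at hyi ⊢
      exact and_iff_left_of_imp fun hz => (div_two_pow_eq_of_le hab.le hz).trans hyi.symm
  rw [hbox, card_dyadicBox (a := a ⊓ b) fun i => inf_le_right.trans (hb i)]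
  rfl

lemma sum_dyadicBox_sum_dyadicBox (s : Cell ι K → ℝ) (a : ι → ℕ) {b : ι → ℕ}
    (hb : ∀ i, b i ≤ K) (x : Cell ι K) :
    ∑ z ∈ dyadicBox b x, ∑ y ∈ dyadicBox a z, s y =
      2 ^ (∑ i, min (a i) (b i)) * ∑ y ∈ dyadicBox (a ⊔ b) x, s y := by
  rw [sum_comm' (t' := dyadicBox (a ⊔ b) x) (s' := fun y => dyadicBox b x ∩ dyadicBox a y), mul_sum]
  · refine sum_congr rfl fun y hy => ?_
    rw [sum_const, card_dyadicBox_inter hb hy, nsmul_eq_mul]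
    norm_cast
  · intro z y
    rw [mem_inter, mem_dyadicBox_comm (x := z), Iff.comm, and_iff_left_iff_imp]
    rintro ⟨hz, hzy⟩
    refine mem_dyadicBox.2 fun i => ?_
    exact (div_two_pow_eq_of_le le_sup_left (mem_dyadicBox.1 hzy i)).symm.trans
      (div_two_pow_eq_of_le le_sup_right (mem_dyadicBox.1 hz i))

/-- The mean of `s` over the dyadic box with exponents `a` around `x` (for `a i ≤ K`, when that box
has `2 ^ ∑ i, a i` cells). -/
noncomputable def boxMean (s : Cell ι K → ℝ) (a : ι → ℕ) (x : Cell ι K) : ℝ :=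
  (∑ y ∈ dyadicBox a x, s y) / 2 ^ ∑ i, a i

lemma boxMean_zero (s : Cell ι K → ℝ) (x : Cell ι K) : boxMean s 0 x = s x := by
  simp [boxMean, dyadicBox_zero]

lemma sum_dyadicBox_boxMean (s : Cell ι K → ℝ) (a : ι → ℕ) {b : ι → ℕ} (hb : ∀ i, b i ≤ K)
    (x : Cell ι K) :
    ∑ z ∈ dyadicBox b x, boxMean s a z = 2 ^ (∑ i, b i) * boxMean s (a ⊔ b) x := by
  have hexponents : ∑ i, min (a i) (b i) + ∑ i, (a ⊔ b) i = ∑ i, a i + ∑ i, b i := by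
    rw [← sum_add_distrib, ← sum_add_distrib]
    exact sum_congr rfl fun i _ => min_add_max _ _
  simp only [boxMean]
  rw [← sum_div, sum_dyadicBox_sum_dyadicBox s a hb, mul_div_assoc', div_eq_div_iff (by positivity)
    (by positivity), mul_right_comm, ← pow_add, hexponents, pow_add]
  ring

lemma sum_dyadicBox_boxMean_sub_boxMean_update (s : Cell ι K → ℝ) (a : ι → ℕ) {i : ι} {k : ℕ}
    (hik : a i ≤ k) (hk : k ≤ K) (x : Cell ι K) :
    ∑ z ∈ dyadicBox (Pi.single i k) x,
      (boxMean s a z - boxMean s (Function.update a i k) z) = 0 := by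
  have hb : ∀ j, (Pi.single i k : ι → ℕ) j ≤ K := fun j => by
    rw [Pi.single_apply]
    split_ifs <;> lia
  have hsup : Function.update a i k ⊔ Pi.single i k = a ⊔ Pi.single i k := by
    ext j
    obtain rfl | hj := eq_or_ne j i
    · simp [hik]
    · simp [hj]
  rw [sum_sub_distrib, sum_dyadicBox_boxMean s a hb, sum_dyadicBox_boxMean s _ hb, hsup, sub_self]

lemma exists_mem_outerBoundary_of_mem_dyadicBox {A : Finset (Cell ι K)} {b : ι → ℕ}
    {p r : Cell ι K} (hp : p ∈ A) (hr : r ∉ A) (hrp : r ∈ dyadicBox b p) :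
    ∃ z ∈ outerBoundary A, z ∈ dyadicBox b p := by
  let distTo (z : Cell ι K) : ℕ := ∑ i, Nat.dist (z i) (p i)
  -- A cell of the box outside `A` closest to `p`: its king's move towards `p` must land in `A`.
  obtain ⟨z, hz, hzmin⟩ := exists_min_image (dyadicBox b p \ A) distTo ⟨r, mem_sdiff.2 ⟨hrp, hr⟩⟩
  obtain ⟨hzp, hzA⟩ := mem_sdiff.1 hz
  let w : Cell ι K := fun i =>
    ⟨max ((z i : ℕ) - 1) (min (z i + 1) (p i)), by lia⟩
  have hw : ∀ i, (w i : ℕ) = max ((z i : ℕ) - 1) (min (z i + 1) (p i)) := fun _ => rfl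
  have hwp : w ∈ dyadicBox b p := mem_dyadicBox.2 fun i => by
    have hzi := mem_dyadicBox.1 hzp i
    obtain hle | hle := le_total (z i : ℕ) (p i)
    · exact (Nat.div_le_div_right (by lia)).antisymm
        (hzi.ge.trans (Nat.div_le_div_right (by lia)))
    · exact ((Nat.div_le_div_right (by lia)).trans hzi.le).antisymm
        (Nat.div_le_div_right (by lia))
  have hcloser : distTo w < distTo z := by
    obtain ⟨j, hj⟩ := Function.ne_iff.1 (ne_of_mem_of_not_mem hp hzA)
    have := Fin.val_ne_of_ne hj
    refine sum_lt_sum (fun i _ => ?_) ⟨j, mem_univ j, ?_⟩ <;> simp only [Nat.dist, hw] <;> lia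
  have hwA : w ∈ A := by
    by_contra hwA
    exact hcloser.not_ge (hzmin w (mem_sdiff.2 ⟨hwp, hwA⟩))
  exact ⟨z, mem_outerBoundary.2 ⟨hzA, w, hwA, fun i => by lia⟩, hzp⟩

lemma sum_eq_sum_image_of_sum_fiber_eq_zero {α β M : Type*} [Fintype α] [DecidableEq β]
    [AddCommMonoid M] {g : α → β} {h : α → M} (h0 : ∀ x, ∑ z with g z = g x, h z = 0)
    {A D : Finset α} (hD : ∀ p ∈ A, ∀ r ∉ A, g r = g p → ∃ z ∈ D, g z = g p) :
    ∑ x ∈ A, h x = ∑ b ∈ D.image g, ∑ x ∈ A with g x = b, h x := by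
  have hunmixed : ∀ b ∈ A.image g, b ∉ D.image g → ∑ x ∈ A with g x = b, h x = 0 := by
    intro b hbA hbD
    obtain ⟨p, hp, rfl⟩ := mem_image.1 hbA
    have hfull : ∀ r, g r = g p → r ∈ A := fun r hr => by
      by_contra hrA
      obtain ⟨z, hz, hzp⟩ := hD p hp r hrA hr
      exact hbD (mem_image.2 ⟨z, hz, hzp⟩)
    rw [← h0 p]
    refine sum_congr (ext fun z => ?_) fun _ _ => rfl
    simpa using hfull z
  rw [← sum_fiberwise_of_maps_to (t := A.image g ∪ D.image g) (g := g) fun x hx =>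
    mem_union_left _ (mem_image_of_mem g hx)]
  refine (sum_subset subset_union_right fun b hb hbD => ?_).symm
  exact hunmixed b ((mem_union.1 hb).resolve_right hbD) hbD

lemma abs_sum_le_of_sum_fiber_eq_zero {α β : Type*} [Fintype α] [DecidableEq β] {g : α → β}
    {h : α → ℝ} {H : ℝ} {c : ℕ} (hH : ∀ x, |h x| ≤ H) (hc : ∀ x, #{z | g z = g x} ≤ c)
    (h0 : ∀ x, ∑ z with g z = g x, h z = 0) {A D : Finset α}
    (hD : ∀ p ∈ A, ∀ r ∉ A, g r = g p → ∃ z ∈ D, g z = g p) :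
    |∑ x ∈ A, h x| ≤ c * H * #D := by
  have hmixed : ∀ b ∈ D.image g, |∑ x ∈ A with g x = b, h x| ≤ c * H := by
    intro b hb
    obtain ⟨z, -, rfl⟩ := mem_image.1 hb
    have hH0 : 0 ≤ H := (abs_nonneg _).trans (hH z)
    calc |∑ x ∈ A with g x = g z, h x|
        ≤ ∑ x ∈ A with g x = g z, |h x| := abs_sum_le_sum_abs _ _
      _ ≤ #{x ∈ A | g x = g z} * H := by
          rw [← nsmul_eq_mul]
          exact sum_le_card_nsmul _ _ _ fun x _ => hH x
      _ ≤ c * H := by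
          gcongr
          exact (card_le_card (filter_subset_filter _ (subset_univ A))).trans (hc z)
  calc |∑ x ∈ A, h x|
      = |∑ b ∈ D.image g, ∑ x ∈ A with g x = b, h x| := by
        rw [sum_eq_sum_image_of_sum_fiber_eq_zero h0 hD]
    _ ≤ ∑ b ∈ D.image g, |∑ x ∈ A with g x = b, h x| := abs_sum_le_sum_abs _ _
    _ ≤ #(D.image g) * (c * H) := by
        rw [← nsmul_eq_mul]
        exact sum_le_card_nsmul _ _ _ hmixed
    _ ≤ c * H * #D := by
        obtain rfl | ⟨z, -⟩ := D.eq_empty_or_nonempty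
        · simp
        have hH0 : 0 ≤ H := (abs_nonneg _).trans (hH z)
        rw [mul_comm]
        gcongr
        exact card_image_le

lemma abs_sum_boxMean_sub_boxMean_update_le {s : Cell ι K → ℝ} {a : ι → ℕ} {i : ι} {k : ℕ}
    (hik : a i ≤ k) (hk : k ≤ K) {H : ℝ}
    (hH : ∀ z, |boxMean s a z - boxMean s (Function.update a i k) z| ≤ H)
    (A : Finset (Cell ι K)) :
    |∑ z ∈ A, (boxMean s a z - boxMean s (Function.update a i k) z)| ≤
      2 ^ k * H * #(outerBoundary A) := by
  have hb : ∀ j, (Pi.single i k : ι → ℕ) j ≤ K := fun j => by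
    rw [Pi.single_apply]
    split_ifs <;> lia
  have hbound := abs_sum_le_of_sum_fiber_eq_zero (g := blockIndex (Pi.single i k)) (c := 2 ^ k) hH
    (fun x => (card_dyadicBox hb x).le.trans (by simp))
    (sum_dyadicBox_boxMean_sub_boxMean_update s a hik hk) (A := A) (D := outerBoundary A)
    fun p hp r hr hrp => by
      simpa [dyadicBox] using exists_mem_outerBoundary_of_mem_dyadicBox hp hr
        (b := Pi.single i k) (by simpa [dyadicBox] using hrp)
  exact_mod_cast hbound

end DyadicBoxes

section RoundRobin

variable {d K : ℕ}

/-- The exponents after `t` steps of doubling the sides of a box of cells one at a time, in cyclic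
order: step `u` doubles the side in direction `u % d`. -/
def roundRobin (d t : ℕ) : Fin d → ℕ := fun i => Nat.count (· ≡ i [MOD d]) t

lemma roundRobin_zero : roundRobin d 0 = 0 := by
  ext i
  simp [roundRobin]

lemma roundRobin_apply (t : ℕ) (i : Fin d) :
    roundRobin d t i = t / d + if (i : ℕ) < t % d then 1 else 0 := by
  rw [roundRobin, Nat.count_modEq_card t i.pos, Nat.mod_eq_of_lt i.isLt]

lemma roundRobin_mul (K : ℕ) (i : Fin d) : roundRobin d (d * K) i = K := by
  simp [roundRobin_apply, Nat.mul_div_cancel_left K i.pos]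

lemma roundRobin_le {t : ℕ} (ht : t ≤ d * K) (i : Fin d) : roundRobin d t i ≤ K :=
  (Nat.count_monotone _ ht).trans (roundRobin_mul K i).le

lemma roundRobin_ofNat [NeZero d] (t : ℕ) : roundRobin d t (Fin.ofNat d t) = t / d := by
  simp [roundRobin_apply]

lemma roundRobin_succ [NeZero d] (t : ℕ) :
    roundRobin d (t + 1) = Function.update (roundRobin d t) (Fin.ofNat d t) (t / d + 1) := by
  ext i
  rw [roundRobin, Nat.count_succ]
  obtain rfl | hi := eq_or_ne i (Fin.ofNat d t)
  · rw [Function.update_self, ← roundRobin_ofNat t, if_pos (by simp [Nat.ModEq])]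
    rfl
  · have hne : ¬ t ≡ i [MOD d] := fun h => hi (Fin.ext (by
      simpa [Nat.ModEq, Nat.mod_eq_of_lt i.isLt] using h.symm))
    rw [Function.update_of_ne hi, if_neg hne]
    rfl

lemma sum_roundRobin [NeZero d] (t : ℕ) : ∑ i, roundRobin d t i = t := by
  induction t with
  | zero => simp [roundRobin_zero]
  | succ t ih =>
    have hsplit := add_sum_erase univ (roundRobin d t) (mem_univ (Fin.ofNat d t))
    rw [roundRobin_succ, sum_update_of_mem (mem_univ _), sdiff_singleton_eq_erase]
    rw [roundRobin_ofNat] at hsplit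
    lia

/-- The mean of `s` over every box of `2 ^ t` cells occurring in the cyclic subdivision differs
from `v` by at most `B / √(2 ^ t)`, the deviation expected of a sum of `2 ^ t` independent terms. -/
def DiscrepancyLE (s : Cell (Fin d) K → ℝ) (v B : ℝ) : Prop :=
  ∀ t ≤ d * K, ∀ x, |boxMean s (roundRobin d t) x - v| ≤ B / √(2 ^ t)

variable {s : Cell (Fin d) K → ℝ} {v B : ℝ}

lemma DiscrepancyLE.abs_apply_sub_le (hs : DiscrepancyLE s v B) (x : Cell (Fin d) K) :
    |s x - v| ≤ B := by
  simpa [roundRobin_zero, boxMean_zero] using hs 0 (Nat.zero_le _) x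

lemma boxMean_roundRobin_mul [NeZero d] (hs : ∑ y, s y = v * 2 ^ (d * K)) (x : Cell (Fin d) K) :
    boxMean s (roundRobin d (d * K)) x = v := by
  rw [boxMean, sum_roundRobin, funext (roundRobin_mul (d := d) K), dyadicBox_const_top, hs]
  exact mul_div_cancel_right₀ v (by positivity)

-- The `4` is uniform in `t` because for `d ≥ 2` the box has at most `√(2 ^ t)` cells in a row.
lemma DiscrepancyLE.abs_sum_boxMean_step_le (hd : 2 ≤ d) (hs : DiscrepancyLE s v B) {t : ℕ}
    (ht : t < d * K) (A : Finset (Cell (Fin d) K)) :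
    |∑ x ∈ A, (boxMean s (roundRobin d t) x - boxMean s (roundRobin d (t + 1)) x)| ≤
      4 * B * #(outerBoundary A) := by
  have : NeZero d := ⟨by lia⟩
  have hB : 0 ≤ B := (abs_nonneg _).trans (hs.abs_apply_sub_le 0)
  have hside : t / d + 1 ≤ K := Nat.div_lt_of_lt_mul ht
  have hrow : (2 : ℝ) ^ (t / d) ≤ √(2 ^ t) := by
    refine Real.le_sqrt_of_sq_le ?_
    rw [← pow_mul]
    exact pow_le_pow_right₀ one_le_two
      ((Nat.mul_le_mul_left _ hd).trans (Nat.div_mul_le_self t d))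
  have hdiff : ∀ x, |boxMean s (roundRobin d t) x - boxMean s (roundRobin d (t + 1)) x| ≤
      2 * B / √(2 ^ t) := fun x => by
    have hmono : B / √(2 ^ (t + 1)) ≤ B / √(2 ^ t) := by
      gcongr
      exacts [one_le_two, t.le_succ]
    calc _ ≤ |boxMean s (roundRobin d t) x - v| + |boxMean s (roundRobin d (t + 1)) x - v| := by
          rw [abs_sub_comm (boxMean s (roundRobin d (t + 1)) x)]
          exact abs_sub_le _ _ _
      _ ≤ B / √(2 ^ t) + B / √(2 ^ t) :=
          add_le_add (hs t ht.le x) ((hs (t + 1) ht x).trans hmono)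
      _ = 2 * B / √(2 ^ t) := by ring
  rw [roundRobin_succ] at hdiff ⊢
  calc _ ≤ 2 ^ (t / d + 1) * (2 * B / √(2 ^ t)) * #(outerBoundary A) :=
        abs_sum_boxMean_sub_boxMean_update_le
          ((roundRobin_ofNat t).le.trans (Nat.le_succ _)) hside hdiff A
    _ = 2 ^ (t / d) / √(2 ^ t) * (4 * B * #(outerBoundary A)) := by ring
    _ ≤ 4 * B * #(outerBoundary A) :=
        mul_le_of_le_one_left (by positivity) (div_le_one_of_le₀ hrow (by positivity))

lemma DiscrepancyLE.abs_sum_sub_card_mul_le (hd : 2 ≤ d) (hs : DiscrepancyLE s v B)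
    (htotal : ∑ y, s y = v * 2 ^ (d * K)) (A : Finset (Cell (Fin d) K)) :
    |∑ x ∈ A, s x - #A * v| ≤ 4 * B * (d * K) * #(outerBoundary A) := by
  have : NeZero d := ⟨by lia⟩
  have htelescope : ∑ x ∈ A, s x - #A * v = ∑ t ∈ range (d * K),
      ∑ x ∈ A, (boxMean s (roundRobin d t) x - boxMean s (roundRobin d (t + 1)) x) := by
    simp only [sum_sub_distrib (f := fun x => boxMean s _ x)]
    rw [sum_range_sub' fun t => ∑ x ∈ A, boxMean s (roundRobin d t) x]
    simp [roundRobin_zero, boxMean_zero, boxMean_roundRobin_mul htotal]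
  rw [htelescope]
  refine (abs_sum_le_sum_abs _ _).trans ((sum_le_card_nsmul _ _ _ fun t ht =>
    hs.abs_sum_boxMean_step_le hd (mem_range.1 ht) A).trans_eq ?_)
  rw [card_range, nsmul_eq_mul]
  push_cast
  ring

theorem DiscrepancyLE.card_mul_le (hd : 2 ≤ d) (hs : DiscrepancyLE s v B)
    (htotal : ∑ y, s y = v * 2 ^ (d * K)) (hlevels : 4 * B * (d * K) ≤ v / 2) (hB : B ≤ v / 2)
    (A : Finset (Cell (Fin d) K)) :
    #A * v ≤ ∑ x ∈ A, s x + ∑ x ∈ outerBoundary A, s x := by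
  have hinner := (abs_le.1 (hs.abs_sum_sub_card_mul_le hd htotal A)).1
  have hhalf : ∀ x, v / 2 ≤ s x := fun x => by linarith [(abs_le.1 (hs.abs_apply_sub_le x)).1]
  have houter : #(outerBoundary A) * (v / 2) ≤ ∑ x ∈ outerBoundary A, s x := by
    rw [← nsmul_eq_mul]
    exact card_nsmul_le_sum _ _ _ fun x _ => hhalf x
  have hlevels' := mul_le_mul_of_nonneg_right hlevels (#(outerBoundary A)).cast_nonneg
  linarith

end RoundRobin

section CellWeights

/-- The fraction of the interval `[x / m, (x + 1) / m)` that lies in `[j / M, (j + 1) / M)`,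
obtained by counting intervals of the common refinement into `m * M` pieces. -/
noncomputable def overlap (m M x j : ℕ) : ℝ :=
  (#{u ∈ range (m * M) | u / M = x ∧ u / m = j} : ℝ) / M

lemma overlap_nonneg (m M x j : ℕ) : 0 ≤ overlap m M x j := by
  unfold overlap
  positivity

lemma sum_range_card_range_filter_div {m M x : ℕ} (hx : x < m) :
    ∑ j ∈ range M, #{u ∈ range (m * M) | u / M = x ∧ u / m = j} = M := by
  have hmaps : ∀ u ∈ {u ∈ range (m * M) | u / M = x}, u / m ∈ range M := fun u hu =>
    mem_range.2 (Nat.div_lt_of_lt_mul (mem_range.1 (mem_filter.1 hu).1))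
  simp only [← filter_filter]
  rw [← card_eq_sum_card_fiberwise hmaps, mul_comm, card_range_filter_div_eq hx]

lemma sum_range_overlap_right {m M x : ℕ} (hM : M ≠ 0) (hx : x < m) :
    ∑ j ∈ range M, overlap m M x j = 1 := by
  simp only [overlap]
  rw [← sum_div, ← Nat.cast_sum, sum_range_card_range_filter_div hx,
    div_self (Nat.cast_ne_zero.2 hM)]

lemma sum_range_overlap_left {m M j : ℕ} (hj : j < M) :
    ∑ x ∈ range m, overlap m M x j = m / M := by
  simp only [overlap, and_comm (b := _ / m = j), mul_comm m M]
  rw [← sum_div, ← Nat.cast_sum, sum_range_card_range_filter_div hj]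

lemma lt_of_overlap_ne_zero {m M x j : ℕ} (h : overlap m M x j ≠ 0) :
    j * m < (x + 1) * M ∧ x * M < (j + 1) * m := by
  obtain ⟨u, hu⟩ : {u ∈ range (m * M) | u / M = x ∧ u / m = j}.Nonempty := by
    rw [nonempty_iff_ne_empty]
    intro hempty
    simp [overlap, hempty] at h
  obtain ⟨humM, hx, hj⟩ := mem_filter.1 hu
  have hmM : 0 < m * M := (Nat.zero_le u).trans_lt (mem_range.1 humM)
  rw [Nat.div_eq_iff (Nat.pos_of_mul_pos_left hmM)] at hx
  rw [Nat.div_eq_iff (Nat.pos_of_mul_pos_right hmM)] at hj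
  lia

lemma sum_Icc_one_toNat_sub_one {R : Type*} [AddCommMonoid R] (m : ℕ) (f : ℕ → R) :
    ∑ x : (Icc (1 : ℤ) m : Finset ℤ), f ((x : ℤ) - 1).toNat = ∑ k ∈ range m, f k := by
  rw [sum_coe_sort (Icc (1 : ℤ) m) fun x => f (x - 1).toNat]
  refine sum_nbij' (fun x => (x - 1).toNat) (fun k => (k : ℤ) + 1) ?_ ?_ ?_ ?_ fun _ _ => rfl <;>
    intro x hx <;> simp only [mem_Icc, mem_range] at hx ⊢ <;> lia

variable {d K m : ℕ}

/-- The proportion of the unit cube with upper corner `p` that lies in `Q`, when the big cube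
`[0, m]^d` is cut into the `(2 ^ K) ^ d` cells. -/
noncomputable def cellWeight (p : gridPt d m) (Q : Cell (Fin d) K) : ℝ :=
  ∏ i, overlap m (2 ^ K) ((p i : ℤ) - 1).toNat (Q i)

lemma cellWeight_nonneg (p : gridPt d m) (Q : Cell (Fin d) K) : 0 ≤ cellWeight p Q :=
  prod_nonneg fun _ _ => overlap_nonneg _ _ _ _

lemma sum_cellWeight_right (p : gridPt d m) : ∑ Q : Cell (Fin d) K, cellWeight p Q = 1 := by
  simp only [cellWeight]
  rw [← Fintype.prod_sum fun i (j : Fin (2 ^ K)) => overlap m (2 ^ K) ((p i : ℤ) - 1).toNat j]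
  refine prod_eq_one fun i _ => ?_
  rw [Fin.sum_univ_eq_sum_range (overlap m (2 ^ K) ((p i : ℤ) - 1).toNat)]
  have := mem_Icc.1 (p i).2
  exact sum_range_overlap_right (by positivity) (by lia)

lemma sum_cellWeight_left (Q : Cell (Fin d) K) :
    ∑ p : gridPt d m, cellWeight p Q = ((m : ℝ) / 2 ^ K) ^ d := by
  simp only [cellWeight]
  rw [← Fintype.prod_sum fun i (x : (Icc (1 : ℤ) m : Finset ℤ)) =>
    overlap m (2 ^ K) ((x : ℤ) - 1).toNat (Q i)]
  refine (prod_congr rfl fun i _ => (sum_Icc_one_toNat_sub_one m fun x =>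
    overlap m (2 ^ K) x (Q i)).trans (sum_range_overlap_left (Q i).isLt)).trans ?_
  simp [div_pow]

lemma sum_cellWeight_le_one (p : gridPt d m) (A : Finset (Cell (Fin d) K)) :
    ∑ Q ∈ A, cellWeight p Q ≤ 1 :=
  (sum_le_sum_of_subset_of_nonneg (subset_univ A) fun Q _ _ => cellWeight_nonneg p Q).trans_eq
    (sum_cellWeight_right p)

lemma scaled_coord_mem_of_cellWeight_ne_zero {n : ℕ} (hnm : n ≤ m) {p : gridPt d m}
    {Q : Cell (Fin d) K} (h : cellWeight p Q ≠ 0) (i : Fin d) :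
    (Q i : ℕ) * ((n : ℝ) / 2 ^ K) ≤ (n : ℝ) / m * (p i : ℤ) ∧
      (n : ℝ) / m * (p i : ℤ) ≤ ((Q i : ℕ) + 1) * ((n : ℝ) / 2 ^ K) + 1 := by
  have hp := mem_Icc.1 (p i).2
  obtain ⟨hlower, hupper⟩ := lt_of_overlap_ne_zero (prod_ne_zero_iff.1 h i (mem_univ i))
  have hm : (0 : ℝ) < m := by exact_mod_cast (by lia : 0 < m)
  have hnm' : (n : ℝ) / m ≤ 1 := div_le_one_of_le₀ (by exact_mod_cast hnm) hm.le
  have hx : (((p i : ℤ) - 1).toNat : ℝ) = (p i : ℤ) - 1 := by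
    exact_mod_cast congrArg (Int.cast (R := ℝ)) (Int.toNat_of_nonneg (by lia : 0 ≤ (p i : ℤ) - 1))
  have hlower' := (Nat.cast_lt (α := ℝ)).2 hlower
  have hupper' := (Nat.cast_lt (α := ℝ)).2 hupper
  push_cast [hx] at hlower' hupper'
  have hlength : (n : ℝ) / 2 ^ K = m / 2 ^ K * (n / m) := by field_simp
  rw [hlength, ← mul_assoc, mul_comm ((n : ℝ) / m), ← mul_assoc]
  constructor
  · gcongr
    rw [mul_div_assoc', div_le_iff₀ (by positivity)]
    linarith
  · calc ((p i : ℤ) : ℝ) * (n / m) = ((p i : ℤ) - 1) * (n / m) + n / m := by ring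
      _ ≤ ((Q i : ℕ) + 1) * ((m : ℝ) / 2 ^ K) * (n / m) + 1 := by
          gcongr
          rw [mul_div_assoc', le_div_iff₀ (by positivity)]
          exact hupper'.le

/-- The mass that a set `S` of grid points puts on the cell `Q`. -/
noncomputable def cellMass (S : Finset (gridPt d m)) (Q : Cell (Fin d) K) : ℝ :=
  ∑ p ∈ S, cellWeight p Q

lemma sum_cellMass (S : Finset (gridPt d m)) : ∑ Q : Cell (Fin d) K, cellMass S Q = #S := by
  simp only [cellMass]
  rw [sum_comm]
  simp [sum_cellWeight_right]

variable [NeZero d] {n : ℕ} {B : ℝ}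

lemma boxMean_cellMass (S : Finset (gridPt d m)) (t : ℕ) (x : Cell (Fin d) K) :
    boxMean (cellMass S) (roundRobin d t) x =
      (∑ p ∈ S, ∑ Q ∈ dyadicBox (roundRobin d t) x, cellWeight p Q) / 2 ^ t := by
  simp only [boxMean, cellMass]
  rw [sum_comm, sum_roundRobin]

lemma sum_sum_dyadicBox_cellWeight {t : ℕ} (ht : t ≤ d * K) (x : Cell (Fin d) K) :
    ∑ p : gridPt d m, ∑ Q ∈ dyadicBox (roundRobin d t) x, cellWeight p Q =
      2 ^ t * ((m : ℝ) / 2 ^ K) ^ d := by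
  rw [sum_comm, sum_congr rfl fun Q _ => sum_cellWeight_left Q, sum_const,
    card_dyadicBox (roundRobin_le ht), sum_roundRobin, nsmul_eq_mul]
  norm_cast

lemma card_boxMean_cellMass_deviation_le (hn : 0 < n) (hnm : n ≤ m) (hB : 0 ≤ B)
    (hBv : B ≤ ((n : ℝ) / 2 ^ K) ^ d) {t : ℕ} (ht : t ≤ d * K) (x : Cell (Fin d) K) :
    (#{S ∈ (univ : Finset (gridPt d m)).powersetCard (n ^ d) |
        B / √(2 ^ t) < |boxMean (cellMass S) (roundRobin d t) x - ((n : ℝ) / 2 ^ K) ^ d|} : ℝ) ≤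
      2 * Real.exp (-(B ^ 2 / (4 * ((n : ℝ) / 2 ^ K) ^ d))) * (m ^ d).choose (n ^ d) := by
  set v := ((n : ℝ) / 2 ^ K) ^ d with hv
  let W : gridPt d m → ℝ := fun p => ∑ Q ∈ dyadicBox (roundRobin d t) x, cellWeight p Q
  have hcard : #(univ : Finset (gridPt d m)) = m ^ d := by simp
  have hsq : √((2 : ℝ) ^ t) ^ 2 = 2 ^ t := Real.sq_sqrt (by positivity)
  have hone : 1 ≤ √((2 : ℝ) ^ t) := Real.one_le_sqrt.2 (one_le_pow₀ one_le_two)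
  have hmean : v * 2 ^ t = (n ^ d : ℕ) * ((∑ p, W p) / #(univ : Finset (gridPt d m))) := by
    have hm : (m : ℝ) ≠ 0 := by exact_mod_cast (hn.trans_le hnm).ne'
    rw [hcard, sum_sum_dyadicBox_cellWeight ht, hv, div_pow, div_pow]
    push_cast
    field_simp
  have hiff : ∀ S : Finset (gridPt d m), B / √(2 ^ t) <
      |boxMean (cellMass S) (roundRobin d t) x - v| ↔
        B * √(2 ^ t) < |∑ p ∈ S, W p - v * 2 ^ t| := fun S => by
    have hpow : (0 : ℝ) < 2 ^ t := by positivity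
    have hscale : B / √(2 ^ t) = B * √(2 ^ t) / 2 ^ t := by
      rw [mul_div_assoc, Real.sqrt_div_self', mul_one_div]
    rw [boxMean_cellMass, hscale, div_sub' hpow.ne', abs_div, abs_of_pos hpow,
      div_lt_div_iff_of_pos_right hpow, mul_comm v]
  have hle : B * √(2 ^ t) ≤ v * 2 ^ t :=
    mul_le_mul hBv (by nlinarith) (by positivity) (hB.trans hBv)
  have hdev := card_powersetCard_deviation_le (s := univ) (W := W)
    (fun p _ => sum_nonneg fun Q _ => cellWeight_nonneg p Q) (fun p _ => sum_cellWeight_le_one p _)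
    hmean (t := B * √(2 ^ t)) (by positivity) (hle.trans (le_mul_of_one_le_left
      (mul_nonneg (hB.trans hBv) (by positivity)) one_le_two))
  have hexponent : (B * √(2 ^ t)) ^ 2 / (4 * (v * 2 ^ t)) = B ^ 2 / (4 * v) := by
    rw [mul_pow, hsq, ← mul_assoc, mul_div_mul_right _ _ (by positivity)]
  simp only [hiff]
  rwa [hexponent, hcard] at hdev

open Classical in
theorem card_not_discrepancyLE_cellMass_le (hn : 0 < n) (hnm : n ≤ m) (hB : 0 ≤ B)
    (hBv : B ≤ ((n : ℝ) / 2 ^ K) ^ d) :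
    (#{S ∈ (univ : Finset (gridPt d m)).powersetCard (n ^ d) |
        ¬ DiscrepancyLE (cellMass (K := K) S) (((n : ℝ) / 2 ^ K) ^ d) B} : ℝ) ≤
      (d * K + 1) * (2 ^ K) ^ d *
        (2 * Real.exp (-(B ^ 2 / (4 * ((n : ℝ) / 2 ^ K) ^ d))) * (m ^ d).choose (n ^ d)) := by
  set U := (univ : Finset (gridPt d m)).powersetCard (n ^ d)
  set T := range (d * K + 1) ×ˢ (univ : Finset (Cell (Fin d) K)) with hT
  let deviating (tx : ℕ × Cell (Fin d) K) : Finset (Finset (gridPt d m)) :=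
    {S ∈ U | B / √(2 ^ tx.1) <
      |boxMean (cellMass S) (roundRobin d tx.1) tx.2 - ((n : ℝ) / 2 ^ K) ^ d|}
  have hunion : {S ∈ U | ¬ DiscrepancyLE (cellMass (K := K) S) (((n : ℝ) / 2 ^ K) ^ d) B} ⊆
      T.biUnion deviating := fun S hS => by
    obtain ⟨hSU, hS⟩ := mem_filter.1 hS
    simp only [DiscrepancyLE, not_forall, not_le] at hS
    obtain ⟨t, ht, x, hx⟩ := hS
    exact mem_biUnion.2 ⟨(t, x), by simpa [hT] using Nat.lt_succ_of_le ht, mem_filter.2 ⟨hSU, hx⟩⟩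
  have hcardT : (#T : ℝ) = (d * K + 1) * (2 ^ K) ^ d := by simp [hT]
  calc _ ≤ ∑ tx ∈ T, (#(deviating tx) : ℝ) := by
        exact_mod_cast (card_le_card hunion).trans card_biUnion_le
    _ ≤ #T • (2 * Real.exp (-(B ^ 2 / (4 * ((n : ℝ) / 2 ^ K) ^ d))) * (m ^ d).choose (n ^ d)) :=
        sum_le_card_nsmul _ _ _ fun tx htx => card_boxMean_cellMass_deviation_le hn hnm hB hBv
          (Nat.le_of_lt_succ (mem_range.1 (mem_product.1 htx).1)) tx.2
    _ = _ := by rw [nsmul_eq_mul, hcardT]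

end CellWeights

section Matching

variable {d K n m : ℕ} {B : ℝ}

open Classical in
/-- The cells met by the unit cubes of the points of `Y`, the grid of `Y` being rescaled to the
cube that is cut into cells. -/
noncomputable def touchedCells (K : ℕ) (Y : Finset (gridPt d n)) : Finset (Cell (Fin d) K) :=
  {Q | ∃ y ∈ Y, cellWeight y Q ≠ 0}

lemma mem_touchedCells {Y : Finset (gridPt d n)} {Q : Cell (Fin d) K} :
    Q ∈ touchedCells K Y ↔ ∃ y ∈ Y, cellWeight y Q ≠ 0 := by
  simp [touchedCells]

lemma card_le_card_touchedCells_mul (K : ℕ) (Y : Finset (gridPt d n)) :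
    (#Y : ℝ) ≤ #(touchedCells K Y) * ((n : ℝ) / 2 ^ K) ^ d :=
  calc (#Y : ℝ) = ∑ y ∈ Y, ∑ Q : Cell (Fin d) K, cellWeight y Q := by simp [sum_cellWeight_right]
    _ = ∑ y ∈ Y, ∑ Q ∈ touchedCells K Y, cellWeight y Q :=
        sum_congr rfl fun y hy => (sum_subset (subset_univ _) fun Q _ hQ => by
          by_contra hne
          exact hQ (mem_touchedCells.2 ⟨y, hy, hne⟩)).symm
    _ = ∑ Q ∈ touchedCells K Y, ∑ y ∈ Y, cellWeight y Q := sum_comm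
    _ ≤ ∑ Q ∈ touchedCells K Y, ∑ y, cellWeight y Q := sum_le_sum fun Q _ =>
        sum_le_sum_of_subset_of_nonneg (subset_univ _) fun y _ _ => cellWeight_nonneg y Q
    _ = _ := by simp [sum_cellWeight_left]

lemma abs_scaled_coord_sub_le (hnm : n ≤ m) (hside : 1 ≤ (n : ℝ) / 2 ^ K) {p : gridPt d m}
    {y : gridPt d n} {Q Q' : Cell (Fin d) K} (hp : cellWeight p Q ≠ 0) (hy : cellWeight y Q' ≠ 0)
    (hadj : KingAdj Q Q') (i : Fin d) :
    |(n : ℝ) / m * (p i : ℤ) - (y i : ℤ)| ≤ 3 * (n / 2 ^ K) := by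
  have hn : (n : ℝ) ≠ 0 := by
    intro hzero
    simp only [hzero, zero_div] at hside
    linarith
  obtain ⟨hp_lower, hp_upper⟩ := scaled_coord_mem_of_cellWeight_ne_zero hnm hp i
  obtain ⟨hy_lower, hy_upper⟩ := scaled_coord_mem_of_cellWeight_ne_zero le_rfl hy i
  rw [div_self hn, one_mul] at hy_lower hy_upper
  have hQ : ((Q i : ℕ) : ℝ) ≤ (Q' i : ℕ) + 1 := mod_cast (hadj i).1
  have hQ' : ((Q' i : ℕ) : ℝ) ≤ (Q i : ℕ) + 1 := mod_cast (hadj i).2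
  rw [abs_le]
  constructor <;> nlinarith

open Classical in
/-- The points of `S` that come within `3 * (n / 2 ^ K)` of `y` in every coordinate once the grid of
side `m` is shrunk to side `n`; the matching of the grid of side `n` with `S` only uses these. -/
noncomputable def nearbyPoints (K : ℕ) (S : Finset (gridPt d m)) (y : gridPt d n) :
    Finset (gridPt d m) :=
  {p ∈ S | ∀ i, |(n : ℝ) / m * (p i : ℤ) - (y i : ℤ)| ≤ 3 * (n / 2 ^ K)}

lemma mem_nearbyPoints {S : Finset (gridPt d m)} {y : gridPt d n} {p : gridPt d m} :
    p ∈ nearbyPoints K S y ↔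
      p ∈ S ∧ ∀ i, |(n : ℝ) / m * (p i : ℤ) - (y i : ℤ)| ≤ 3 * (n / 2 ^ K) := by
  simp [nearbyPoints]

lemma sum_cellMass_le_card_biUnion_nearbyPoints [DecidableEq (gridPt d m)] (hnm : n ≤ m)
    (hside : 1 ≤ (n : ℝ) / 2 ^ K) (S : Finset (gridPt d m)) (Y : Finset (gridPt d n))
    {A : Finset (Cell (Fin d) K)} (hA : ∀ Q ∈ A, ∃ Q' ∈ touchedCells K Y, KingAdj Q Q') :
    ∑ Q ∈ A, cellMass S Q ≤ #(Y.biUnion (nearbyPoints K S)) := by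
  have hsub : Y.biUnion (nearbyPoints K S) ⊆ S :=
    biUnion_subset.2 fun y _ p hp => (mem_nearbyPoints.1 hp).1
  have hfar : ∀ p ∈ S, p ∉ Y.biUnion (nearbyPoints K S) → ∑ Q ∈ A, cellWeight p Q = 0 := by
    intro p hp hfar
    refine sum_eq_zero fun Q hQ => ?_
    by_contra hne
    obtain ⟨Q', hQ', hadj⟩ := hA Q hQ
    obtain ⟨y, hy, hyQ'⟩ := mem_touchedCells.1 hQ'
    exact hfar (mem_biUnion.2 ⟨y, hy, mem_nearbyPoints.2
      ⟨hp, abs_scaled_coord_sub_le hnm hside hne hyQ' hadj⟩⟩)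
  simp only [cellMass]
  rw [sum_comm, ← sum_subset hsub hfar, card_eq_sum_ones, Nat.cast_sum, Nat.cast_one]
  exact sum_le_sum fun p _ => sum_cellWeight_le_one p A

-- Hall's condition: `Y` has at most the volume of the cells it touches, and the discrepancy bound
-- finds that much mass of `S` in those cells and their neighbours.
theorem exists_injective_of_discrepancyLE (hd : 2 ≤ d) (hnm : n ≤ m)
    (hside : 1 ≤ (n : ℝ) / 2 ^ K) {S : Finset (gridPt d m)} (hS : #S = n ^ d)
    (hdisc : DiscrepancyLE (cellMass (K := K) S) (((n : ℝ) / 2 ^ K) ^ d) B)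
    (hlevels : 4 * B * (d * K) ≤ ((n : ℝ) / 2 ^ K) ^ d / 2)
    (hB : B ≤ ((n : ℝ) / 2 ^ K) ^ d / 2) :
    ∃ g : gridPt d n → gridPt d m, Function.Injective g ∧ ∀ y, g y ∈ S ∧
      ∀ i, |(n : ℝ) / m * (g y i : ℤ) - (y i : ℤ)| ≤ 3 * (n / 2 ^ K) := by
  classical
  suffices hHall : ∀ Y : Finset (gridPt d n), #Y ≤ #(Y.biUnion (nearbyPoints K S)) by
    obtain ⟨g, hg, hmem⟩ := (all_card_le_biUnion_card_iff_exists_injective _).1 hHall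
    exact ⟨g, hg, fun y => mem_nearbyPoints.1 (hmem y)⟩
  intro Y
  set A := touchedCells K Y
  have htotal : ∑ Q : Cell (Fin d) K, cellMass S Q = ((n : ℝ) / 2 ^ K) ^ d * 2 ^ (d * K) := by
    rw [sum_cellMass, hS, div_pow, ← pow_mul, mul_comm K d, div_mul_cancel₀ _ (by positivity),
      Nat.cast_pow]
  have hdisj : Disjoint A (outerBoundary A) :=
    disjoint_right.2 fun _ hQ => (mem_outerBoundary.1 hQ).1
  have hnear : ∀ Q ∈ A ∪ outerBoundary A, ∃ Q' ∈ A, KingAdj Q Q' := fun Q hQ =>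
    (mem_union.1 hQ).elim (fun h => ⟨Q, h, KingAdj.refl Q⟩) fun h => (mem_outerBoundary.1 h).2
  have hcard : (#Y : ℝ) ≤ #(Y.biUnion (nearbyPoints K S)) :=
    calc (#Y : ℝ) ≤ #A * ((n : ℝ) / 2 ^ K) ^ d := card_le_card_touchedCells_mul K Y
      _ ≤ ∑ Q ∈ A, cellMass S Q + ∑ Q ∈ outerBoundary A, cellMass S Q :=
          hdisc.card_mul_le hd htotal hlevels hB A
      _ = ∑ Q ∈ A ∪ outerBoundary A, cellMass S Q := (sum_union hdisj).symm
      _ ≤ _ := sum_cellMass_le_card_biUnion_nearbyPoints hnm hside S Y hnear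
  exact_mod_cast hcard

end Matching

section LipschitzConstant

variable {d : ℕ} {x y : Fin d → ℤ}

lemma zdist_nonneg (x y : Fin d → ℤ) : 0 ≤ zdist x y := Real.sqrt_nonneg _

lemma abs_coord_sub_le_zdist (x y : Fin d → ℤ) (i : Fin d) :
    |(x i : ℝ) - y i| ≤ zdist x y :=
  Real.abs_le_sqrt (single_le_sum (f := fun i => ((x i : ℝ) - y i) ^ 2)
    (fun _ _ => sq_nonneg _) (mem_univ i))

lemma one_le_zdist (h : x ≠ y) : 1 ≤ zdist x y := by
  obtain ⟨i, hi⟩ := Function.ne_iff.1 h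
  have hone : 1 ≤ |x i - y i| := Int.one_le_abs (sub_ne_zero.2 hi)
  exact le_trans (mod_cast hone) (abs_coord_sub_le_zdist x y i)

lemma zdist_le_sqrt_mul {R : ℝ} (hR : 0 ≤ R) (h : ∀ i, |(x i : ℝ) - y i| ≤ R) :
    zdist x y ≤ √d * R := by
  refine Real.sqrt_le_iff.2 ⟨by positivity, ?_⟩
  calc ∑ i, ((x i : ℝ) - y i) ^ 2 ≤ ∑ _i : Fin d, R ^ 2 :=
        sum_le_sum fun i _ => sq_le_sq.2 ((h i).trans (le_abs_self R))
    _ = (√d * R) ^ 2 := by simp [mul_pow, Real.sq_sqrt]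

lemma zdist_le_of_abs_mul_sub_le {x' y' : Fin d → ℤ} {r R : ℝ} (hr : 0 ≤ r) (hr1 : r ≤ 1)
    (hne : x ≠ y) (hx : ∀ i, |r * x i - x' i| ≤ R) (hy : ∀ i, |r * y i - y' i| ≤ R)
    (hR : 0 ≤ R) : zdist x' y' ≤ √d * (1 + 2 * R) * zdist x y := by
  have hdist := one_le_zdist hne
  rw [mul_assoc]
  refine zdist_le_sqrt_mul (by positivity) fun i => ?_
  calc |(x' i : ℝ) - y' i| = |r * (x i - y i) - (r * x i - x' i) + (r * y i - y' i)| := by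
        congr 1
        ring
    _ ≤ |r * ((x i : ℝ) - y i)| + |r * x i - x' i| + |r * y i - y' i| :=
        (abs_add_le _ _).trans (by gcongr; exact abs_sub _ _)
    _ ≤ zdist x y + R + R := by
        gcongr
        · rw [abs_mul, abs_of_nonneg hr]
          exact (mul_le_of_le_one_left (abs_nonneg _) hr1).trans (abs_coord_sub_le_zdist x y i)
        · exact hx i
        · exact hy i
    _ ≤ (1 + 2 * R) * zdist x y := by nlinarith

lemma mem_grid_iff_exists_gridPt {n : ℕ} {z : Fin d → ℤ} :
    z ∈ grid d n ↔ ∃ y : gridPt d n, (fun i => (y i : ℤ)) = z := by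
  rw [grid, Fintype.mem_piFinset]
  exact ⟨fun h => ⟨fun i => ⟨z i, h i⟩, rfl⟩, by rintro ⟨y, rfl⟩ i; exact (y i).2⟩

lemma nonneg_of_lipschitz_onto_grid [NeZero d] {n : ℕ} (hn : 2 ≤ n) {S : Finset (Fin d → ℤ)}
    {L : ℝ} {f : (Fin d → ℤ) → Fin d → ℤ} (honto : ∀ y ∈ grid d n, ∃ x ∈ S, f x = y)
    (hlip : ∀ x ∈ S, ∀ y ∈ S, zdist (f x) (f y) ≤ L * zdist x y) : 0 ≤ L := by
  obtain ⟨x, hx, hfx⟩ := honto (fun _ => 1) (by simp [grid]; lia)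
  obtain ⟨y, hy, hfy⟩ := honto (fun _ => 2) (by simp [grid]; lia)
  have hne : x ≠ y := by
    rintro rfl
    simpa using congrFun (hfx.symm.trans hfy) 0
  exact nonneg_of_mul_nonneg_left ((zdist_nonneg _ _).trans (hlip x hx y hy))
    (one_pos.trans_le (one_le_zdist hne))

lemma Fleast_le [NeZero d] {n : ℕ} (hn : 2 ≤ n) {S : Finset (Fin d → ℤ)} {L : ℝ}
    {f : (Fin d → ℤ) → Fin d → ℤ} (hmaps : ∀ x ∈ S, f x ∈ grid d n)
    (honto : ∀ y ∈ grid d n, ∃ x ∈ S, f x = y)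
    (hlip : ∀ x ∈ S, ∀ y ∈ S, zdist (f x) (f y) ≤ L * zdist x y) : Fleast d n S ≤ L :=
  csInf_le ⟨0, by rintro L' ⟨f', -, h, h'⟩; exact nonneg_of_lipschitz_onto_grid hn h h'⟩
    ⟨f, hmaps, honto, hlip⟩

theorem Fleast_le_of_injective [NeZero d] {n : ℕ} (hn : 2 ≤ n) {m : ℤ} {S : Finset (gridPt d m)}
    (hS : #S = n ^ d) {g : gridPt d n → gridPt d m} (hg : Function.Injective g)
    (hgS : ∀ y, g y ∈ S) {r R : ℝ} (hr : 0 ≤ r) (hr1 : r ≤ 1) (hR : 0 ≤ R)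
    (hnear : ∀ y i, |r * (g y i : ℤ) - (y i : ℤ)| ≤ R) :
    Fleast d n (toLattice S) ≤ √d * (1 + 2 * R) := by
  classical
  have hcoe {k : ℤ} : Function.Injective fun (y : gridPt d k) i => (y i : ℤ) :=
    fun y y' h => funext fun i => Subtype.ext (congrFun h i)
  have himage : univ.image g = S := eq_of_subset_of_card_le (by simpa [subset_iff] using hgS)
    (by simp [card_image_of_injective _ hg, hS])
  let f : (Fin d → ℤ) → Fin d → ℤ :=
    Function.extend (fun (y : gridPt d n) i => (g y i : ℤ)) (fun y i => (y i : ℤ)) 0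
  have hf (y : gridPt d n) : f (fun i => (g y i : ℤ)) = fun i => (y i : ℤ) :=
    (hcoe.comp hg).extend_apply _ _ y
  have hmem {z : Fin d → ℤ} : z ∈ toLattice S ↔ ∃ y, (fun i => (g y i : ℤ)) = z := by
    simp [toLattice, ← himage]
  refine Fleast_le (f := f) hn ?_ ?_ ?_
  · intro z hz
    obtain ⟨y, rfl⟩ := hmem.1 hz
    exact mem_grid_iff_exists_gridPt.2 ⟨y, (hf y).symm⟩
  · intro z hz
    obtain ⟨y, rfl⟩ := mem_grid_iff_exists_gridPt.1 hz
    exact ⟨_, hmem.2 ⟨y, rfl⟩, hf y⟩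
  · intro z hz z' hz'
    obtain ⟨y, rfl⟩ := hmem.1 hz
    obtain ⟨y', rfl⟩ := hmem.1 hz'
    rw [hf, hf]
    rcases eq_or_ne y y' with rfl | hne
    · simp [zdist]
    · exact zdist_le_of_abs_mul_sub_le hr hr1 ((hcoe.comp hg).ne hne) (hnear y) (hnear y') hR

theorem Fleast_le_of_discrepancyLE {K n m : ℕ} {B : ℝ} (hd : 2 ≤ d) (hn : 2 ≤ n) (hnm : n ≤ m)
    (hside : 1 ≤ (n : ℝ) / 2 ^ K) {S : Finset (gridPt d m)} (hS : #S = n ^ d)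
    (hdisc : DiscrepancyLE (cellMass (K := K) S) (((n : ℝ) / 2 ^ K) ^ d) B)
    (hlevels : 4 * B * (d * K) ≤ ((n : ℝ) / 2 ^ K) ^ d / 2)
    (hB : B ≤ ((n : ℝ) / 2 ^ K) ^ d / 2) :
    Fleast d n (toLattice S) ≤ 7 * √d * (n / 2 ^ K) := by
  have : NeZero d := ⟨by lia⟩
  obtain ⟨g, hg, hgS⟩ := exists_injective_of_discrepancyLE hd hnm hside hS hdisc hlevels hB
  have hratio : (n : ℝ) / m ≤ 1 := div_le_one_of_le₀ (mod_cast hnm) (Nat.cast_nonneg m)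
  calc Fleast d n (toLattice S) ≤ √d * (1 + 2 * (3 * (n / 2 ^ K))) :=
        Fleast_le_of_injective hn hS hg (fun y => (hgS y).1) (by positivity) hratio (by positivity)
          fun y => (hgS y).2
    _ ≤ √d * (7 * (n / 2 ^ K)) := by
        gcongr
        linarith
    _ = _ := by ring

end LipschitzConstant

section Parameters

variable {d K : ℕ} {q : ℝ}

/-- The constant for which cells of side `scaleConst d * (log₂ n) ^ q` have so much volume that the
deviations `deviationBound` allowed to `d * log₂ n` box means add up to at most half of it. -/
noncomputable def scaleConst (d : ℕ) : ℝ := 256 * (d : ℝ) ^ 2 * (d + 3)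

/-- The deviation from the mean `v` at which the Chernoff bound becomes `x ^ -(d + 3)`. -/
noncomputable def deviationBound (d : ℕ) (x v : ℝ) : ℝ := √(4 * (d + 3) * Real.log x * v)

lemma one_le_scaleConst [NeZero d] : 1 ≤ scaleConst d := by
  have hd : (1 : ℝ) ≤ d := mod_cast NeZero.one_le
  unfold scaleConst
  nlinarith [sq_nonneg (d : ℝ)]

lemma exists_div_two_pow_mem_Icc {x D : ℝ} (hD : 0 < D) (hDx : D ≤ x) :
    ∃ K : ℕ, x / 2 ^ K ∈ Set.Icc D (2 * D) := by
  obtain ⟨K, hlower, hupper⟩ := exists_nat_pow_near ((one_le_div hD).2 hDx) one_lt_two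
  refine ⟨K, (le_div_comm₀ (by positivity) hD).1 hlower, ?_⟩
  rw [div_lt_iff₀ hD, pow_succ] at hupper
  rw [div_le_iff₀ (by positivity)]
  linarith

lemma natCast_le_logb_two_of_one_le_div {x : ℝ} (h : 1 ≤ x / 2 ^ K) : (K : ℝ) ≤ Real.logb 2 x := by
  have hpow : (2 : ℝ) ^ K ≤ x := (one_le_div (by positivity)).1 h
  rwa [Real.le_logb_iff_rpow_le one_lt_two (hpow.trans_lt' (by positivity)), Real.rpow_natCast]

lemma one_le_one_add_div_logb_rpow {a b : ℝ} (ha : 0 ≤ a) (hb : 0 ≤ b) {x : ℝ} (hx : 1 ≤ x) :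
    1 ≤ (1 + a / Real.logb 2 x) ^ b :=
  Real.one_le_rpow (le_add_of_nonneg_right (div_nonneg ha (Real.logb_nonneg one_lt_two hx))) hb

lemma log_le_logb_two {x : ℝ} (hx : 1 ≤ x) : Real.log x ≤ Real.logb 2 x :=
  le_div_self (Real.log_nonneg hx) (Real.log_pos one_lt_two) (by linarith [Real.log_two_lt_d9])

lemma mul_cube_le_mul_rpow_pow [NeZero d] {C L : ℝ} (hC : 1 ≤ C) (hL : 1 ≤ L)
    (hq : 3 / (d : ℝ) ≤ q) : C * L ^ 3 ≤ (C * L ^ q) ^ d := by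
  have hd : (0 : ℝ) < d := mod_cast NeZero.pos d
  have hpow : L ^ 3 ≤ (L ^ q) ^ d := by
    rw [← Real.rpow_natCast, ← Real.rpow_mul_natCast (by linarith)]
    exact Real.rpow_le_rpow_of_exponent_le hL (mod_cast (div_le_iff₀ hd).1 hq)
  rw [mul_pow]
  exact mul_le_mul (le_self_pow₀ hC (NeZero.ne d)) hpow (by positivity) (by positivity)

lemma deviationBound_sq {x v : ℝ} (hx : 1 ≤ x) (hv : 0 ≤ v) :
    deviationBound d x v ^ 2 = 4 * (d + 3) * Real.log x * v := by
  have hlog := Real.log_nonneg hx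
  exact Real.sq_sqrt (by positivity)

lemma exp_neg_deviationBound_sq {x v : ℝ} (hx : 1 ≤ x) (hv : 0 < v) :
    Real.exp (-(deviationBound d x v ^ 2 / (4 * v))) = (x ^ (d + 3))⁻¹ := by
  have hexponent : 4 * (d + 3) * Real.log x * v / (4 * v) = (d + 3 : ℕ) * Real.log x := by
    push_cast
    field_simp
  rw [deviationBound_sq hx hv.le, hexponent, Real.exp_neg, Real.exp_nat_mul,
    Real.exp_log (by linarith)]

lemma mul_deviationBound_le {x v : ℝ} (hx : 1 ≤ x) (hv : 0 ≤ v)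
    (hvolume : scaleConst d * Real.logb 2 x ^ 3 ≤ v) :
    8 * d * Real.logb 2 x * deviationBound d x v ≤ v := by
  refine le_of_sq_le_sq ?_ hv
  calc (8 * d * Real.logb 2 x * deviationBound d x v) ^ 2
      = scaleConst d * (Real.logb 2 x ^ 2 * Real.log x) * v := by
        rw [mul_pow, deviationBound_sq hx hv, scaleConst]
        ring
    _ ≤ scaleConst d * (Real.logb 2 x ^ 2 * Real.logb 2 x) * v := by
        unfold scaleConst
        gcongr
        exact log_le_logb_two hx
    _ = scaleConst d * Real.logb 2 x ^ 3 * v := by ring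
    _ ≤ v ^ 2 := by
        rw [sq]
        gcongr

lemma deviationBound_mul_levels_le {x v : ℝ} (hside : 1 ≤ x / 2 ^ K) (hx : 1 ≤ x) (hv : 0 ≤ v)
    (hvolume : scaleConst d * Real.logb 2 x ^ 3 ≤ v) :
    4 * deviationBound d x v * (d * K) ≤ v / 2 := by
  have hB : 0 ≤ deviationBound d x v := Real.sqrt_nonneg _
  have hK : deviationBound d x v * (d * K) ≤ deviationBound d x v * (d * Real.logb 2 x) := by
    gcongr
    exact natCast_le_logb_two_of_one_le_div hside
  linarith [mul_deviationBound_le hx hv hvolume]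

lemma deviationBound_le_half [NeZero d] {x v : ℝ} (hx : 2 ≤ x) (hv : 0 ≤ v)
    (hvolume : scaleConst d * Real.logb 2 x ^ 3 ≤ v) : deviationBound d x v ≤ v / 2 := by
  have hB : 0 ≤ deviationBound d x v := Real.sqrt_nonneg _
  have hd : (1 : ℝ) ≤ d := mod_cast NeZero.one_le
  have hlog : 1 ≤ Real.logb 2 x := by
    rwa [Real.le_logb_iff_rpow_le one_lt_two (by linarith), Real.rpow_one]
  have hdlog : 1 ≤ d * Real.logb 2 x := one_le_mul_of_one_le_of_one_le hd hlog
  nlinarith [mul_deviationBound_le (by linarith) hv hvolume]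

lemma eventually_mul_logb_rpow_le (C q : ℝ) :
    ∀ᶠ n : ℕ in Filter.atTop, C * Real.logb 2 n ^ q ≤ n := by
  have hlittleO := ((isLittleO_log_rpow_rpow_atTop q one_pos).const_mul_left
    (C / Real.log 2 ^ q)).comp_tendsto (tendsto_natCast_atTop_atTop (R := ℝ))
  filter_upwards [hlittleO.def one_pos, Filter.eventually_ge_atTop 1] with n hn hn1
  have hlog : 0 ≤ Real.log n := Real.log_nonneg (mod_cast hn1)
  simp only [Function.comp_apply, Real.rpow_one, one_mul, Real.norm_natCast] at hn
  rw [Real.logb, Real.div_rpow hlog (Real.log_nonneg one_le_two), mul_div_assoc',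
    ← div_mul_eq_mul_div]
  exact (le_abs_self _).trans hn

end Parameters

section RandomConfiguration

variable {d n m K : ℕ} {q : ℝ}

lemma card_config (d m N : ℕ) : Fintype.card (Config d m N) = (m ^ d).choose N := by
  rw [show Fintype.card (Config d m N) = _ from Fintype.card_finset_len (α := gridPt d m) N]
  simp

lemma ncard_setOf_config {N : ℕ} (P : Finset (gridPt d m) → Prop) [DecidablePred P] :
    {w : Config d m N | P w.1}.ncard = #{S ∈ univ.powersetCard N | P S} := by
  rw [← Set.ncard_coe_finset, ← Set.ncard_image_of_injective _ Subtype.val_injective]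
  congr 1
  ext S
  simp [and_comm]

lemma ncard_config_not_discrepancyLE_le [NeZero d] (hn : 2 ≤ n) (hnm : n ≤ m)
    (hside : 1 ≤ (n : ℝ) / 2 ^ K)
    (hB : deviationBound d n (((n : ℝ) / 2 ^ K) ^ d) ≤ ((n : ℝ) / 2 ^ K) ^ d) :
    ({w : Config d m (n ^ d) | ¬ DiscrepancyLE (cellMass (K := K) w.1) (((n : ℝ) / 2 ^ K) ^ d)
        (deviationBound d n (((n : ℝ) / 2 ^ K) ^ d))}.ncard : ℝ) ≤
      2 * (d + 1) / n ^ 2 * Fintype.card (Config d m (n ^ d)) := by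
  classical
  have hn1 : (1 : ℝ) ≤ n := mod_cast one_le_two.trans hn
  have hpow : (2 : ℝ) ^ K ≤ n := (one_le_div (by positivity)).1 hside
  have hK : (K : ℝ) ≤ n := le_trans (mod_cast K.lt_two_pow_self.le) hpow
  rw [card_config, ncard_setOf_config fun S => ¬ DiscrepancyLE (cellMass (K := K) S)
    (((n : ℝ) / 2 ^ K) ^ d) (deviationBound d n (((n : ℝ) / 2 ^ K) ^ d))]
  have hcount := card_not_discrepancyLE_cellMass_le (K := K) (by lia) hnm
    (B := deviationBound d n _) (Real.sqrt_nonneg _) hB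
  rw [exp_neg_deviationBound_sq hn1 (by positivity)] at hcount
  calc _ ≤ _ := hcount
    _ ≤ ((d * n + n) * (n : ℝ) ^ d) *
          (2 * ((n : ℝ) ^ (d + 3))⁻¹ * (m ^ d).choose (n ^ d)) := by gcongr
    _ = _ := by
        field_simp
        ring

theorem ncard_config_lt_Fleast_le (hd : 2 ≤ d) (hq : 3 / (d : ℝ) ≤ q) (hn : 2 ≤ n)
    (hlarge : scaleConst d * Real.logb 2 n ^ q ≤ n) {m : ℤ} (hm : n ≤ m) :
    ({w : Config d m (n ^ d) | 14 * √d * scaleConst d * Real.logb 2 n ^ q <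
        Fleast d n (toLattice w.1)}.ncard : ℝ) ≤
      2 * (d + 1) / n ^ 2 * Fintype.card (Config d m (n ^ d)) := by
  have : NeZero d := ⟨by lia⟩
  lift m to ℕ using by lia
  have hn2 : (2 : ℝ) ≤ n := mod_cast hn
  have hlog : 1 ≤ Real.logb 2 n := by
    rwa [Real.le_logb_iff_rpow_le one_lt_two (by linarith), Real.rpow_one]
  have hD : 1 ≤ scaleConst d * Real.logb 2 n ^ q := one_le_mul_of_one_le_of_one_le
    one_le_scaleConst (Real.one_le_rpow hlog ((by positivity : 0 ≤ 3 / (d : ℝ)).trans hq))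
  obtain ⟨K, hDside, hsideD⟩ := exists_div_two_pow_mem_Icc (by linarith) hlarge
  have hside : 1 ≤ (n : ℝ) / 2 ^ K := hD.trans hDside
  have hv : 0 ≤ ((n : ℝ) / 2 ^ K) ^ d := by positivity
  have hvolume : scaleConst d * Real.logb 2 n ^ 3 ≤ ((n : ℝ) / 2 ^ K) ^ d :=
    (mul_cube_le_mul_rpow_pow one_le_scaleConst hlog hq).trans (by gcongr)
  have hB := deviationBound_le_half hn2 hv hvolume
  have hsubset : {w : Config d m (n ^ d) | 14 * √d * scaleConst d * Real.logb 2 n ^ q <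
      Fleast d n (toLattice w.1)} ⊆ {w | ¬ DiscrepancyLE (cellMass (K := K) w.1)
        (((n : ℝ) / 2 ^ K) ^ d) (deviationBound d n (((n : ℝ) / 2 ^ K) ^ d))} := by
    intro w hw hdisc
    refine (Set.mem_ofPred.1 hw).not_ge ?_
    calc Fleast d n (toLattice w.1) ≤ 7 * √d * (n / 2 ^ K) :=
          Fleast_le_of_discrepancyLE hd hn (mod_cast hm) hside w.2 hdisc
            (deviationBound_mul_levels_le hside (by linarith) hv hvolume) hB
      _ ≤ 7 * √d * (2 * (scaleConst d * Real.logb 2 n ^ q)) := by gcongr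
      _ = _ := by ring
  exact (Nat.cast_le.2 (Set.ncard_le_ncard hsubset)).trans
    (ncard_config_not_discrepancyLE_le hn (mod_cast hm) hside (by linarith))

end RandomConfiguration

section AlmostSure

variable {Ω : Type*} [MeasurableSpace Ω] {μ : Measure Ω}

lemma ae_eventually_notMem_of_eventually_le {s : ℕ → Set Ω} {f : ℕ → ℝ} (hf : Summable f)
    (hle : ∀ᶠ n in Filter.atTop, μ (s n) ≤ ENNReal.ofReal (f n)) :
    ∀ᵐ ω ∂μ, ∀ᶠ n in Filter.atTop, ω ∉ s n := by
  obtain ⟨N, hN⟩ := Filter.eventually_atTop.1 hle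
  have htail : ∑' n, μ (s (n + N)) ≠ ⊤ :=
    ne_top_of_le_ne_top ((summable_nat_add_iff N).2 hf).tsum_ofReal_ne_top
      (ENNReal.tsum_le_tsum fun n => hN _ (Nat.le_add_left N n))
  filter_upwards [ae_eventually_notMem htail] with ω hω
  rwa [← Filter.map_add_atTop_eq_nat N, Filter.eventually_map]

theorem stmt_2_general {d : ℕ} (hd : 2 ≤ d) {c : ℕ → ℝ} (hc : ∀ᶠ n in Filter.atTop, 1 ≤ c n)
    {q : ℝ} (hq : 3 / (d : ℝ) ≤ q) (S : ∀ n : ℕ, Ω → Config d ⌊c n * n⌋ (n ^ d))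
    (hS : ∀ (n : ℕ) (A : Set (Config d ⌊c n * n⌋ (n ^ d))), μ {ω | S n ω ∈ A} =
      (A.ncard : ENNReal) / (Fintype.card (Config d ⌊c n * n⌋ (n ^ d)) : ENNReal)) :
    ∀ᵐ ω ∂μ, Filter.limsup
        (fun n : ℕ => ((Fleast d n (toLattice (S n ω).1) / Real.logb 2 n ^ q : ℝ) : EReal))
        Filter.atTop ≤ ((14 * √d * scaleConst d : ℝ) : EReal) := by
  let large (n : ℕ) : Set (Config d ⌊c n * n⌋ (n ^ d)) :=
    {w | 14 * √d * scaleConst d * Real.logb 2 n ^ q < Fleast d n (toLattice w.1)}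
  have hsummable : Summable fun n : ℕ => 2 * ((d : ℝ) + 1) / n ^ 2 := by
    simpa only [mul_one_div] using
      (Real.summable_one_div_nat_pow.2 one_lt_two).mul_left (2 * ((d : ℝ) + 1))
  have hprob : ∀ᶠ n in Filter.atTop,
      μ {ω | S n ω ∈ large n} ≤ ENNReal.ofReal (2 * (d + 1) / n ^ 2) := by
    filter_upwards [hc, Filter.eventually_ge_atTop 2,
      eventually_mul_logb_rpow_le (scaleConst d) q] with n hcn hn hlarge
    have hm : (n : ℤ) ≤ ⌊c n * n⌋ :=
      Int.le_floor.2 (by simpa using le_mul_of_one_le_left n.cast_nonneg hcn)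
    rw [hS]
    refine ENNReal.div_le_of_le_mul ?_
    rw [← ENNReal.ofReal_natCast, ← ENNReal.ofReal_natCast, ← ENNReal.ofReal_mul (by positivity)]
    exact ENNReal.ofReal_le_ofReal (ncard_config_lt_Fleast_le hd hq hn hlarge hm)
  filter_upwards [ae_eventually_notMem_of_eventually_le hsummable hprob] with ω hω
  refine Filter.limsup_le_of_le (by isBoundedDefault) ?_
  filter_upwards [hω, Filter.eventually_ge_atTop 2] with n hsmall hn
  have hlog : 0 < Real.logb 2 n := Real.logb_pos one_lt_two (mod_cast hn)
  rw [EReal.coe_le_coe_iff, div_le_iff₀ (by positivity)]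
  exact not_lt.1 hsmall

end AlmostSure

/-- (The uniform product measure on the sequence space `𝒢_{(c_n)}` is characterised by
its values on cylinders, as in the hypothesis `hμ`.)
For `d ≥ 2`, `c_n ≥ (1 + 2^(d+7)/log₂ n)^(1/d)` (n ≥ 2) and `q ≥ 1` with `q > 3/d`,
a random sequence `(S_n)` in `𝒢_{(c_n)}` almost surely satisfies
`limsup_n F_n(S_n)·(log₂ n)^(−q) < ∞`. -/
theorem stmt_2 (d : ℕ) (hd : 2 ≤ d) (c : ℕ → ℝ) (hc1 : 1 ≤ c 1)
    (hc : ∀ n : ℕ, 2 ≤ n →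
      ((1 : ℝ) + 2 ^ (d + 7) / Real.logb 2 n) ^ ((d : ℝ)⁻¹) ≤ c n)
    (q : ℝ) (hq1 : 1 ≤ q) (hq2 : 3 / (d : ℝ) < q)
    (μ : Measure (∀ n : ℕ, Config d ⌊c n * n⌋ (n ^ d)))
    (hμ : ∀ (J : Finset ℕ) (A : ∀ n : ℕ, Set (Config d ⌊c n * n⌋ (n ^ d))),
      μ {ω | ∀ n ∈ J, ω n ∈ A n} =
        ∏ n ∈ J, (Set.ncard (A n) : ENNReal) /
          (Fintype.card (Config d ⌊c n * n⌋ (n ^ d)) : ENNReal)) :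
    μ {ω | Filter.limsup
        (fun n : ℕ =>
          ((Fleast d n (toLattice (ω n).1) / Real.logb 2 n ^ q : ℝ) : EReal))
        Filter.atTop < (⊤ : EReal)} = 1 := by
  have hc_ge_one : ∀ᶠ n in Filter.atTop, 1 ≤ c n := (Filter.eventually_ge_atTop 2).mono fun n hn =>
    (one_le_one_add_div_logb_rpow (by positivity) (by positivity)
      (mod_cast one_le_two.trans hn)).trans (hc n hn)
  have : IsProbabilityMeasure μ := ⟨by simpa using hμ ∅ fun _ => ∅⟩
  have hbound := stmt_2_general (μ := μ) hd hc_ge_one hq2.le (fun n ω => ω n) fun n A => by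
    simpa using hμ {n} (Function.update (fun _ => ∅) n A)
  have hfinite := hbound.mono fun ω hω => hω.trans_lt (EReal.coe_lt_top _)
  exact (measure_congr (ae_eq_univ.2 hfinite)).trans measure_univ
end

section
/- Fix d ∈ ℕ, d ≥ 1, and θ ∈ (0,1). There exists a constant Δ = Δ(d,θ) > 0 with the following property. Let l ∈ ℕ and let ρ : [0,1]^d → (0,∞) be a function such that ρ is constant on each cube T ∈ 𝒯_{2^l}, ∫_{[0,1]^d} ρ dℒ = 1, and θ ≤ min ρ ≤ max ρ ≤ 1/θ. Then there exists a Lipschitz mapping f : [0,1]^d → ℝ^d such that f_♯(ρ·ℒ) = ℒ|_{[0,1]^d} (the pushforward of the measure with density ρ equals Lebesgue measure restricted to [0,1]^d) and Lip(f) ≤ (1 + Δ·(max ρ − min ρ))^l. -/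
open MeasureTheory

/-- Euclidean distance on `ℝ^d` (realised as `Fin d → ℝ`). -/
noncomputable def eudist {d : ℕ} (x y : Fin d → ℝ) : ℝ :=
  Real.sqrt (∑ i, (x i - y i) ^ 2)

/-- The unit cube `[0,1]^d`. -/
def unitCube (d : ℕ) : Set (Fin d → ℝ) := {x | ∀ i, 0 ≤ x i ∧ x i ≤ 1}

/-- The half-open dyadic cube of the partition `𝒯_k` indexed by `p`. -/
def dyadicCube {d : ℕ} (k : ℕ) (p : Fin d → Fin k) : Set (Fin d → ℝ) :=
  {x | ∀ i, ((p i : ℕ) : ℝ) / k < x i ∧ x i ≤ (((p i : ℕ) : ℝ) + 1) / k}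

/-!
The dyadic grid is coarsened one bisection at a time, always merging in a direction of finest
resolution, and the density on each new box is replaced by its average over the two halves. Such a
box has aspect ratio at most two, and an affine chart turns it into the unit ball of the sup norm
carrying, up to a constant, the density `1 + a * sgn (x i)` with `|a|` at most a multiple of
`max ρ - min ρ`.

This jump is transported to a constant in two moves. Sliding along the `i`-th axis leaves the
density `1 + a * kernel t y`, where `t` is the height along that axis and `y` the normalized volume
separating the point from the boundary of its slice. Since `kernel` is the derivative of `drift` in
`t` and of `flux` in `y`, both compactly supported and Lipschitz, stretching each slice radially
then makes the density constant, and both moves fix the boundary of the box and differ from the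
identity by a map with Lipschitz constant `O(|a|)`. The maps of the individual boxes therefore glue
to a map of the cube of the same kind, and composing the `d * l` bisections gives the Lipschitz
constant `(1 + C * (max ρ - min ρ)) ^ (d * l)`.
-/

namespace RiviereYe

section NearId

variable {E : Type*} [SeminormedAddCommGroup E] {L L₁ L₂ : ℝ} {f g : E → E}

/-- `f` is an `L`-Lipschitz perturbation of the identity. The constant is a real number because it
will be a multiple of the oscillation of a density. -/
def IsNearId (L : ℝ) (f : E → E) : Prop :=
  ∀ x y, ‖(f x - x) - (f y - y)‖ ≤ L * ‖x - y‖

theorem IsNearId.mono (hf : IsNearId L₁ f) (h : L₁ ≤ L₂) : IsNearId L₂ f := fun x y =>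
  (hf x y).trans (mul_le_mul_of_nonneg_right h (norm_nonneg _))

theorem IsNearId.norm_sub_le (hf : IsNearId L f) (x y : E) :
    ‖f x - f y‖ ≤ (1 + L) * ‖x - y‖ :=
  calc ‖f x - f y‖ = ‖((f x - x) - (f y - y)) + (x - y)‖ := by congr 1; abel
    _ ≤ L * ‖x - y‖ + ‖x - y‖ := norm_add_le_of_le (hf x y) le_rfl
    _ = (1 + L) * ‖x - y‖ := by ring

theorem IsNearId.continuous (hf : IsNearId L f) : Continuous f :=
  (LipschitzWith.of_dist_le' (K := 1 + L) fun x y => by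
    simpa only [dist_eq_norm] using hf.norm_sub_le x y).continuous

theorem IsNearId.comp (hg : IsNearId L₂ g) (hf : IsNearId L₁ f) (hL₂ : 0 ≤ L₂) :
    IsNearId (L₂ * (1 + L₁) + L₁) (g ∘ f) := fun x y =>
  calc ‖(g (f x) - x) - (g (f y) - y)‖
      = ‖((g (f x) - f x) - (g (f y) - f y)) + ((f x - x) - (f y - y))‖ := by congr 1; abel
    _ ≤ L₂ * ‖f x - f y‖ + L₁ * ‖x - y‖ := norm_add_le_of_le (hg _ _) (hf x y)
    _ ≤ L₂ * ((1 + L₁) * ‖x - y‖) + L₁ * ‖x - y‖ := by gcongr; exact hf.norm_sub_le x y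
    _ = (L₂ * (1 + L₁) + L₁) * ‖x - y‖ := by ring

theorem IsNearId.glue {ι : Type*} {f : ι → E → E} {c : E → ι} (hL : 0 ≤ L)
    (hf : ∀ p, IsNearId L (f p)) (hid : ∀ p x, c x ≠ p → f p x = x) :
    IsNearId (2 * L) fun x => f (c x) x := by
  intro x y
  have key : ∀ p x y, c y ≠ p → ‖f p x - x‖ ≤ L * ‖x - y‖ := fun p x y hy => by
    simpa only [hid p y hy, sub_self, sub_zero] using hf p x y
  by_cases h : c x = c y
  · simp only [h]
    exact (hf _ x y).trans (by gcongr; linarith)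
  · calc ‖(f (c x) x - x) - (f (c y) y - y)‖ ≤ L * ‖x - y‖ + L * ‖y - x‖ :=
          norm_sub_le_of_le (key _ x y (Ne.symm h)) (key _ y x h)
      _ = 2 * L * ‖x - y‖ := by rw [norm_sub_rev y x]; ring

end NearId

section MeasurePreserving

variable {X Y Z : Type*} [MeasurableSpace X] [MeasurableSpace Y] [MeasurableSpace Z]

theorem measurePreserving_withDensity_left_iff {μ : Measure X} {ν : Measure Y} {f : X → Y}
    {w : X → ENNReal} (hf : Measurable f) (hw : Measurable w) :
    MeasurePreserving f (μ.withDensity w) ν ↔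
      ∀ u : Y → ENNReal, Measurable u → ∫⁻ x, w x * u (f x) ∂μ = ∫⁻ y, u y ∂ν := by
  have hsource (u : Y → ENNReal) (hu : Measurable u) :
      ∫⁻ x, u (f x) ∂μ.withDensity w = ∫⁻ x, w x * u (f x) ∂μ :=
    lintegral_withDensity_eq_lintegral_mul _ hw (hu.comp hf)
  refine ⟨fun h u hu => ?_, fun h => ⟨hf, Measure.ext_of_lintegral _ fun u hu => ?_⟩⟩
  · rw [← hsource u hu, h.lintegral_comp hu]
  · rw [lintegral_map hu hf, hsource u hu, h u hu]

theorem measurePreserving_withDensity_iff {μ : Measure X} {ν : Measure Y} {f : X → Y}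
    {w : X → ENNReal} {w' : Y → ENNReal} (hf : Measurable f) (hw : Measurable w)
    (hw' : Measurable w') :
    MeasurePreserving f (μ.withDensity w) (ν.withDensity w') ↔
      ∀ u : Y → ENNReal, Measurable u →
        ∫⁻ x, w x * u (f x) ∂μ = ∫⁻ y, w' y * u y ∂ν := by
  refine (measurePreserving_withDensity_left_iff hf hw).trans (forall₂_congr fun u hu => ?_)
  rw [lintegral_withDensity_eq_lintegral_mul _ hw' hu]
  rfl

theorem measurePreserving_withDensity_comp {μ : Measure X} {ν : Measure Y} {f : X → Y}
    (hf : MeasurePreserving f μ ν) {w : Y → ENNReal} (hw : Measurable w) :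
    MeasurePreserving f (μ.withDensity fun x => w (f x)) (ν.withDensity w) :=
  (measurePreserving_withDensity_iff hf.measurable (hw.comp hf.measurable) hw).2 fun _ hu =>
    hf.lintegral_comp (hw.mul hu)

theorem measurePreserving_withDensity_conj {μ : Measure X} {ν : Measure Y} (e : X ≃ᵐ Y)
    {κ : ENNReal} (he : MeasurePreserving e μ (κ • ν)) {f : Y → Y} {w w' : Y → ENNReal}
    (hw : Measurable w) (hw' : Measurable w')
    (hf : MeasurePreserving f (ν.withDensity w) (ν.withDensity w')) :
    MeasurePreserving (e.symm ∘ f ∘ e) (μ.withDensity fun x => w (e x))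
      (μ.withDensity fun x => w' (e x)) := by
  have hf' : MeasurePreserving f ((κ • ν).withDensity w) ((κ • ν).withDensity w') := by
    simpa only [withDensity_smul_measure] using hf.smul_measure κ
  exact (measurePreserving_withDensity_comp he hw').symm.comp
    (hf'.comp (measurePreserving_withDensity_comp he hw))

theorem measurePreserving_prod_snd {μ : Measure X} {ν : Measure Y} {ν' : Measure Z}
    [SFinite ν] [SFinite ν'] {g : X → Y → Z} (hg : Measurable (Function.uncurry g))
    {w : X × Y → ENNReal} {w' : X × Z → ENNReal} (hw : Measurable w) (hw' : Measurable w')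
    (h : ∀ᵐ x ∂μ, MeasurePreserving (g x) (ν.withDensity fun y => w (x, y))
      (ν'.withDensity fun z => w' (x, z))) :
    MeasurePreserving (fun p : X × Y => (p.1, g p.1 p.2)) ((μ.prod ν).withDensity w)
      ((μ.prod ν').withDensity w') := by
  have hG : Measurable fun p : X × Y => (p.1, g p.1 p.2) := measurable_fst.prodMk hg
  refine (measurePreserving_withDensity_iff hG hw hw').2 fun u hu => ?_
  rw [lintegral_prod _ (by fun_prop), lintegral_prod _ (by fun_prop)]
  refine lintegral_congr_ae (h.mono fun x hx => ?_)
  exact (measurePreserving_withDensity_iff hx.measurable (by fun_prop) (by fun_prop)).1 hx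
    (fun z => u (x, z)) (by fun_prop)

theorem measurePreserving_prod_fst {μ : Measure X} {ν : Measure Y} [SFinite μ] [SFinite ν]
    {g : Y → X → X} (hg : Measurable (Function.uncurry g)) {w w' : X × Y → ENNReal}
    (hw : Measurable w) (hw' : Measurable w')
    (h : ∀ᵐ y ∂ν, MeasurePreserving (g y) (μ.withDensity fun x => w (x, y))
      (μ.withDensity fun x => w' (x, y))) :
    MeasurePreserving (fun p : X × Y => (g p.2 p.1, p.2)) ((μ.prod ν).withDensity w)
      ((μ.prod ν).withDensity w') :=
  measurePreserving_withDensity_conj MeasurableEquiv.prodComm (κ := 1)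
    (by rw [one_smul]; exact Measure.measurePreserving_swap)
    (hw.comp measurable_swap) (hw'.comp measurable_swap)
    (measurePreserving_prod_snd hg (hw.comp measurable_swap) (hw'.comp measurable_swap) h)

theorem measurePreserving_withDensity_iUnion {ι : Type*} [Countable ι] {μ : Measure X}
    {B : ι → Set X} (hB : ∀ p, MeasurableSet (B p)) (hdisj : Pairwise (Function.onFun Disjoint B))
    {f : X → X} (hf : Measurable f) {w w' : X → ENNReal}
    (h : ∀ p, MeasurePreserving f ((μ.restrict (B p)).withDensity w)
      ((μ.restrict (B p)).withDensity w')) :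
    MeasurePreserving f ((μ.restrict (⋃ p, B p)).withDensity w)
      ((μ.restrict (⋃ p, B p)).withDensity w') := by
  refine ⟨hf, ?_⟩
  simp only [Measure.restrict_iUnion hdisj hB, withDensity_sum,
    Measure.map_sum hf.aemeasurable, (h _).map_eq]

theorem measurePreserving_of_monotoneOn {A T : Set ℝ} (hA : MeasurableSet A) (hT : T.Countable)
    {f f' : ℝ → ℝ} (hf : Measurable f) (hf' : Measurable f') (hmono : MonotoneOn f A)
    (hderiv : ∀ x ∈ A, x ∉ T → HasDerivAt f (f' x) x) :
    MeasurePreserving f ((volume.restrict A).withDensity fun x => ENNReal.ofReal (f' x))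
      (volume.restrict (f '' A)) := by
  have hsource : (A \ T : Set ℝ) =ᵐ[volume] A := sdiff_null_ae_eq_self (hT.measure_zero _)
  have htarget : (f '' (A \ T) : Set ℝ) =ᵐ[volume] f '' A := by
    refine (LE.le.eventuallyLE (Set.image_mono Set.sdiff_subset)).antisymm (ae_le_set.2 ?_)
    refine ((hT.image f).mono ?_).measure_zero _
    rintro _ ⟨⟨x, hx, rfl⟩, hxT⟩
    exact ⟨x, by_contra fun h => hxT ⟨x, ⟨hx, h⟩, rfl⟩, rfl⟩
  refine (measurePreserving_withDensity_left_iff hf (by fun_prop)).2 fun u _ => ?_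
  have hcov := lintegral_image_eq_lintegral_deriv_mul_of_monotoneOn (f' := f')
    (hA.diff hT.measurableSet) (fun x hx => (hderiv x hx.1 hx.2).hasDerivWithinAt)
    (hmono.mono Set.sdiff_subset) u
  rw [setLIntegral_congr hsource, setLIntegral_congr htarget] at hcov
  exact hcov.symm

end MeasurePreserving

section Polar

variable {E : Type*} [NormedAddCommGroup E] [NormedSpace ℝ E] [FiniteDimensional ℝ E]
  [MeasurableSpace E] [BorelSpace E] [Nontrivial E] (μ : Measure E) [μ.IsAddHaarMeasure]

theorem lintegral_eq_lintegral_toSphere {h : E → ENNReal} (hh : Measurable h) :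
    ∫⁻ x, h x ∂μ = ∫⁻ ω, (∫⁻ r in Set.Ioi (0 : ℝ),
      ENNReal.ofReal (r ^ (Module.finrank ℝ E - 1)) * h (r • (ω : E))) ∂μ.toSphere := by
  have hpolar : ∫⁻ x, h x ∂μ = ∫⁻ p, h (p.2.1 • p.1.1)
      ∂μ.toSphere.prod (Measure.volumeIoiPow (Module.finrank ℝ E - 1)) := by
    have hpunctured : ∫⁻ x, h x ∂μ = ∫⁻ x in {0}ᶜ, h x ∂μ := by rw [restrict_compl_singleton]
    rw [← μ.measurePreserving_homeomorphUnitSphereProd.lintegral_comp_emb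
      (Homeomorph.measurableEmbedding _), hpunctured,
      ← lintegral_subtype_comap (measurableSet_singleton (0 : E)).compl h]
    refine lintegral_congr fun x => ?_
    rw [← homeomorphUnitSphereProd_symm_apply_coe, Homeomorph.symm_apply_apply]
  have hsmul : Measurable fun p : Metric.sphere (0 : E) 1 × Set.Ioi (0 : ℝ) => h (p.2.1 • p.1.1) :=
    hh.comp (by fun_prop : Continuous _).measurable
  rw [hpolar, lintegral_prod _ hsmul.aemeasurable]
  refine lintegral_congr fun ω => ?_
  rw [Measure.volumeIoiPow, lintegral_withDensity_eq_lintegral_mul _ (by fun_prop) (by fun_prop)]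
  exact lintegral_subtype_comap measurableSet_Ioi
    fun r : ℝ => ENNReal.ofReal (r ^ (Module.finrank ℝ E - 1)) * h (r • (ω : E))

theorem setLIntegral_ball_eq_lintegral_toSphere {h : E → ENNReal} (hh : Measurable h) :
    ∫⁻ x in Metric.ball 0 1, h x ∂μ = ∫⁻ ω, (∫⁻ r in Set.Ioo (0 : ℝ) 1,
      ENNReal.ofReal (r ^ (Module.finrank ℝ E - 1)) * h (r • (ω : E))) ∂μ.toSphere := by
  rw [← lintegral_indicator Metric.isOpen_ball.measurableSet,
    lintegral_eq_lintegral_toSphere μ (hh.indicator Metric.isOpen_ball.measurableSet)]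
  refine lintegral_congr fun ω => ?_
  rw [← Set.Ioi_inter_Iio, Set.inter_comm, ← Measure.restrict_restrict measurableSet_Iio,
    ← lintegral_indicator measurableSet_Iio]
  refine setLIntegral_congr_fun measurableSet_Ioi fun r (hr : 0 < r) => ?_
  have hball : r • (ω : E) ∈ Metric.ball (0 : E) 1 ↔ r ∈ Set.Iio (1 : ℝ) := by
    simp [norm_smul, abs_of_pos hr]
  by_cases hr1 : r ∈ Set.Iio (1 : ℝ)
  · simp only [Set.indicator_of_mem hr1, Set.indicator_of_mem (hball.2 hr1)]
  · simp only [Set.indicator_of_notMem hr1, Set.indicator_of_notMem (mt hball.1 hr1), mul_zero]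

theorem measurePreserving_pow_Ioo {n : ℕ} (hn : n ≠ 0) :
    MeasurePreserving (fun r : ℝ => r ^ n)
      ((volume.restrict (Set.Ioo 0 1)).withDensity fun r => ENNReal.ofReal (n * r ^ (n - 1)))
      (volume.restrict (Set.Ioo 0 1)) := by
  have himage : (fun r : ℝ => r ^ n) '' Set.Ioo 0 1 = Set.Ioo 0 1 := by
    refine Set.Subset.antisymm ?_ ?_
    · rintro _ ⟨r, hr, rfl⟩
      exact ⟨pow_pos hr.1 n, pow_lt_one₀ hr.1.le hr.2 hn⟩
    · simpa [hn] using intermediate_value_Ioo (zero_le_one' ℝ) (continuous_pow n).continuousOn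
  have h := measurePreserving_of_monotoneOn (A := Set.Ioo 0 1) measurableSet_Ioo
    Set.countable_empty (continuous_pow n).measurable (by fun_prop)
    (fun x hx y _ hxy => pow_le_pow_left₀ hx.1.le hxy n) fun x _ _ => hasDerivAt_pow n x
  rwa [himage] at h

/-- Polar coordinates in which the radial coordinate `v = r ^ n` is uniformly distributed. -/
theorem finrank_mul_setLIntegral_ball {h : E → ENNReal} (hh : Measurable h) :
    Module.finrank ℝ E * ∫⁻ x in Metric.ball 0 1, h x ∂μ = ∫⁻ ω, (∫⁻ v in Set.Ioo (0 : ℝ) 1,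
      h (v ^ (Module.finrank ℝ E : ℝ)⁻¹ • (ω : E))) ∂μ.toSphere := by
  set n := Module.finrank ℝ E
  have hn0 : n ≠ 0 := Module.finrank_pos.ne'
  rw [setLIntegral_ball_eq_lintegral_toSphere μ hh,
    ← lintegral_const_mul' _ _ (ENNReal.natCast_ne_top n)]
  refine lintegral_congr fun ω => ?_
  have hu : Measurable fun v : ℝ => h (v ^ (n : ℝ)⁻¹ • (ω : E)) := by fun_prop
  rw [← (measurePreserving_pow_Ioo hn0).lintegral_comp hu,
    lintegral_withDensity_eq_lintegral_mul _ (by fun_prop) (by fun_prop),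
    ← lintegral_const_mul' _ _ (ENNReal.natCast_ne_top n)]
  refine setLIntegral_congr_fun measurableSet_Ioo fun r hr => ?_
  simp only [Pi.mul_apply, Real.pow_rpow_inv_natCast hr.1.le hn0]
  rw [ENNReal.ofReal_mul n.cast_nonneg, ENNReal.ofReal_natCast, mul_assoc]

theorem measurePreserving_radial {V Λ : ℝ → ℝ} {w : ℝ → ENNReal} (hw : Measurable w)
    (hΛ : Measurable Λ)
    (hV : MeasurePreserving V ((volume.restrict (Set.Ioo 0 1)).withDensity w)
      (volume.restrict (Set.Ioo 0 1)))
    (hΛ0 : ∀ v ∈ Set.Ioo (0 : ℝ) 1, 0 ≤ Λ v)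
    (hΛV : ∀ v ∈ Set.Ioo (0 : ℝ) 1, v * Λ v ^ Module.finrank ℝ E = V v) :
    MeasurePreserving (fun x : E => Λ (‖x‖ ^ Module.finrank ℝ E) • x)
      ((μ.restrict (Metric.ball 0 1)).withDensity fun x => w (‖x‖ ^ Module.finrank ℝ E))
      (μ.restrict (Metric.ball 0 1)) := by
  set n := Module.finrank ℝ E with hn
  have hn0 : n ≠ 0 := Module.finrank_pos.ne'
  have hf : Measurable fun x : E => Λ (‖x‖ ^ n) • x := by fun_prop
  refine (measurePreserving_withDensity_left_iff hf (by fun_prop)).2 fun u hu => ?_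
  refine (ENNReal.mul_right_inj (Nat.cast_ne_zero.2 hn0) (ENNReal.natCast_ne_top n)).1 ?_
  rw [finrank_mul_setLIntegral_ball μ (by fun_prop), finrank_mul_setLIntegral_ball μ hu, ← hn]
  refine lintegral_congr fun ω => ?_
  have hω : Measurable fun v : ℝ => u (v ^ (n : ℝ)⁻¹ • (ω : E)) := by fun_prop
  have hV_meas := hV.measurable
  rw [← hV.lintegral_comp hω, lintegral_withDensity_eq_lintegral_mul _ hw (by fun_prop)]
  refine setLIntegral_congr_fun measurableSet_Ioo fun v hv => ?_
  have hnorm : ‖v ^ (n : ℝ)⁻¹ • (ω : E)‖ ^ n = v := by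
    rw [norm_smul, norm_eq_of_mem_sphere, mul_one, Real.norm_of_nonneg (Real.rpow_nonneg hv.1.le _),
      Real.rpow_inv_natCast_pow hv.1.le hn0]
  have hroot : V v ^ (n : ℝ)⁻¹ = Λ v * v ^ (n : ℝ)⁻¹ := by
    rw [← hΛV v hv, Real.mul_rpow hv.1.le (pow_nonneg (hΛ0 v hv) n),
      Real.pow_rpow_inv_natCast (hΛ0 v hv) hn0, mul_comm]
  simp only [Pi.mul_apply, hnorm, hroot, smul_smul]

end Polar

section Perturbation

variable {g : ℝ → ℝ} {a c : ℝ}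

theorem mul_abs_sub_le_abs_add_mul_sub (hg : ∀ s t, |g s - g t| ≤ |s - t|) (s t : ℝ) :
    (1 - |a|) * |s - t| ≤ |(s + a * g s) - (t + a * g t)| :=
  calc (1 - |a|) * |s - t| = |s - t| - |a| * |s - t| := by ring
    _ ≤ |s - t| - |a * (g s - g t)| := by
        rw [abs_mul]
        exact sub_le_sub_left (mul_le_mul_of_nonneg_left (hg s t) (abs_nonneg a)) _
    _ ≤ |(s - t) + a * (g s - g t)| := by simpa using abs_sub_abs_le_abs_sub (s - t) (-(a * _))
    _ = |(s + a * g s) - (t + a * g t)| := by congr 1; ring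

theorem strictMono_add_mul (hg : ∀ s t, |g s - g t| ≤ |s - t|) (ha : |a| < 1) :
    StrictMono fun t => t + a * g t := by
  intro s t hst
  have hprod : |a * (g t - g s)| < t - s :=
    calc |a * (g t - g s)| ≤ |a| * |t - s| := by
          rw [abs_mul]
          exact mul_le_mul_of_nonneg_left (hg t s) (abs_nonneg a)
      _ < 1 * |t - s| := mul_lt_mul_of_pos_right ha (abs_pos.2 (sub_ne_zero.2 hst.ne'))
      _ = t - s := by rw [one_mul, abs_of_pos (sub_pos.2 hst)]
  have := (abs_lt.1 hprod).1
  dsimp only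
  linarith

theorem image_Ioo_of_strictMono {f : ℝ → ℝ} {l u : ℝ} (hlu : l ≤ u) (hf : StrictMono f)
    (hcont : Continuous f) (hl : f l = l) (hu : f u = u) :
    f '' Set.Ioo l u = Set.Ioo l u := by
  refine Set.Subset.antisymm ?_ ?_
  · rintro _ ⟨x, hx, rfl⟩
    exact ⟨hl.symm.trans_lt (hf hx.1), (hf hx.2).trans_eq hu⟩
  · simpa only [hl, hu] using intermediate_value_Ioo hlu hcont.continuousOn

theorem abs_rpow_sub_rpow_le {p b b' : ℝ} (hp : 0 ≤ p) (hp1 : p ≤ 1) (hc : 0 < c) (hb : c ≤ b)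
    (hb' : c ≤ b') : |b ^ p - b' ^ p| ≤ c ^ (p - 1) * |b - b'| := by
  wlog h : b' ≤ b generalizing b b'
  · rw [abs_sub_comm, abs_sub_comm b]
    exact this hb' hb (le_of_not_ge h)
  have hb'0 : 0 < b' := hc.trans_le hb'
  have hratio : (b / b') ^ p ≤ b / b' :=
    (Real.rpow_le_rpow_of_exponent_le ((one_le_div hb'0).2 h) hp1).trans_eq (Real.rpow_one _)
  rw [abs_of_nonneg (sub_nonneg.2 (Real.rpow_le_rpow hb'0.le h hp)),
    abs_of_nonneg (sub_nonneg.2 h)]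
  calc b ^ p - b' ^ p = b' ^ p * ((b / b') ^ p - 1) := by
        rw [Real.div_rpow (hb'0.le.trans h) hb'0.le]; field_simp
    _ ≤ b' ^ p * (b / b' - 1) := by gcongr
    _ = b' ^ (p - 1) * (b - b') := by rw [Real.rpow_sub_one hb'0.ne']; field_simp
    _ ≤ c ^ (p - 1) * (b - b') :=
        mul_le_mul_of_nonneg_right (Real.rpow_le_rpow_of_nonpos hc hb' (by linarith))
          (sub_nonneg.2 h)

theorem abs_max_zero_sub_max_zero_le (x y : ℝ) : |max 0 x - max 0 y| ≤ |x - y| := by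
  simpa only [max_comm (0 : ℝ)] using abs_max_sub_max_le_abs x y 0

theorem hasDerivAt_max_zero_sub {s y : ℝ} (h : y ≠ s) :
    HasDerivAt (fun y => max 0 (s - y)) (if y < s then -1 else 0) y := by
  rcases h.lt_or_gt with h | h
  · rw [if_pos h]
    refine ((hasDerivAt_id y).const_sub s).congr_of_eventuallyEq ?_
    filter_upwards [Iio_mem_nhds h] with u hu
    exact max_eq_right (sub_nonneg.2 (le_of_lt hu))
  · rw [if_neg h.not_gt]
    refine (hasDerivAt_const y 0).congr_of_eventuallyEq ?_
    filter_upwards [Ioi_mem_nhds h] with u hu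
    exact max_eq_left (sub_nonpos.2 (le_of_lt hu))

end Perturbation

section Profile

/-- The sign of `t`, with value `-1` at `0` to match the half-open dyadic cubes. -/
noncomputable def sgn (t : ℝ) : ℝ := if 0 < t then 1 else -1

/-- The distance from `t` to the nearest of `-1`, `0` and `1` when `|t| ≤ 1`; negative
otherwise. -/
noncomputable def tent (t : ℝ) : ℝ := min |t| (1 - |t|)

/-- The density perturbation at height `t` and depth `y`, half-way between the jump `sgn t` and
the constant density. It is at once the `y`-derivative of `flux` and the `t`-derivative of
`drift`, so the jump can be spread along `t` first and then along `y`. -/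
noncomputable def kernel (t y : ℝ) : ℝ :=
  sgn t * ((if 2 * y < tent t then 2 else 0) - (if y < tent t then 1 else 0))

/-- The primitive of `kernel t` on `[0, ∞)` vanishing at `0` and far out. -/
noncomputable def flux (t y : ℝ) : ℝ := sgn t * max 0 (min y (tent t - y))

/-- The tent `1 - y - |t|` truncated to plateau height on `|t| ≤ y`. -/
noncomputable def plateau (y t : ℝ) : ℝ := max 0 (1 - y - max |t| y)

/-- The primitive of `fun t => kernel t y` vanishing outside `[-1, 1]`. -/
noncomputable def drift (y t : ℝ) : ℝ := plateau y t - 2 * plateau (2 * y) t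

theorem abs_sgn (t : ℝ) : |sgn t| = 1 := by
  unfold sgn
  split_ifs <;> simp

theorem measurable_sgn : Measurable sgn :=
  Measurable.ite measurableSet_Ioi measurable_const measurable_const

theorem hasDerivAt_abs_sgn {t : ℝ} (ht : t ≠ 0) : HasDerivAt (fun t : ℝ => |t|) (sgn t) t := by
  convert hasDerivAt_abs ht using 1
  rcases ht.lt_or_gt with h | h
  · simp [sgn, h, h.not_gt]
  · simp [sgn, h]

theorem tent_le_abs (t : ℝ) : tent t ≤ |t| := min_le_left _ _

theorem tent_le_half (t : ℝ) : tent t ≤ 1 / 2 := by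
  have h₁ : tent t ≤ |t| := min_le_left _ _
  have h₂ : tent t ≤ 1 - |t| := min_le_right _ _
  linarith

theorem continuous_tent : Continuous tent := by
  unfold tent
  fun_prop

theorem abs_tent_sub_tent_le (t t' : ℝ) : |tent t - tent t'| ≤ |t - t'| := by
  refine (abs_min_sub_min_le_max _ _ _ _).trans (max_le (abs_abs_sub_abs_le_abs_sub t t') ?_)
  rw [sub_sub_sub_cancel_left, abs_sub_comm]
  exact abs_abs_sub_abs_le_abs_sub t t'

theorem measurable_kernel : Measurable fun p : ℝ × ℝ => kernel p.1 p.2 := by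
  have htent := continuous_tent.measurable
  refine (measurable_sgn.comp measurable_fst).mul (Measurable.sub ?_ ?_) <;>
    exact Measurable.ite (measurableSet_lt (by fun_prop) (by fun_prop)) (by fun_prop) (by fun_prop)

theorem kernel_zero_right {t : ℝ} (ht : t ∈ Set.Ioo (-1 : ℝ) 1) (ht0 : t ≠ 0) :
    kernel t 0 = sgn t := by
  have htent : 0 < tent t := lt_min (abs_pos.2 ht0) (sub_pos.2 (abs_lt.2 ht))
  rw [kernel, mul_zero, if_pos htent, if_pos htent]
  ring

theorem kernel_eq_zero {t y : ℝ} (hy : 1 / 2 ≤ y) : kernel t y = 0 := by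
  have := tent_le_half t
  rw [kernel, if_neg (by linarith), if_neg (by linarith), sub_zero, mul_zero]

end Profile

section Flux

variable {t t' y y' : ℝ}

theorem abs_flux (t y : ℝ) : |flux t y| = max 0 (min y (tent t - y)) := by
  rw [flux, abs_mul, abs_sgn, one_mul, abs_of_nonneg (le_max_left _ _)]

theorem flux_eq_zero (h : y ≤ 0 ∨ tent t ≤ y) : flux t y = 0 := by
  rw [← abs_eq_zero, abs_flux]
  exact max_eq_left (h.elim (min_le_of_left_le ·) fun h => min_le_of_right_le (by linarith))

theorem abs_flux_le (t y : ℝ) : |flux t y| ≤ 1 / 4 := by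
  rw [abs_flux]
  refine max_le (by norm_num) ?_
  rcases le_total y (1 / 4) with h | h
  · exact min_le_of_left_le h
  · exact min_le_of_right_le (by linarith [tent_le_half t])

theorem abs_flux_le_abs (t y : ℝ) : |flux t y| ≤ |t| := by
  rw [abs_flux]
  refine max_le (abs_nonneg t) ?_
  rcases le_total y |t| with h | h
  · exact min_le_of_left_le h
  · exact min_le_of_right_le (by linarith [tent_le_abs t, abs_nonneg t])

theorem abs_flux_sub_flux_le (t y t' y' : ℝ) :
    |flux t y - flux t' y'| ≤ |t - t'| + |y - y'| := by
  by_cases hsgn : sgn t = sgn t'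
  · rw [flux, flux, hsgn, ← mul_sub, abs_mul, abs_sgn, one_mul]
    refine (abs_max_zero_sub_max_zero_le _ _).trans ?_
    refine (abs_min_sub_min_le_max _ _ _ _).trans (max_le ?_ ?_)
    · linarith [abs_nonneg (t - t')]
    · calc |tent t - y - (tent t' - y')| = |(tent t - tent t') - (y - y')| := by congr 1; ring
        _ ≤ |t - t'| + |y - y'| :=
          (abs_sub _ _).trans (add_le_add_left (abs_tent_sub_tent_le t t') _)
  · have hopp : |t| + |t'| = |t - t'| := by
      unfold sgn at hsgn
      split_ifs at hsgn with h h' h'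
      · exact absurd rfl hsgn
      · rw [abs_of_pos h, abs_of_nonpos (not_lt.1 h'), abs_of_nonneg (by linarith)]; ring
      · rw [abs_of_nonpos (not_lt.1 h), abs_of_pos h', abs_of_nonpos (by linarith)]; ring
      · exact absurd rfl hsgn
    calc |flux t y - flux t' y'| ≤ |flux t y| + |flux t' y'| := abs_sub _ _
      _ ≤ |t| + |t'| := add_le_add (abs_flux_le_abs t y) (abs_flux_le_abs t' y')
      _ ≤ |t - t'| + |y - y'| := by linarith [abs_nonneg (y - y')]

theorem continuous_flux (t : ℝ) : Continuous (flux t) := by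
  unfold flux
  fun_prop

theorem flux_eq_sub (t : ℝ) (hy : 0 ≤ y) :
    flux t y = sgn t * (max 0 (tent t - y) - max 0 (tent t - 2 * y)) := by
  unfold flux
  congr 1
  simp only [max_def, min_def]
  split_ifs <;> linarith

theorem hasDerivAt_flux (hy : 0 < y) (h₁ : y ≠ tent t) (h₂ : 2 * y ≠ tent t) :
    HasDerivAt (flux t) (kernel t y) y := by
  have hdouble : HasDerivAt (fun y => max 0 (tent t - 2 * y))
      ((if 2 * y < tent t then -1 else 0) * 2) y := by
    exact (HasDerivAt.comp y (hasDerivAt_max_zero_sub h₂)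
      ((hasDerivAt_id' y).const_mul 2)).congr_deriv (by rw [mul_one])
  refine ((((hasDerivAt_max_zero_sub h₁).sub hdouble).const_mul (sgn t)).congr_of_eventuallyEq
    ?_).congr_deriv ?_
  · filter_upwards [Ioi_mem_nhds hy] with u hu using flux_eq_sub t (le_of_lt hu)
  · unfold kernel
    split_ifs <;> ring

end Flux

section Drift

variable {t y : ℝ}

theorem continuous_plateau (y : ℝ) : Continuous (plateau y) := by
  unfold plateau
  fun_prop

theorem plateau_eq_zero (hy : 0 ≤ y) (ht : 1 ≤ |t|) : plateau y t = 0 :=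
  max_eq_left (by linarith [le_max_left |t| y])

theorem abs_plateau_sub_plateau_le (t y t' y' : ℝ) :
    |plateau y t - plateau y' t'| ≤ |t - t'| + 2 * |y - y'| := by
  have hmax : |max |t| y - max |t'| y'| ≤ |t - t'| + |y - y'| :=
    (abs_max_sub_max_le_max _ _ _ _).trans (max_le_add_of_nonneg (abs_nonneg _) (abs_nonneg _))
      |>.trans (add_le_add_left (abs_abs_sub_abs_le_abs_sub t t') _)
  calc |plateau y t - plateau y' t'| ≤ |(1 - y - max |t| y) - (1 - y' - max |t'| y')| :=
        abs_max_zero_sub_max_zero_le _ _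
    _ = |(y - y') + (max |t| y - max |t'| y')| := by rw [← abs_neg]; congr 1; ring
    _ ≤ |t - t'| + 2 * |y - y'| := (abs_add_le _ _).trans (by linarith)

theorem hasDerivAt_plateau (ht : t ≠ 0) (h₁ : |t| ≠ y) (h₂ : |t| ≠ 1 - y) :
    HasDerivAt (plateau y) (-(sgn t * if y < tent t then 1 else 0)) t := by
  have habs : ContinuousAt (fun t : ℝ => |t|) t := continuous_abs.continuousAt
  rcases h₁.lt_or_gt with hlow | hhigh
  · rw [if_neg (not_lt.2 ((tent_le_abs t).trans hlow.le)), mul_zero, neg_zero]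
    refine (hasDerivAt_const t (plateau y t)).congr_of_eventuallyEq ?_
    filter_upwards [habs.eventually (gt_mem_nhds hlow)] with u hu
    rw [plateau, plateau, max_eq_right hu.le, max_eq_right hlow.le]
  · have hhinge := HasDerivAt.comp t (hasDerivAt_max_zero_sub h₂) (hasDerivAt_abs_sgn ht)
    refine (hhinge.congr_of_eventuallyEq ?_).congr_deriv ?_
    · filter_upwards [habs.eventually (lt_mem_nhds hhigh)] with u hu
      rw [plateau, max_eq_left hu.le, Function.comp_apply]
    · have hiff : y < tent t ↔ |t| < 1 - y := by
        rw [tent, lt_min_iff, and_iff_right hhigh, lt_sub_comm]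
      simp only [hiff]
      split_ifs <;> ring

/-- On `t ≥ 0` the two plateaus decrease, the inner one more slowly, both with slope at most one;
hence their combination in `drift` is still `1`-Lipschitz in `t`. -/
theorem plateau_sub_plateau_bounds {s s' : ℝ} (hy : 0 ≤ y) (h : |s| ≤ |s'|) :
    0 ≤ plateau (2 * y) s - plateau (2 * y) s' ∧
      plateau (2 * y) s - plateau (2 * y) s' ≤ plateau y s - plateau y s' ∧
      plateau y s - plateau y s' ≤ |s'| - |s| := by
  simp only [plateau, max_def]
  refine ⟨?_, ?_, ?_⟩ <;> split_ifs <;> linarith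

theorem abs_drift_sub_drift_le (hy : 0 ≤ y) (s t : ℝ) : |drift y s - drift y t| ≤ |s - t| := by
  wlog h : |s| ≤ |t| generalizing s t
  · rw [abs_sub_comm, abs_sub_comm s]
    exact this t s (le_of_not_ge h)
  obtain ⟨hnonneg, hinner, houter⟩ := plateau_sub_plateau_bounds hy h
  have habs : |t| - |s| ≤ |s - t| := by
    rw [abs_sub_comm]
    exact abs_sub_abs_le_abs_sub t s
  unfold drift
  exact abs_le.2 ⟨by linarith, by linarith⟩

theorem abs_drift_sub_drift_le_add (t y t' y' : ℝ) :
    |drift y t - drift y' t'| ≤ 3 * |t - t'| + 10 * |y - y'| := by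
  have hdouble : |2 * y - 2 * y'| = 2 * |y - y'| := by
    rw [← mul_sub, abs_mul, abs_two]
  calc |drift y t - drift y' t'|
      = |(plateau y t - plateau y' t') - 2 * (plateau (2 * y) t - plateau (2 * y') t')| := by
        unfold drift; congr 1; ring
    _ ≤ (|t - t'| + 2 * |y - y'|) + 2 * (|t - t'| + 2 * |2 * y - 2 * y'|) := by
        refine (abs_sub _ _).trans ?_
        rw [abs_mul, abs_two]
        exact add_le_add (abs_plateau_sub_plateau_le _ _ _ _)
          (mul_le_mul_of_nonneg_left (abs_plateau_sub_plateau_le _ _ _ _) zero_le_two)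
    _ = 3 * |t - t'| + 10 * |y - y'| := by rw [hdouble]; ring

theorem continuous_drift (y : ℝ) : Continuous (drift y) :=
  (continuous_plateau y).sub (continuous_const.mul (continuous_plateau (2 * y)))

theorem drift_eq_zero (hy : 0 ≤ y) (ht : 1 ≤ |t|) : drift y t = 0 := by
  rw [drift, plateau_eq_zero hy ht, plateau_eq_zero (by linarith) ht, mul_zero, sub_zero]

theorem exists_countable_hasDerivAt_drift (y : ℝ) :
    ∃ T : Set ℝ, T.Countable ∧ 0 ∈ T ∧ ∀ t ∉ T, HasDerivAt (drift y) (kernel t y) t := by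
  refine ⟨{0} ∪ (fun t : ℝ => |t|) ⁻¹' {y, 1 - y, 2 * y, 1 - 2 * y}, ?_, Or.inl rfl, ?_⟩
  · refine (Set.countable_singleton 0).union (Set.Finite.countable ?_)
    have hfib : ∀ s : ℝ, ((fun t : ℝ => |t|) ⁻¹' {s}).Finite := fun s =>
      (Set.toFinite {s, -s}).subset fun t ht => eq_or_eq_neg_of_abs_eq ht
    exact Set.Finite.preimage' (Set.toFinite _) fun s _ => hfib s
  · intro t ht
    simp only [Set.mem_union, Set.mem_preimage, Set.mem_insert_iff, Set.mem_singleton_iff,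
      not_or] at ht
    obtain ⟨ht0, h₁, h₂, h₃, h₄⟩ := ht
    refine ((hasDerivAt_plateau ht0 h₁ h₂).sub
      ((hasDerivAt_plateau ht0 h₃ h₄).const_mul 2)).congr_deriv ?_
    unfold kernel
    split_ifs <;> ring

end Drift

section Slide

variable {a c t y : ℝ}

/-- The primitive of the density `fun t => 1 + a * kernel t y` that fixes `-1` and `1`. -/
noncomputable def shift (a y t : ℝ) : ℝ := t + a * drift y t

/-- The monotone transport of the density `1 + a * sgn t` on `(-1, 1)` to
`1 + a * kernel t y`. -/
noncomputable def slide (a y t : ℝ) : ℝ := Function.invFun (shift a y) (shift a 0 t)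

theorem continuous_shift (a y : ℝ) : Continuous (shift a y) :=
  continuous_id.add (continuous_const.mul (continuous_drift y))

theorem strictMono_shift (ha : |a| < 1) (hy : 0 ≤ y) : StrictMono (shift a y) :=
  strictMono_add_mul (abs_drift_sub_drift_le hy) ha

theorem shift_of_one_le_abs (hy : 0 ≤ y) (ht : 1 ≤ |t|) : shift a y t = t := by
  rw [shift, drift_eq_zero hy ht, mul_zero, add_zero]

theorem surjective_shift (a : ℝ) (hy : 0 ≤ y) : Function.Surjective (shift a y) := by
  refine (continuous_shift a y).surjective ?_ ?_
  · refine Filter.tendsto_id.congr' ?_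
    filter_upwards [Filter.eventually_ge_atTop 1] with t ht
    exact (shift_of_one_le_abs hy (ht.trans (le_abs_self t))).symm
  · refine Filter.tendsto_id.congr' ?_
    filter_upwards [Filter.eventually_le_atBot (-1)] with t ht
    exact (shift_of_one_le_abs hy (le_abs.2 (Or.inr (le_neg_of_le_neg ht)))).symm

theorem measurePreserving_shift (ha : |a| < 1) (hy : 0 ≤ y) :
    MeasurePreserving (shift a y)
      ((volume.restrict (Set.Ioo (-1) 1)).withDensity fun t => ENNReal.ofReal (1 + a * kernel t y))
      (volume.restrict (Set.Ioo (-1) 1)) := by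
  obtain ⟨T, hT, -, hderiv⟩ := exists_countable_hasDerivAt_drift y
  have himage : shift a y '' Set.Ioo (-1) 1 = Set.Ioo (-1) 1 :=
    image_Ioo_of_strictMono (by norm_num) (strictMono_shift ha hy) (continuous_shift a y)
      (shift_of_one_le_abs hy (by simp)) (shift_of_one_le_abs hy (by simp))
  have hkernel : Measurable fun t => kernel t y :=
    measurable_kernel.comp (measurable_id.prodMk measurable_const)
  have h := measurePreserving_of_monotoneOn (A := Set.Ioo (-1) 1) measurableSet_Ioo hT
    (continuous_shift a y).measurable (f' := fun t => 1 + a * kernel t y) (by fun_prop)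
    ((strictMono_shift ha hy).monotone.monotoneOn _)
    fun t _ ht => (hasDerivAt_id t).add ((hderiv t ht).const_mul a)
  rwa [himage] at h

theorem measurePreserving_shift_zero (ha : |a| < 1) :
    MeasurePreserving (shift a 0)
      ((volume.restrict (Set.Ioo (-1) 1)).withDensity fun t => ENNReal.ofReal (1 + a * sgn t))
      (volume.restrict (Set.Ioo (-1) 1)) := by
  have hae : (fun t => ENNReal.ofReal (1 + a * sgn t)) =ᵐ[volume.restrict (Set.Ioo (-1) 1)]
      fun t => ENNReal.ofReal (1 + a * kernel t 0) := by
    filter_upwards [ae_restrict_mem measurableSet_Ioo, ae_restrict_of_ae (Measure.ae_ne volume 0)]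
      with t ht ht0
    rw [kernel_zero_right ht ht0]
  rw [withDensity_congr_ae hae]
  exact measurePreserving_shift ha le_rfl

theorem shift_slide (hy : 0 ≤ y) : shift a y (slide a y t) = shift a 0 t :=
  Function.invFun_eq (surjective_shift a hy _)

theorem slide_zero (ha : |a| < 1) : slide a 0 t = t :=
  Function.leftInverse_invFun (strictMono_shift ha le_rfl).injective t

theorem slide_of_one_le_abs (ha : |a| < 1) (hy : 0 ≤ y) (ht : 1 ≤ |t|) : slide a y t = t :=
  (strictMono_shift ha hy).injective <| by
    rw [shift_slide hy, shift_of_one_le_abs le_rfl ht, shift_of_one_le_abs hy ht]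

theorem measurePreserving_slide (ha : |a| < 1) (hy : 0 ≤ y) :
    MeasurePreserving (slide a y)
      ((volume.restrict (Set.Ioo (-1) 1)).withDensity fun t => ENNReal.ofReal (1 + a * sgn t))
      ((volume.restrict (Set.Ioo (-1) 1)).withDensity
        fun t => ENNReal.ofReal (1 + a * kernel t y)) := by
  let e : ℝ ≃ᵐ ℝ := ((strictMono_shift ha hy).orderIsoOfSurjective _
    (surjective_shift a hy)).toHomeomorph.toMeasurableEquiv
  have he : MeasurePreserving e _ _ := measurePreserving_shift ha hy
  have hslide : e.symm ∘ shift a 0 = slide a y := funext fun t =>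
    e.symm_apply_eq.2 (shift_slide hy).symm
  exact hslide ▸ he.symm.comp (measurePreserving_shift_zero ha)

theorem abs_slide_sub_sub_slide_sub_le (hc : 0 < c) (ha : |a| ≤ 1 - c) {y' : ℝ} (hy : 0 ≤ y)
    (hy' : 0 ≤ y') (t t' : ℝ) :
    |(slide a y t - t) - (slide a y' t' - t')| ≤
      |a| / c * (4 * |t - t'| + 10 * |y - y'|) := by
  set s := slide a y t with hs
  set s' := slide a y' t' with hs'
  set u := s' + (t - t') with hu
  have hdiff : shift a y s - shift a y u =
      a * ((drift 0 t - drift 0 t') - (drift y u - drift y' s')) := by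
    have h := shift_slide (a := a) (t := t) hy
    have h' := shift_slide (a := a) (t := t') hy'
    simp only [shift, ← hs, ← hs'] at h h' ⊢
    linarith
  have hbound : c * |s - u| ≤ |a| * (4 * |t - t'| + 10 * |y - y'|) :=
    calc c * |s - u| ≤ (1 - |a|) * |s - u| := by gcongr; linarith
      _ ≤ |shift a y s - shift a y u| :=
        mul_abs_sub_le_abs_add_mul_sub (abs_drift_sub_drift_le hy) s u
      _ = |a| * |(drift 0 t - drift 0 t') - (drift y u - drift y' s')| := by rw [hdiff, abs_mul]
      _ ≤ |a| * (|t - t'| + (3 * |u - s'| + 10 * |y - y'|)) :=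
        mul_le_mul_of_nonneg_left ((abs_sub _ _).trans (add_le_add
          (abs_drift_sub_drift_le le_rfl t t') (abs_drift_sub_drift_le_add u y s' y')))
          (abs_nonneg a)
      _ = |a| * (4 * |t - t'| + 10 * |y - y'|) := by rw [hu, add_sub_cancel_left]; ring
  rw [div_mul_eq_mul_div, le_div_iff₀ hc, mul_comm, show s - t - (s' - t') = s - u by ring]
  exact hbound

end Slide

section Stretch

variable {a t y : ℝ}

/-- The monotone transport of the density `fun v => 1 + a * kernel t (1 - v)` on `(0, 1)` to
Lebesgue measure. -/
noncomputable def squeeze (a t v : ℝ) : ℝ := v - a * flux t (1 - v)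

/-- The ratio `squeeze a t v / v` at `v = 1 - y`. The denominator is kept away from zero, which
changes nothing because `flux t y` vanishes for `y ≥ 1 / 2`. -/
noncomputable def stretchRatio (a t y : ℝ) : ℝ := 1 - a * flux t y / max (1 - y) (1 / 2)

/-- The factor by which a radius in dimension `n` is scaled when its `n`-th power is transported
by `squeeze`. -/
noncomputable def stretch (n : ℕ) (a t y : ℝ) : ℝ := stretchRatio a t y ^ (n : ℝ)⁻¹

theorem continuous_squeeze (a t : ℝ) : Continuous (squeeze a t) := by
  have := continuous_flux t
  unfold squeeze
  fun_prop

theorem strictMono_squeeze (ha : |a| < 1) (t : ℝ) : StrictMono (squeeze a t) := by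
  have hflux (u v : ℝ) : |flux t (1 - u) - flux t (1 - v)| ≤ |u - v| := by
    simpa [abs_sub_comm v u] using abs_flux_sub_flux_le t (1 - u) t (1 - v)
  have hneg := strictMono_add_mul (a := -a) hflux (by rwa [abs_neg])
  simp only [neg_mul, ← sub_eq_add_neg] at hneg
  exact hneg

theorem measurePreserving_squeeze (ha : |a| < 1) (t : ℝ) :
    MeasurePreserving (squeeze a t)
      ((volume.restrict (Set.Ioo 0 1)).withDensity
        fun v => ENNReal.ofReal (1 + a * kernel t (1 - v)))
      (volume.restrict (Set.Ioo 0 1)) := by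
  have himage : squeeze a t '' Set.Ioo 0 1 = Set.Ioo 0 1 :=
    image_Ioo_of_strictMono zero_le_one (strictMono_squeeze ha t) (continuous_squeeze a t)
      (by rw [squeeze, flux_eq_zero (Or.inr (by linarith [tent_le_half t])), mul_zero, sub_zero])
      (by rw [squeeze, flux_eq_zero (Or.inl (by simp)), mul_zero, sub_zero])
  have hderiv : ∀ v ∈ Set.Ioo (0 : ℝ) 1, v ∉ ({1 - tent t, 1 - tent t / 2} : Set ℝ) →
      HasDerivAt (squeeze a t) (1 + a * kernel t (1 - v)) v := by
    intro v hv hvT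
    rw [Set.mem_insert_iff, Set.mem_singleton_iff, not_or] at hvT
    have hflux := hasDerivAt_flux (t := t) (y := 1 - v) (by linarith [hv.2])
      (fun h => hvT.1 (by linarith)) (fun h => hvT.2 (by linarith))
    exact ((hasDerivAt_id' v).sub ((HasDerivAt.comp v hflux
      ((hasDerivAt_id' v).const_sub 1)).const_mul a)).congr_deriv (by ring)
  have hkernel : Measurable fun v => kernel t (1 - v) :=
    measurable_kernel.comp (measurable_const.prodMk (measurable_const.sub measurable_id))
  have h := measurePreserving_of_monotoneOn measurableSet_Ioo (Set.toFinite _).countable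
    (continuous_squeeze a t).measurable (by fun_prop)
    ((strictMono_squeeze ha t).monotone.monotoneOn _) hderiv
  rwa [himage] at h

theorem mul_stretchRatio (a t v : ℝ) : v * stretchRatio a t (1 - v) = squeeze a t v := by
  rw [stretchRatio, squeeze, sub_sub_cancel]
  rcases le_or_gt (1 / 2) v with hv | hv
  · rw [max_eq_left hv]
    have : v ≠ 0 := by linarith
    field_simp
  · rw [flux_eq_zero (Or.inr (by linarith [tent_le_half t]))]
    simp

theorem abs_stretchRatio_sub_one_le (a t y : ℝ) : |stretchRatio a t y - 1| ≤ |a| / 2 := by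
  have hmax : (1 : ℝ) / 2 ≤ max (1 - y) (1 / 2) := le_max_right _ _
  rw [stretchRatio, sub_sub_cancel_left, abs_neg, abs_div, abs_mul,
    abs_of_pos (a := max _ _) (by linarith), div_le_iff₀ (by linarith)]
  calc |a| * |flux t y| ≤ |a| * (1 / 4) :=
        mul_le_mul_of_nonneg_left (abs_flux_le t y) (abs_nonneg a)
    _ = |a| / 2 * (1 / 2) := by ring
    _ ≤ |a| / 2 * max (1 - y) (1 / 2) := by gcongr

theorem half_le_stretchRatio (ha : |a| ≤ 1) (t y : ℝ) : 1 / 2 ≤ stretchRatio a t y := by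
  linarith [(abs_le.1 (abs_stretchRatio_sub_one_le a t y)).1]

theorem abs_stretchRatio_sub_stretchRatio_le (a t y t' y' : ℝ) :
    |stretchRatio a t y - stretchRatio a t' y'| ≤ |a| * (2 * |t - t'| + 3 * |y - y'|) := by
  set m := max (1 - y) (1 / 2) with hm
  set m' := max (1 - y') (1 / 2) with hm'
  have hmhalf : 1 / 2 ≤ m := le_max_right _ _
  have hm'half : 1 / 2 ≤ m' := le_max_right _ _
  have hmsub : |m' - m| ≤ |y - y'| :=
    (abs_max_sub_max_le_abs (1 - y') (1 - y) (1 / 2)).trans_eq (by rw [sub_sub_sub_cancel_left])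
  have hinv : m⁻¹ ≤ 2 := (inv_le_comm₀ (by linarith) (by norm_num)).2 (by linarith)
  have hinv' : m'⁻¹ ≤ 2 := (inv_le_comm₀ (by linarith) (by norm_num)).2 (by linarith)
  have hsplit : stretchRatio a t y - stretchRatio a t' y' =
      -(a * ((flux t y - flux t' y') * m⁻¹ + flux t' y' * (m' - m) * m⁻¹ * m'⁻¹)) := by
    rw [stretchRatio, stretchRatio, ← hm, ← hm']
    have : m ≠ 0 := by linarith
    have : m' ≠ 0 := by linarith
    field_simp
    ring
  have hm0 : 0 ≤ m⁻¹ := inv_nonneg.2 (by linarith)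
  have hm'0 : 0 ≤ m'⁻¹ := inv_nonneg.2 (by linarith)
  rw [hsplit, abs_neg, abs_mul]
  refine mul_le_mul_of_nonneg_left ((abs_add_le _ _).trans ?_) (abs_nonneg a)
  rw [abs_mul, abs_mul, abs_mul, abs_mul, abs_of_nonneg hm0, abs_of_nonneg hm'0]
  calc |flux t y - flux t' y'| * m⁻¹ + |flux t' y'| * |m' - m| * m⁻¹ * m'⁻¹
      ≤ (|t - t'| + |y - y'|) * 2 + 1 / 4 * |y - y'| * 2 * 2 := by
        refine add_le_add (mul_le_mul (abs_flux_sub_flux_le ..) hinv hm0 (by positivity)) ?_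
        exact mul_le_mul (mul_le_mul (mul_le_mul (abs_flux_le _ _) hmsub (abs_nonneg _)
          (by norm_num)) hinv hm0 (by positivity)) hinv' hm'0 (by positivity)
    _ = 2 * |t - t'| + 3 * |y - y'| := by ring

theorem abs_stretch_sub_rpow_le (n : ℕ) (ha : |a| ≤ 1) (t y : ℝ) {b : ℝ} (hb : 1 / 2 ≤ b) :
    |stretch n a t y - b ^ (n : ℝ)⁻¹| ≤ 2 * |stretchRatio a t y - b| := by
  have hhalf : (1 / 2 : ℝ) ^ ((n : ℝ)⁻¹ - 1) ≤ 2 :=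
    calc (1 / 2 : ℝ) ^ ((n : ℝ)⁻¹ - 1) ≤ (1 / 2) ^ (-1 : ℝ) :=
          Real.rpow_le_rpow_of_exponent_ge (by norm_num) (by norm_num)
            (by linarith [inv_nonneg.2 (Nat.cast_nonneg (α := ℝ) n)])
      _ = 2 := by rw [Real.rpow_neg_one]; norm_num
  exact (abs_rpow_sub_rpow_le (by positivity) (Nat.cast_inv_le_one n) (by norm_num)
    (half_le_stretchRatio ha t y) hb).trans (mul_le_mul_of_nonneg_right hhalf (abs_nonneg _))

theorem abs_stretch_sub_stretch_le (n : ℕ) (ha : |a| ≤ 1) (t y t' y' : ℝ) :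
    |stretch n a t y - stretch n a t' y'| ≤ |a| * (4 * |t - t'| + 6 * |y - y'|) := by
  have h := abs_stretch_sub_rpow_le n ha t y (half_le_stretchRatio ha t' y')
  have h' := abs_stretchRatio_sub_stretchRatio_le a t y t' y'
  exact h.trans (by linarith)

theorem abs_stretch_sub_one_le (n : ℕ) (ha : |a| ≤ 1) (t y : ℝ) :
    |stretch n a t y - 1| ≤ |a| := by
  have h := abs_stretch_sub_rpow_le n ha t y (b := 1) (by norm_num)
  rw [Real.one_rpow] at h
  linarith [abs_stretchRatio_sub_one_le a t y]

theorem stretch_nonneg (n : ℕ) (ha : |a| ≤ 1) (t y : ℝ) : 0 ≤ stretch n a t y :=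
  Real.rpow_nonneg (by linarith [half_le_stretchRatio ha t y]) _

theorem measurable_stretch (n : ℕ) (a t : ℝ) : Measurable (stretch n a t) := by
  have := (continuous_flux t).measurable
  unfold stretch stretchRatio
  fun_prop

theorem stretch_eq_one (n : ℕ) (a : ℝ) (h : flux t y = 0) : stretch n a t y = 1 := by
  rw [stretch, stretchRatio, h, mul_zero, zero_div, sub_zero, Real.one_rpow]

theorem mul_stretch_pow {n : ℕ} (hn : n ≠ 0) (ha : |a| ≤ 1) (t v : ℝ) :
    v * stretch n a t (1 - v) ^ n = squeeze a t v := by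
  rw [stretch, Real.rpow_inv_natCast_pow _ hn, mul_stretchRatio]
  linarith [half_le_stretchRatio ha t (1 - v)]

end Stretch

section Box

theorem restrict_ball_prod {E : Type*} [SeminormedAddCommGroup E] [MeasurableSpace E]
    (μ : Measure E) [SFinite μ] :
    (volume.prod μ).restrict (Metric.ball (0 : ℝ × E) 1) =
      (volume.restrict (Set.Ioo (-1) 1)).prod (μ.restrict (Metric.ball 0 1)) := by
  rw [Measure.prod_restrict, ← Prod.mk_zero_zero, ← ball_prod_same, Real.ball_eq_Ioo, zero_sub,
    zero_add]

variable {E : Type*} [NormedAddCommGroup E] [NormedSpace ℝ E] {a c : ℝ}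

/-- The normalized volume between the sphere through `x` and the unit sphere, zero outside the unit
ball. The exponent is at least one so that the single point of a trivial space has depth one. -/
noncomputable def depth (x : E) : ℝ := 1 - min ‖x‖ 1 ^ max (Module.finrank ℝ E) 1

/-- Slides along the axis `ℝ`, spreading the jump of the density there and leaving a density that
depends on the height and the depth only. -/
noncomputable def slideMap (a : ℝ) (p : ℝ × E) : ℝ × E := (slide a (depth p.2) p.1, p.2)

/-- Stretches each slice radially, transporting the density left by `slideMap` to a constant. -/
noncomputable def stretchMap (a : ℝ) (p : ℝ × E) : ℝ × E :=
  (p.1, stretch (Module.finrank ℝ E) a p.1 (depth p.2) • p.2)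

theorem depth_nonneg (x : E) : 0 ≤ depth x :=
  sub_nonneg.2 (pow_le_one₀ (by positivity) (min_le_right _ _))

theorem depth_eq_zero {x : E} (hx : 1 ≤ ‖x‖) : depth x = 0 := by
  rw [depth, min_eq_right hx, one_pow, sub_self]

theorem depth_of_subsingleton [Subsingleton E] (x : E) : depth x = 1 := by
  simp [depth, Subsingleton.elim x 0]

theorem continuous_depth : Continuous (depth : E → ℝ) := by
  unfold depth
  fun_prop

theorem abs_depth_sub_depth_le (x y : E) :
    |depth x - depth y| ≤ (max (Module.finrank ℝ E) 1 : ℕ) * ‖x - y‖ := by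
  set N := max (Module.finrank ℝ E) 1
  have hmin (z : E) : |min ‖z‖ 1| ≤ 1 := by
    rw [abs_of_nonneg (by positivity)]
    exact min_le_right _ _
  have hnorm : |min ‖x‖ 1 - min ‖y‖ 1| ≤ ‖x - y‖ := by
    refine (abs_min_sub_min_le_max _ _ _ _).trans (max_le (abs_norm_sub_norm_le x y) ?_)
    simp
  calc |depth x - depth y| = |min ‖x‖ 1 ^ N - min ‖y‖ 1 ^ N| := by
        rw [depth, depth, sub_sub_sub_cancel_left, abs_sub_comm]
    _ ≤ |min ‖x‖ 1 - min ‖y‖ 1| * N * max |min ‖x‖ 1| |min ‖y‖ 1| ^ (N - 1) :=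
        abs_pow_sub_pow_le _ _ _
    _ ≤ ‖x - y‖ * N * 1 := by
        gcongr ?_ * _ * ?_
        exact pow_le_one₀ (le_max_of_le_left (abs_nonneg _)) (max_le (hmin x) (hmin y))
    _ = N * ‖x - y‖ := by ring

theorem slideMap_of_one_le_norm (ha : |a| < 1) {p : ℝ × E} (hp : 1 ≤ ‖p‖) :
    slideMap a p = p := by
  refine Prod.ext ?_ rfl
  rcases le_max_iff.1 (Prod.norm_def p ▸ hp) with h | h
  · exact slide_of_one_le_abs ha (depth_nonneg _) h
  · rw [slideMap, depth_eq_zero h, slide_zero ha]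

theorem stretchMap_of_one_le_norm (a : ℝ) {p : ℝ × E} (hp : 1 ≤ ‖p‖) : stretchMap a p = p := by
  refine Prod.ext rfl ?_
  have hflux : flux p.1 (depth p.2) = 0 := by
    refine flux_eq_zero ((le_max_iff.1 (Prod.norm_def p ▸ hp)).symm.imp ?_ ?_)
    · exact fun h => (depth_eq_zero h).le
    · exact fun h => (min_le_right _ _).trans ((sub_nonpos.2 h).trans (depth_nonneg _))
  rw [stretchMap, stretch_eq_one _ _ hflux, one_smul]

theorem isNearId_slideMap (hc : 0 < c) (ha : |a| ≤ 1 - c) :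
    IsNearId ((4 + 10 * (max (Module.finrank ℝ E) 1 : ℕ)) / c * |a|)
      (slideMap a : ℝ × E → ℝ × E) := by
  intro p q
  set N : ℝ := ((max (Module.finrank ℝ E) 1 : ℕ) : ℝ)
  have hslide := abs_slide_sub_sub_slide_sub_le hc ha (depth_nonneg p.2) (depth_nonneg q.2) p.1 q.1
  have hfst : |p.1 - q.1| ≤ ‖p - q‖ := norm_fst_le (p - q)
  have hdepth : |depth p.2 - depth q.2| ≤ N * ‖p - q‖ :=
    (abs_depth_sub_depth_le _ _).trans
      (mul_le_mul_of_nonneg_left (norm_snd_le (p - q)) (Nat.cast_nonneg _))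
  calc ‖(slideMap a p - p) - (slideMap a q - q)‖
      = |(slide a (depth p.2) p.1 - p.1) - (slide a (depth q.2) q.1 - q.1)| := by
        simp [Prod.norm_def, slideMap]
    _ ≤ |a| / c * (4 * ‖p - q‖ + 10 * (N * ‖p - q‖)) :=
        hslide.trans (mul_le_mul_of_nonneg_left (by linarith) (by positivity))
    _ = (4 + 10 * N) / c * |a| * ‖p - q‖ := by ring

theorem norm_smul_sub_smul_le {K M : ℝ} {r s : ℝ} {x y : E} (hx : ‖x‖ ≤ 1) (hs : |s| ≤ M)
    (hrs : |r - s| ≤ K) : ‖r • x - s • y‖ ≤ K + M * ‖x - y‖ :=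
  calc ‖r • x - s • y‖ = ‖(r - s) • x + s • (x - y)‖ := by
        rw [sub_smul, smul_sub, sub_add_sub_cancel]
    _ ≤ |r - s| * ‖x‖ + |s| * ‖x - y‖ := by
        simpa only [norm_smul, Real.norm_eq_abs] using norm_add_le ((r - s) • x) (s • (x - y))
    _ ≤ K * 1 + M * ‖x - y‖ :=
        add_le_add (mul_le_mul hrs hx (norm_nonneg _) ((abs_nonneg _).trans hrs))
          (mul_le_mul_of_nonneg_right hs (norm_nonneg _))
    _ = K + M * ‖x - y‖ := by rw [mul_one]

theorem isNearId_stretchMap (ha : |a| ≤ 1) :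
    IsNearId ((5 + 6 * (max (Module.finrank ℝ E) 1 : ℕ)) * |a|)
      (stretchMap a : ℝ × E → ℝ × E) := by
  intro p q
  wlog hpq : ‖p.2‖ ≤ ‖q.2‖ generalizing p q
  · rw [norm_sub_rev, norm_sub_rev p]
    exact this q p (le_of_not_ge hpq)
  rcases le_or_gt 1 ‖p.2‖ with hp | hp
  · rw [stretchMap_of_one_le_norm a (hp.trans (norm_snd_le p)),
      stretchMap_of_one_le_norm a ((hp.trans hpq).trans (norm_snd_le q))]
    simp only [sub_self, norm_zero]
    positivity
  set n := Module.finrank ℝ E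
  set N : ℝ := ((max n 1 : ℕ) : ℝ)
  have hfst : |p.1 - q.1| ≤ ‖p - q‖ := norm_fst_le (p - q)
  have hsnd : ‖p.2 - q.2‖ ≤ ‖p - q‖ := norm_snd_le (p - q)
  have hdepth : |depth p.2 - depth q.2| ≤ N * ‖p - q‖ :=
    (abs_depth_sub_depth_le _ _).trans (mul_le_mul_of_nonneg_left hsnd (Nat.cast_nonneg _))
  have hsub : |(stretch n a p.1 (depth p.2) - 1) - (stretch n a q.1 (depth q.2) - 1)| ≤
      |a| * (4 * ‖p - q‖ + 6 * (N * ‖p - q‖)) := by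
    rw [sub_sub_sub_cancel_right]
    exact (abs_stretch_sub_stretch_le n ha _ _ _ _).trans
      (mul_le_mul_of_nonneg_left (by linarith) (abs_nonneg a))
  calc ‖(stretchMap a p - p) - (stretchMap a q - q)‖
      = ‖(stretch n a p.1 (depth p.2) - 1) • p.2 - (stretch n a q.1 (depth q.2) - 1) • q.2‖ := by
        simp [Prod.norm_def, stretchMap, sub_smul, n]
    _ ≤ |a| * (4 * ‖p - q‖ + 6 * (N * ‖p - q‖)) + |a| * ‖p.2 - q.2‖ :=
        norm_smul_sub_smul_le hp.le (abs_stretch_sub_one_le n ha _ _) hsub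
    _ ≤ |a| * (4 * ‖p - q‖ + 6 * (N * ‖p - q‖)) + |a| * ‖p - q‖ := by gcongr
    _ = (5 + 6 * N) * |a| * ‖p - q‖ := by ring

variable [MeasurableSpace E] [BorelSpace E] [FiniteDimensional ℝ E] (μ : Measure E)
  [μ.IsAddHaarMeasure]

theorem measurePreserving_stretch_smul (ha : |a| < 1) (t : ℝ) :
    MeasurePreserving (fun x : E => stretch (Module.finrank ℝ E) a t (depth x) • x)
      ((μ.restrict (Metric.ball 0 1)).withDensity
        fun x => ENNReal.ofReal (1 + a * kernel t (depth x)))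
      (μ.restrict (Metric.ball 0 1)) := by
  rcases subsingleton_or_nontrivial E with hE | hE
  · have hkernel (x : E) : kernel t (depth x) = 0 :=
      kernel_eq_zero (by norm_num [depth_of_subsingleton])
    have hid : (fun x : E => stretch (Module.finrank ℝ E) a t (depth x) • x) = id :=
      funext fun _ => Subsingleton.elim _ _
    simp only [hkernel, mul_zero, add_zero, ENNReal.ofReal_one, hid]
    exact (withDensity_one (μ := μ.restrict (Metric.ball 0 1))).symm ▸ MeasurePreserving.id _
  set n := Module.finrank ℝ E with hn
  have hn1 : 1 ≤ n := Module.finrank_pos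
  have hdepth : ∀ᵐ x ∂μ.restrict (Metric.ball (0 : E) 1), depth x = 1 - ‖x‖ ^ n := by
    filter_upwards [ae_restrict_mem measurableSet_ball] with x hx
    rw [depth, ← hn, max_eq_left hn1, min_eq_left (mem_ball_zero_iff.1 hx).le]
  have hkernel : Measurable fun v => kernel t (1 - v) :=
    measurable_kernel.comp (measurable_const.prodMk (measurable_const.sub measurable_id))
  have hstretch : Measurable (stretch n a t) := measurable_stretch n a t
  have hdensity := hdepth.mono fun x hx =>
    congrArg (fun y => ENNReal.ofReal (1 + a * kernel t y)) hx
  have hradial := measurePreserving_radial μ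
    (w := fun v => ENNReal.ofReal (1 + a * kernel t (1 - v))) (Λ := fun v => stretch n a t (1 - v))
    (by fun_prop) (by fun_prop) (measurePreserving_squeeze ha t)
    (fun v _ => stretch_nonneg n ha.le t (1 - v))
    (fun v _ => mul_stretch_pow (by lia) ha.le t v)
  rw [withDensity_congr_ae hdensity]
  have := continuous_depth (E := E)
  refine hradial.congr (by fun_prop) ?_
  refine (withDensity_absolutelyContinuous _ _).ae_le (hdepth.mono fun x hx => ?_)
  simp only [hx, ← hn]

theorem measurePreserving_stretchMap (ha : |a| < 1) :
    MeasurePreserving (stretchMap a)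
      (((volume.prod μ).restrict (Metric.ball (0 : ℝ × E) 1)).withDensity
        fun p => ENNReal.ofReal (1 + a * kernel p.1 (depth p.2)))
      ((volume.prod μ).restrict (Metric.ball 0 1)) := by
  have hcont := (isNearId_stretchMap (E := E) ha.le).continuous
  have hdensity : Measurable fun p : ℝ × E => kernel p.1 (depth p.2) :=
    measurable_kernel.comp (measurable_fst.prodMk (continuous_depth.measurable.comp measurable_snd))
  have h := measurePreserving_prod_snd (μ := volume.restrict (Set.Ioo (-1) 1))
    (ν := μ.restrict (Metric.ball 0 1)) (ν' := μ.restrict (Metric.ball 0 1)) (w' := 1)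
    (g := fun t (x : E) => stretch (Module.finrank ℝ E) a t (depth x) • x)
    (measurable_snd.comp hcont.measurable)
    (w := fun p => ENNReal.ofReal (1 + a * kernel p.1 (depth p.2))) (by fun_prop)
    measurable_one
    (Filter.Eventually.of_forall fun t =>
      (withDensity_one (μ := μ.restrict (Metric.ball 0 1))).symm ▸
        measurePreserving_stretch_smul μ ha t)
  rw [withDensity_one] at h
  rw [restrict_ball_prod]
  exact h

theorem measurePreserving_slideMap (hc : 0 < c) (ha : |a| ≤ 1 - c) :
    MeasurePreserving (slideMap a)
      (((volume.prod μ).restrict (Metric.ball (0 : ℝ × E) 1)).withDensity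
        fun p => ENNReal.ofReal (1 + a * sgn p.1))
      (((volume.prod μ).restrict (Metric.ball 0 1)).withDensity
        fun p => ENNReal.ofReal (1 + a * kernel p.1 (depth p.2))) := by
  have hcont := (isNearId_slideMap (E := E) hc ha).continuous
  have hsgn := measurable_sgn
  have hdensity : Measurable fun p : ℝ × E => kernel p.1 (depth p.2) :=
    measurable_kernel.comp (measurable_fst.prodMk (continuous_depth.measurable.comp measurable_snd))
  rw [restrict_ball_prod]
  exact measurePreserving_prod_fst (g := fun x t => slide a (depth x) t)
    (measurable_fst.comp (hcont.measurable.comp measurable_swap)) (by fun_prop) (by fun_prop)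
    (Filter.Eventually.of_forall fun x =>
      measurePreserving_slide (by linarith) (depth_nonneg x))

theorem exists_isNearId_measurePreserving_ball_prod (hc : 0 < c) :
    ∃ C, 0 ≤ C ∧ ∀ a, |a| ≤ 1 - c → ∃ f : ℝ × E → ℝ × E,
      IsNearId (C * |a|) f ∧ (∀ p, 1 ≤ ‖p‖ → f p = p) ∧
      MeasurePreserving f
        (((volume.prod μ).restrict (Metric.ball 0 1)).withDensity
          fun p => ENNReal.ofReal (1 + a * sgn p.1))
        ((volume.prod μ).restrict (Metric.ball 0 1)) := by
  set N : ℝ := ((max (Module.finrank ℝ E) 1 : ℕ) : ℝ)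
  set L₁ : ℝ := (4 + 10 * N) / c
  set L₂ : ℝ := 5 + 6 * N
  have : 0 ≤ L₁ := by positivity
  have : 0 ≤ L₂ := by positivity
  refine ⟨L₂ * (1 + L₁) + L₁, by positivity, fun a ha => ⟨stretchMap a ∘ slideMap a, ?_, ?_, ?_⟩⟩
  · have hcomp := (isNearId_stretchMap (E := E) (a := a) (by linarith)).comp
      (isNearId_slideMap hc ha) (by positivity)
    refine hcomp.mono ?_
    calc L₂ * |a| * (1 + L₁ * |a|) + L₁ * |a| ≤ L₂ * |a| * (1 + L₁ * 1) + L₁ * |a| := by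
          gcongr; linarith
      _ = (L₂ * (1 + L₁) + L₁) * |a| := by ring
  · intro p hp
    rw [Function.comp_apply, slideMap_of_one_le_norm (by linarith) hp,
      stretchMap_of_one_le_norm a hp]
  · exact (measurePreserving_stretchMap μ (by linarith)).comp (measurePreserving_slideMap μ hc ha)

end Box

section CoordinateBox

variable {n : ℕ}

theorem norm_piFinSuccAbove (i : Fin (n + 1)) (x : Fin (n + 1) → ℝ) :
    ‖MeasurableEquiv.piFinSuccAbove (fun _ : Fin (n + 1) => ℝ) i x‖ = ‖x‖ := by
  refine le_antisymm (max_le (norm_le_pi_norm x i) ?_) ?_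
  · exact (pi_norm_le_iff_of_nonneg (norm_nonneg x)).2 fun j => norm_le_pi_norm x _
  · refine (pi_norm_le_iff_of_nonneg (norm_nonneg _)).2 fun j => ?_
    set p := MeasurableEquiv.piFinSuccAbove (fun _ : Fin (n + 1) => ℝ) i x
    rcases Fin.eq_self_or_eq_succAbove i j with rfl | ⟨k, rfl⟩
    · exact norm_fst_le p
    · exact (norm_le_pi_norm p.2 k).trans (norm_snd_le p)

theorem exists_isNearId_measurePreserving_ball_pi (n : ℕ) {c : ℝ} (hc : 0 < c) :
    ∃ C, 0 ≤ C ∧ ∀ (i : Fin (n + 1)) (a : ℝ), |a| ≤ 1 - c →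
      ∃ f : (Fin (n + 1) → ℝ) → Fin (n + 1) → ℝ,
        IsNearId (C * |a|) f ∧ (∀ x, 1 ≤ ‖x‖ → f x = x) ∧
        MeasurePreserving f
          ((volume.restrict (Metric.ball 0 1)).withDensity
            fun x => ENNReal.ofReal (1 + a * sgn (x i)))
          (volume.restrict (Metric.ball 0 1)) := by
  obtain ⟨C, hC, hbox⟩ :=
    exists_isNearId_measurePreserving_ball_prod (volume : Measure (Fin n → ℝ)) hc
  refine ⟨C, hC, fun i a ha => ?_⟩
  obtain ⟨f, hf, hid, hmp⟩ := hbox a ha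
  set e := MeasurableEquiv.piFinSuccAbove (fun _ : Fin (n + 1) => ℝ) i
  have hnorm (x) : ‖e x‖ = ‖x‖ := norm_piFinSuccAbove i x
  have hsub (x y) : e (x - y) = e x - e y := rfl
  refine ⟨e.symm ∘ f ∘ e, fun x y => ?_, fun x hx => ?_, ?_⟩
  · rw [← hnorm, ← hnorm (x - y)]
    simp only [hsub, Function.comp_apply, e.apply_symm_apply]
    exact hf (e x) (e y)
  · rw [Function.comp_apply, Function.comp_apply, hid _ (by rwa [hnorm]), e.symm_apply_apply]
  · have hball : e ⁻¹' Metric.ball 0 1 = Metric.ball 0 1 := by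
      ext x; simp [hnorm]
    have he : MeasurePreserving e (volume.restrict (Metric.ball 0 1))
        ((1 : ENNReal) • volume.restrict (Metric.ball 0 1)) := by
      rw [one_smul, ← hball]
      exact (volume_preserving_piFinSuccAbove (fun _ => ℝ) i).restrict_preimage measurableSet_ball
    have hsgn := measurable_sgn
    have h := measurePreserving_withDensity_conj e he (w' := 1)
      (w := fun p => ENNReal.ofReal (1 + a * sgn p.1)) (by fun_prop) measurable_one
      (by rw [withDensity_one]; exact hmp)
    simp only [Pi.one_apply, ← Pi.one_def, withDensity_one] at h
    exact h

end CoordinateBox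

section Cells

variable {ι : Type*} {s : ι → ℕ} {p : ι → ℤ} {x : ι → ℝ}

/-- The index of the box containing `x` in the grid of boxes
`∏ k, ((p k - 1) / 2 ^ s k, p k / 2 ^ s k]`. -/
noncomputable def cell (s : ι → ℕ) (x : ι → ℝ) : ι → ℤ := fun k => ⌈(2 : ℝ) ^ s k * x k⌉

/-- The affine coordinates identifying the box of index `p` with the unit ball of the sup norm. -/
noncomputable def cellChart (s : ι → ℕ) (p : ι → ℤ) : (ι → ℝ) ≃ᵐ (ι → ℝ) where
  toFun x k := 2 ^ (s k + 1) * x k + (1 - 2 * p k)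
  invFun y k := (y k - (1 - 2 * p k)) / 2 ^ (s k + 1)
  left_inv x := by funext k; field_simp; ring
  right_inv y := by funext k; field_simp; ring
  measurable_toFun := by
    change Measurable fun (x : ι → ℝ) k => (2 : ℝ) ^ (s k + 1) * x k + (1 - 2 * p k)
    fun_prop
  measurable_invFun := by
    change Measurable fun (y : ι → ℝ) k => (y k - (1 - 2 * p k)) / 2 ^ (s k + 1)
    fun_prop

theorem cellChart_apply (s : ι → ℕ) (p : ι → ℤ) (x : ι → ℝ) (k : ι) :
    cellChart s p x k = 2 ^ (s k + 1) * x k + (1 - 2 * p k) := rfl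

theorem cellChart_symm_apply (s : ι → ℕ) (p : ι → ℤ) (y : ι → ℝ) (k : ι) :
    (cellChart s p).symm y k = (y k - (1 - 2 * p k)) / 2 ^ (s k + 1) := rfl

theorem measurable_cell (s : ι → ℕ) : Measurable (cell s) := by
  change Measurable fun (x : ι → ℝ) k => ⌈(2 : ℝ) ^ s k * x k⌉
  fun_prop

theorem cell_eq_iff :
    cell s x = p ↔ ∀ k, -1 < cellChart s p x k ∧ cellChart s p x k ≤ 1 := by
  simp only [funext_iff, cell, Int.ceil_eq_iff, cellChart_apply, pow_succ]
  refine forall_congr' fun k => and_congr ?_ ?_ <;> constructor <;> intro h <;> linarith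

theorem mem_pi_Ioc_iff_cell :
    x ∈ Set.univ.pi (fun _ => Set.Ioc 0 1) ↔ ∀ k, 0 < cell s x k ∧ cell s x k ≤ 2 ^ s k := by
  refine Set.mem_univ_pi.trans (forall_congr' fun k => and_congr ?_ ?_)
  · rw [cell, Int.ceil_pos, mul_pos_iff_of_pos_left (by positivity)]
  · rw [cell, Int.ceil_le]
    push_cast
    rw [mul_le_iff_le_one_right (by positivity)]

variable [Fintype ι]

theorem norm_cellChart_lt_one_iff :
    ‖cellChart s p x‖ < 1 ↔ ∀ k, -1 < cellChart s p x k ∧ cellChart s p x k < 1 := by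
  simp only [pi_norm_lt_iff one_pos, Real.norm_eq_abs, abs_lt]

theorem one_le_norm_cellChart (h : cell s x ≠ p) : 1 ≤ ‖cellChart s p x‖ := by
  refine not_lt.1 fun hlt => h (cell_eq_iff.2 fun k => ?_)
  exact (norm_cellChart_lt_one_iff.1 hlt k).imp_right le_of_lt

theorem exists_measurePreserving_cellChart (s : ι → ℕ) (p : ι → ℤ) :
    ∃ κ : ENNReal, MeasurePreserving (cellChart s p) volume (κ • volume) := by
  classical
  set D : Matrix ι ι ℝ := Matrix.diagonal fun k => 2 ^ (s k + 1)
  have hdet : D.det ≠ 0 := by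
    rw [Matrix.det_diagonal]; positivity
  have hlin : MeasurePreserving (Matrix.toLin' D) volume
      (ENNReal.ofReal |D.det⁻¹| • volume) :=
    ⟨(LinearMap.continuous_on_pi _).measurable, Real.map_matrix_volume_pi_eq_smul_volume_pi hdet⟩
  have htrans := (measurePreserving_add_right volume fun k => 1 - 2 * (p k : ℝ)).smul_measure
    (ENNReal.ofReal |D.det⁻¹|)
  refine ⟨ENNReal.ofReal |D.det⁻¹|, ?_⟩
  convert htrans.comp hlin using 1
  funext x k
  simp [cellChart_apply, D, Matrix.mulVec_diagonal]

theorem cell_preimage_ae_eq (s : ι → ℕ) (p : ι → ℤ) :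
    cell s ⁻¹' {p} =ᵐ[volume] cellChart s p ⁻¹' Metric.ball 0 1 := by
  obtain ⟨κ, hκ⟩ := exists_measurePreserving_cellChart s p
  have hne : ∀ᵐ y ∂κ • (volume : Measure (ι → ℝ)), ∀ k, y k ≠ 1 :=
    Measure.ae_smul_measure (ae_all_iff.2 fun k =>
      Measure.ae_eval_ne (μ := fun _ : ι => (volume : Measure ℝ)) k 1) κ
  filter_upwards [hκ.quasiMeasurePreserving.ae hne] with x hx
  refine propext (cell_eq_iff.trans (Iff.trans ?_
    (mem_ball_zero_iff.trans norm_cellChart_lt_one_iff).symm))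
  exact forall_congr' fun k => and_congr_right fun _ => ⟨fun h => h.lt_of_ne (hx k), le_of_lt⟩

theorem exists_measurePreserving_cellChart_restrict (s : ι → ℕ) (p : ι → ℤ) :
    ∃ κ : ENNReal, MeasurePreserving (cellChart s p) (volume.restrict (cell s ⁻¹' {p}))
      (κ • volume.restrict (Metric.ball 0 1)) := by
  obtain ⟨κ, hκ⟩ := exists_measurePreserving_cellChart s p
  refine ⟨κ, ?_⟩
  rw [Measure.restrict_congr_set (cell_preimage_ae_eq s p), ← Measure.restrict_smul]
  exact hκ.restrict_preimage measurableSet_ball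

theorem IsNearId.cellChart_conj {L : ℝ} {f : (ι → ℝ) → ι → ℝ} (hL : 0 ≤ L) (hf : IsNearId L f)
    (hs : ∀ j k, s j ≤ s k + 1) (p : ι → ℤ) :
    IsNearId (2 * L) ((cellChart s p).symm ∘ f ∘ cellChart s p) := by
  intro x y
  set e := cellChart s p
  have hsub (k) : ‖e x - e y‖ ≤ 2 * 2 ^ (s k + 1) * ‖x - y‖ := by
    refine (pi_norm_le_iff_of_nonneg (by positivity)).2 fun j => ?_
    have hj : (e x - e y) j = 2 ^ (s j + 1) * (x - y) j := by
      simp only [e, Pi.sub_apply, cellChart_apply]; ring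
    rw [hj, norm_mul, Real.norm_of_nonneg (by positivity), ← pow_succ']
    gcongr
    exacts [one_le_two, hs j k, norm_le_pi_norm _ j]
  refine (pi_norm_le_iff_of_nonneg (by positivity)).2 fun k => ?_
  have hk : ((e.symm (f (e x)) - x) - (e.symm (f (e y)) - y)) k
      = ((f (e x) - e x) - (f (e y) - e y)) k / 2 ^ (s k + 1) := by
    simp only [e, Pi.sub_apply, cellChart_apply, cellChart_symm_apply]; field_simp; ring
  simp only [Function.comp_apply]
  rw [hk, norm_div, Real.norm_of_nonneg (r := 2 ^ (s k + 1)) (by positivity),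
    div_le_iff₀ (by positivity)]
  calc ‖((f (e x) - e x) - (f (e y) - e y)) k‖ ≤ L * ‖e x - e y‖ :=
        (norm_le_pi_norm _ k).trans (hf _ _)
    _ ≤ L * (2 * 2 ^ (s k + 1) * ‖x - y‖) := by gcongr; exact hsub k
    _ = 2 * L * ‖x - y‖ * 2 ^ (s k + 1) := by ring

/-- Lebesgue measure on the half-open unit cube, weighted by the density taking the value `q p` on
the grid box of index `p`. -/
noncomputable def cellMeasure (s : ι → ℕ) (q : (ι → ℤ) → ℝ) : Measure (ι → ℝ) :=
  (volume.restrict (Set.univ.pi fun _ => Set.Ioc 0 1)).withDensity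
    fun x => ENNReal.ofReal (q (cell s x))

theorem measurePreserving_cellMeasure {q q' : (ι → ℤ) → ℝ} {s' : ι → ℕ}
    {f : (ι → ℝ) → ι → ℝ} (hf : Measurable f)
    (h : ∀ p, MeasurePreserving f
      ((volume.restrict (cell s ⁻¹' {p})).withDensity fun x => ENNReal.ofReal (q (cell s' x)))
      ((volume.restrict (cell s ⁻¹' {p})).withDensity fun x => ENNReal.ofReal (q' (cell s x)))) :
    MeasurePreserving f (cellMeasure s' q) (cellMeasure s q') := by
  let P := {p : ι → ℤ // ∀ k, 0 < p k ∧ p k ≤ 2 ^ s k}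
  have hcube : (Set.univ.pi fun _ => Set.Ioc (0 : ℝ) 1) = ⋃ p : P, cell s ⁻¹' {p.1} := by
    ext x
    simp only [mem_pi_Ioc_iff_cell (s := s), P, Set.mem_iUnion, Set.mem_preimage,
      Set.mem_singleton_iff, Subtype.exists, exists_prop, exists_eq_right']
  unfold cellMeasure
  rw [hcube]
  refine measurePreserving_withDensity_iUnion
    (fun p => measurable_cell s (measurableSet_singleton _)) (fun p p' hne => ?_) hf fun p => h p
  exact Disjoint.preimage _ (Set.disjoint_singleton.2 fun h => hne (Subtype.ext h))

end Cells

section Averaging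

variable {ι : Type*} [DecidableEq ι] {i : ι} {q : (ι → ℤ) → ℝ} {p : ι → ℤ} {s : ι → ℕ}
  {m M θ : ℝ}

/-- The average of `q` over the two halves of the box of index `p` cut perpendicularly to the
`i`-th axis, where `q` is indexed by the refined grid. -/
noncomputable def average (i : ι) (q : (ι → ℤ) → ℝ) (p : ι → ℤ) : ℝ :=
  (q (Function.update p i (2 * p i - 1)) + q (Function.update p i (2 * p i))) / 2

/-- The relative deviation of `q` from its average over the two halves of the box of index `p`. -/
noncomputable def contrast (i : ι) (q : (ι → ℤ) → ℝ) (p : ι → ℤ) : ℝ :=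
  (q (Function.update p i (2 * p i)) - q (Function.update p i (2 * p i - 1))) /
    (q (Function.update p i (2 * p i)) + q (Function.update p i (2 * p i - 1)))

theorem average_mem_Icc (hq : ∀ p, q p ∈ Set.Icc m M) (p : ι → ℤ) :
    average i q p ∈ Set.Icc m M := by
  obtain ⟨hm, hM⟩ := hq (Function.update p i (2 * p i - 1))
  obtain ⟨hm', hM'⟩ := hq (Function.update p i (2 * p i))
  constructor <;> unfold average <;> linarith

theorem average_mul_one_add_contrast_mul_sgn (hq : ∀ p, 0 < q p) (t : ℝ) :
    average i q p * (1 + contrast i q p * sgn t) =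
      q (Function.update p i (if 0 < t then 2 * p i else 2 * p i - 1)) := by
  have hu := hq (Function.update p i (2 * p i))
  have hv := hq (Function.update p i (2 * p i - 1))
  unfold average contrast sgn
  split_ifs <;> field_simp <;> ring

theorem abs_contrast_le_one_sub_sq (hθ : 0 < θ) (hq : ∀ p, q p ∈ Set.Icc θ (1 / θ)) :
    |contrast i q p| ≤ 1 - θ ^ 2 := by
  obtain ⟨hu, hu'⟩ := hq (Function.update p i (2 * p i))
  obtain ⟨hv, hv'⟩ := hq (Function.update p i (2 * p i - 1))
  rw [le_div_iff₀ hθ] at hu' hv'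
  unfold contrast
  set u := q (Function.update p i (2 * p i))
  set v := q (Function.update p i (2 * p i - 1))
  have huv : 0 < u + v := by linarith
  rw [abs_div, abs_of_pos huv, div_le_iff₀ huv, abs_le]
  constructor <;> nlinarith

theorem abs_contrast_le_sub_div (hθ : 0 < θ) (hm : θ ≤ m) (hq : ∀ p, q p ∈ Set.Icc m M) :
    |contrast i q p| ≤ (M - m) / (2 * θ) := by
  obtain ⟨hu, hu'⟩ := hq (Function.update p i (2 * p i))
  obtain ⟨hv, hv'⟩ := hq (Function.update p i (2 * p i - 1))
  unfold contrast
  rw [abs_div, abs_of_pos (by linarith : 0 < q (Function.update p i (2 * p i)) + _)]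
  exact div_le_div₀ (by linarith) (abs_le.2 ⟨by linarith, by linarith⟩) (by linarith)
    (by linarith)

theorem cell_update_add_one {x : ι → ℝ} (hx : cell s x = p) :
    cell (Function.update s i (s i + 1)) x =
      Function.update p i (if 0 < cellChart s p x i then 2 * p i else 2 * p i - 1) := by
  obtain ⟨hlo, hhi⟩ := cell_eq_iff.1 hx i
  funext k
  rcases eq_or_ne k i with rfl | hk
  · simp only [cell, Function.update_self, Int.ceil_eq_iff]
    rw [cellChart_apply] at hlo hhi ⊢
    split_ifs <;> push_cast <;> constructor <;> linarith
  · simp only [cell, Function.update_of_ne hk, ← hx]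

variable [Fintype ι]

theorem measurePreserving_cellChart_conj {f : (ι → ℝ) → ι → ℝ} (hq : ∀ p, 0 < q p)
    (s : ι → ℕ) (p : ι → ℤ)
    (hf : MeasurePreserving f
      ((volume.restrict (Metric.ball 0 1)).withDensity
        fun x => ENNReal.ofReal (1 + contrast i q p * sgn (x i)))
      (volume.restrict (Metric.ball 0 1))) :
    MeasurePreserving ((cellChart s p).symm ∘ f ∘ cellChart s p)
      ((volume.restrict (cell s ⁻¹' {p})).withDensity
        fun x => ENNReal.ofReal (q (cell (Function.update s i (s i + 1)) x)))
      ((volume.restrict (cell s ⁻¹' {p})).withDensity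
        fun x => ENNReal.ofReal (average i q (cell s x))) := by
  obtain ⟨κ, hκ⟩ := exists_measurePreserving_cellChart_restrict s p
  have hsgn := measurable_sgn
  have havg : 0 ≤ average i q p :=
    div_nonneg (add_nonneg (hq _).le (hq _).le) zero_le_two
  have hweighted : MeasurePreserving f
      ((volume.restrict (Metric.ball 0 1)).withDensity fun x =>
        ENNReal.ofReal (average i q p) * ENNReal.ofReal (1 + contrast i q p * sgn (x i)))
      ((volume.restrict (Metric.ball 0 1)).withDensity
        fun _ => ENNReal.ofReal (average i q p)) := by
    rw [withDensity_const]
    have h := hf.smul_measure (ENNReal.ofReal (average i q p))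
    rwa [← withDensity_smul _ (by fun_prop)] at h
  have hconj := measurePreserving_withDensity_conj _ hκ (by fun_prop) measurable_const hweighted
  have hcell : ∀ᵐ x ∂volume.restrict (cell s ⁻¹' {p}), cell s x = p :=
    ae_restrict_mem (measurable_cell s (measurableSet_singleton p))
  convert hconj using 1 <;> refine withDensity_congr_ae (hcell.mono fun x hx => ?_)
  · dsimp only
    rw [cell_update_add_one hx, ← average_mul_one_add_contrast_mul_sgn hq,
      ENNReal.ofReal_mul havg]
  · simp only [hx]

theorem exists_isNearId_measurePreserving_cellMeasure (n : ℕ) (hθ : 0 < θ) :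
    ∃ C, 0 ≤ C ∧ ∀ (i : Fin (n + 1)) (s : Fin (n + 1) → ℕ) (q : (Fin (n + 1) → ℤ) → ℝ) (m M : ℝ),
      θ ≤ m → M ≤ 1 / θ → (∀ j k, s j ≤ s k + 1) → (∀ p, q p ∈ Set.Icc m M) →
      ∃ f : (Fin (n + 1) → ℝ) → Fin (n + 1) → ℝ, IsNearId (C * (M - m)) f ∧
        MeasurePreserving f (cellMeasure (Function.update s i (s i + 1)) q)
          (cellMeasure s (average i q)) := by
  obtain ⟨C, hC, hball⟩ := exists_isNearId_measurePreserving_ball_pi n (sq_pos_of_pos hθ)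
  refine ⟨2 * (2 * (C / (2 * θ))), by positivity, fun i s q m M hm hM hs hq => ?_⟩
  have hMm : 0 ≤ M - m := sub_nonneg.2 ((hq 0).1.trans (hq 0).2)
  choose f hf hfid hfmp using fun p => hball i (contrast i q p)
    (abs_contrast_le_one_sub_sq hθ fun p => Set.Icc_subset_Icc hm hM (hq p))
  set F := fun p => (cellChart s p).symm ∘ f p ∘ cellChart s p with hF
  have hFid (p x) (hx : cell s x ≠ p) : F p x = x := by
    simp only [hF, Function.comp_apply, hfid p _ (one_le_norm_cellChart hx),
      MeasurableEquiv.symm_apply_apply]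
  have hFnear (p) : IsNearId (2 * (C / (2 * θ) * (M - m))) (F p) := by
    refine IsNearId.cellChart_conj (by positivity) ((hf p).mono ?_) hs p
    calc C * |contrast i q p| ≤ C * ((M - m) / (2 * θ)) :=
          mul_le_mul_of_nonneg_left (abs_contrast_le_sub_div hθ hm hq) hC
      _ = C / (2 * θ) * (M - m) := by ring
  have hglue := IsNearId.glue (by positivity) hFnear hFid
  refine ⟨fun x => F (cell s x) x, hglue.mono (le_of_eq (by ring)),
    measurePreserving_cellMeasure hglue.continuous.measurable fun p => ?_⟩
  have hFmp := measurePreserving_cellChart_conj (fun p => hθ.trans_le (hm.trans (hq p).1)) s p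
    (hfmp p)
  refine hFmp.congr hglue.continuous.measurable
    ((withDensity_absolutelyContinuous _ _).ae_le ?_)
  filter_upwards [ae_restrict_mem (measurable_cell s (measurableSet_singleton p))] with x hx
  rw [Set.mem_preimage, Set.mem_singleton_iff] at hx
  rw [hx]

end Averaging

section Euclidean

variable {d : ℕ} {L : ℝ} {f : (Fin d → ℝ) → Fin d → ℝ}

theorem eudist_eq_norm (x y : Fin d → ℝ) : eudist x y = ‖WithLp.toLp 2 (x - y)‖ := by
  simp [eudist, EuclideanSpace.norm_eq]

theorem norm_toLp_two_le (v : Fin d → ℝ) : ‖WithLp.toLp 2 v‖ ≤ d * ‖v‖ := by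
  rw [EuclideanSpace.norm_eq]
  refine Real.sqrt_le_iff.2 ⟨by positivity, ?_⟩
  calc ∑ i, ‖v i‖ ^ 2 ≤ ∑ _i : Fin d, ‖v‖ ^ 2 := by gcongr with i; exact norm_le_pi_norm v i
    _ = d * ‖v‖ ^ 2 := by simp
    _ ≤ (d * d) * ‖v‖ ^ 2 := by gcongr; exact_mod_cast Nat.le_mul_self d
    _ = (d * ‖v‖) ^ 2 := by ring

theorem norm_le_norm_toLp_two (v : Fin d → ℝ) : ‖v‖ ≤ ‖WithLp.toLp 2 v‖ :=
  (pi_norm_le_iff_of_nonneg (norm_nonneg _)).2 fun i => PiLp.norm_apply_le (WithLp.toLp 2 v) i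

theorem IsNearId.eudist_le (hL : 0 ≤ L) (hf : IsNearId L f) (x y : Fin d → ℝ) :
    eudist (f x) (f y) ≤ (1 + d * L) * eudist x y := by
  rw [eudist_eq_norm, eudist_eq_norm]
  calc ‖WithLp.toLp 2 (f x - f y)‖
      = ‖WithLp.toLp 2 ((f x - x) - (f y - y)) + WithLp.toLp 2 (x - y)‖ := by
        rw [← WithLp.toLp_add]; congr 2; abel
    _ ≤ d * ‖(f x - x) - (f y - y)‖ + ‖WithLp.toLp 2 (x - y)‖ :=
        norm_add_le_of_le (norm_toLp_two_le _) le_rfl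
    _ ≤ d * (L * ‖WithLp.toLp 2 (x - y)‖) + ‖WithLp.toLp 2 (x - y)‖ := by
        gcongr
        exact (hf x y).trans (by gcongr; exact norm_le_norm_toLp_two _)
    _ = (1 + d * L) * ‖WithLp.toLp 2 (x - y)‖ := by ring

end Euclidean

section Coarsening

theorem exists_update_add_one_eq_of_balanced {ι : Type*} [Fintype ι] [DecidableEq ι] {s : ι → ℕ}
    {N : ℕ} (hs : ∀ j k, s j ≤ s k + 1) (hN : ∑ k, s k = N + 1) :
    ∃ i, ∃ t : ι → ℕ, Function.update t i (t i + 1) = s ∧ (∀ j k, t j ≤ t k + 1) ∧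
      ∑ k, t k = N := by
  have : Nonempty ι := by
    by_contra h
    rw [not_nonempty_iff] at h
    simp at hN
  obtain ⟨i, hi⟩ := Finite.exists_max s
  have hpos : 0 < s i := Nat.pos_of_ne_zero fun h0 => by
    have hzero : ∀ k, s k = 0 := fun k => Nat.le_zero.1 (h0 ▸ hi k)
    simp [hzero] at hN
  set t := Function.update s i (s i - 1) with ht
  have hti : t i = s i - 1 := Function.update_self ..
  have hts : Function.update t i (t i + 1) = s := by
    rw [hti, Nat.sub_add_cancel hpos, ht, Function.update_idem, Function.update_eq_self]
  refine ⟨i, t, hts, fun j k => ?_, ?_⟩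
  · have htj : t j ≤ s j := update_le_self_iff.2 (Nat.sub_le _ _) j
    rcases eq_or_ne k i with rfl | hk
    · have := hi j; omega
    · rw [ht, Function.update_of_ne hk, ← ht]; exact htj.trans (hs j k)
  · have hsum := Finset.add_sum_erase Finset.univ s (Finset.mem_univ i)
    rw [ht, Finset.sum_update_of_mem (Finset.mem_univ i), Finset.sdiff_singleton_eq_erase]
    omega

theorem cellMeasure_zero {ι : Type*} [Fintype ι] (q : (ι → ℤ) → ℝ) :
    cellMeasure 0 q =
      ENNReal.ofReal (q 1) • volume.restrict (Set.univ.pi fun _ => Set.Ioc 0 1) := by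
  rw [cellMeasure, ← withDensity_const]
  refine withDensity_congr_ae ?_
  filter_upwards [ae_restrict_mem (MeasurableSet.univ_pi fun _ => measurableSet_Ioc)] with x hx
  have hcell : cell 0 x = 1 := funext fun k => by
    obtain ⟨hlo, hhi⟩ := mem_pi_Ioc_iff_cell (s := 0).1 hx k
    rw [Pi.zero_apply, pow_zero] at hhi
    exact le_antisymm hhi hlo
  rw [hcell]

theorem exists_eudist_le_measurePreserving_smul (n : ℕ) {θ : ℝ} (hθ : 0 < θ) :
    ∃ C, 0 ≤ C ∧ ∀ (m M : ℝ), θ ≤ m → M ≤ 1 / θ →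
      ∀ (N : ℕ) (s : Fin (n + 1) → ℕ) (q : (Fin (n + 1) → ℤ) → ℝ), ∑ k, s k = N →
      (∀ j k, s j ≤ s k + 1) → (∀ p, q p ∈ Set.Icc m M) →
      ∃ (f : (Fin (n + 1) → ℝ) → Fin (n + 1) → ℝ) (κ : ENNReal),
        (∀ x y, eudist (f x) (f y) ≤ (1 + C * (M - m)) ^ N * eudist x y) ∧
        MeasurePreserving f (cellMeasure s q)
          (κ • volume.restrict (Set.univ.pi fun _ => Set.Ioc 0 1)) := by
  obtain ⟨C, hC, hstep⟩ := exists_isNearId_measurePreserving_cellMeasure n hθ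
  refine ⟨((n + 1 : ℕ) : ℝ) * C, by positivity, fun m M hm hM N => ?_⟩
  induction N with
  | zero =>
    intro s q hN _ _
    have hs : s = 0 := funext fun k => (Finset.sum_eq_zero_iff.1 hN) k (Finset.mem_univ k)
    refine ⟨id, ENNReal.ofReal (q 1), fun x y => ?_, ?_⟩
    · rw [pow_zero, one_mul, id, id]
    · rw [hs, cellMeasure_zero]; exact MeasurePreserving.id _
  | succ N ih =>
    intro s q hN hs hq
    have hMm : 0 ≤ M - m := sub_nonneg.2 ((hq 0).1.trans (hq 0).2)
    obtain ⟨i, t, rfl, ht, htN⟩ := exists_update_add_one_eq_of_balanced hs hN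
    obtain ⟨g, hg, hgmp⟩ := hstep i t q m M hm hM ht hq
    obtain ⟨f, κ, hf, hfmp⟩ := ih t (average i q) htN ht (average_mem_Icc hq)
    refine ⟨f ∘ g, κ, fun x y => ?_, hfmp.comp hgmp⟩
    set K := 1 + ((n + 1 : ℕ) : ℝ) * C * (M - m)
    calc eudist (f (g x)) (f (g y)) ≤ K ^ N * eudist (g x) (g y) := hf _ _
      _ ≤ K ^ N * ((1 + (n + 1 : ℕ) * (C * (M - m))) * eudist x y) := by
          gcongr; exact hg.eudist_le (by positivity) x y
      _ = K ^ (N + 1) * eudist x y := by simp only [K]; ring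

end Coarsening

section UnitCube

variable {d l : ℕ} {ρ : (Fin d → ℝ) → ℝ}

theorem unitCube_eq_Icc (d : ℕ) : unitCube d = Set.Icc 0 1 :=
  Set.ext fun _ => forall_and

theorem pi_Ioc_subset_unitCube : (Set.univ.pi fun _ => Set.Ioc 0 1) ⊆ unitCube d :=
  fun _ hx k => ⟨(hx k trivial).1.le, (hx k trivial).2⟩

theorem unitCube_ae_eq_pi_Ioc (d : ℕ) :
    unitCube d =ᵐ[volume] (Set.univ.pi fun _ => Set.Ioc 0 1) := by
  rw [unitCube_eq_Icc]
  exact Measure.univ_pi_Ioc_ae_eq_Icc.symm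

theorem mem_dyadicCube_iff {p : Fin d → Fin (2 ^ l)} {x : Fin d → ℝ} :
    x ∈ dyadicCube (2 ^ l) p ↔ ∀ k, cell (fun _ => l) x k = (p k : ℕ) + 1 := by
  refine forall_congr' fun k => ?_
  have : (0 : ℝ) < 2 ^ l := by positivity
  rw [cell, Int.ceil_eq_iff]
  push_cast
  rw [div_lt_iff₀' this, le_div_iff₀' this, add_sub_cancel_right]

theorem exists_forall_mem_dyadicCube_iff {x : Fin d → ℝ}
    (hx : x ∈ Set.univ.pi fun _ => Set.Ioc (0 : ℝ) 1) :
    ∃ p, ∀ y, y ∈ dyadicCube (2 ^ l) p ↔ cell (fun _ => l) y = cell (fun _ => l) x := by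
  have hcell := mem_pi_Ioc_iff_cell (s := fun _ => l).1 hx
  have htoNat (k) : ((cell (fun _ => l) x k - 1).toNat : ℤ) = cell (fun _ => l) x k - 1 :=
    Int.toNat_of_nonneg (Int.le_sub_one_of_lt (hcell k).1)
  refine ⟨fun k => ⟨(cell (fun _ => l) x k - 1).toNat, ?_⟩, fun y => ?_⟩
  · zify
    rw [htoNat]
    exact Int.sub_one_lt_of_le (hcell k).2
  · simp only [mem_dyadicCube_iff, htoNat, sub_add_cancel, funext_iff]

theorem exists_eqOn_comp_cell {m M : ℝ}
    (hconst : ∀ p : Fin d → Fin (2 ^ l), ∀ x ∈ dyadicCube (2 ^ l) p,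
      ∀ y ∈ dyadicCube (2 ^ l) p, ρ x = ρ y)
    (hρ : ∀ x ∈ unitCube d, ρ x ∈ Set.Icc m M) :
    ∃ q : (Fin d → ℤ) → ℝ, (∀ p, q p ∈ Set.Icc m M) ∧
      Set.EqOn ρ (fun x => q (cell (fun _ => l) x)) (Set.univ.pi fun _ => Set.Ioc 0 1) := by
  have hex (p : Fin d → ℤ) : ∃ r ∈ Set.Icc m M, ∀ x ∈ Set.univ.pi fun _ => Set.Ioc (0 : ℝ) 1,
      cell (fun _ => l) x = p → ρ x = r := by
    by_cases hp : ∃ y ∈ Set.univ.pi fun _ => Set.Ioc (0 : ℝ) 1, cell (fun _ => l) y = p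
    · obtain ⟨y, hy, rfl⟩ := hp
      obtain ⟨p, hp⟩ := exists_forall_mem_dyadicCube_iff (l := l) hy
      exact ⟨ρ y, hρ y (pi_Ioc_subset_unitCube hy),
        fun x _ hxy => hconst p x ((hp x).2 hxy) y ((hp y).2 rfl)⟩
    · exact ⟨ρ 0, hρ 0 fun _ => ⟨le_rfl, zero_le_one⟩, fun x hx hxp => (hp ⟨x, hx, hxp⟩).elim⟩
  choose q hq hρq using hex
  exact ⟨q, hq, fun x hx => hρq _ x hx rfl⟩

theorem withDensity_unitCube_eq_cellMeasure {q : (Fin d → ℤ) → ℝ}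
    (hρq : Set.EqOn ρ (fun x => q (cell (fun _ => l) x)) (Set.univ.pi fun _ => Set.Ioc 0 1)) :
    (volume.restrict (unitCube d)).withDensity (fun x => ENNReal.ofReal (ρ x)) =
      cellMeasure (fun _ => l) q := by
  rw [Measure.restrict_congr_set (unitCube_ae_eq_pi_Ioc d), cellMeasure]
  refine withDensity_congr_ae ?_
  filter_upwards [ae_restrict_mem (MeasurableSet.univ_pi fun _ => measurableSet_Ioc)] with x hx
  rw [hρq hx]

theorem withDensity_unitCube_univ (hmass : ∫ x in unitCube d, ρ x = 1)
    (hpos : ∀ x ∈ unitCube d, 0 ≤ ρ x) :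
    (volume.restrict (unitCube d)).withDensity (fun x => ENNReal.ofReal (ρ x)) Set.univ = 1 := by
  have hmeas : MeasurableSet (unitCube d) := unitCube_eq_Icc d ▸ measurableSet_Icc
  rw [withDensity_apply _ MeasurableSet.univ, Measure.restrict_univ,
    ← ofReal_integral_eq_lintegral_ofReal (integrable_of_integral_eq_one hmass)
      ((ae_restrict_mem hmeas).mono hpos), hmass, ENNReal.ofReal_one]

theorem eq_one_of_measurePreserving_smul {X Y : Type*} [MeasurableSpace X] [MeasurableSpace Y]
    {μ : Measure X} {ν : Measure Y} {f : X → Y} {κ : ENNReal} (hμ : μ Set.univ = 1)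
    (hν : ν Set.univ = 1) (hf : MeasurePreserving f μ (κ • ν)) : κ = 1 := by
  have h := hf.measure_preimage MeasurableSet.univ.nullMeasurableSet
  rwa [Set.preimage_univ, hμ, Measure.smul_apply, hν, smul_eq_mul, mul_one, eq_comm] at h

theorem bounds_sInf_sSup_image_unitCube {a b : ℝ}
    (h : ∀ x ∈ unitCube d, a ≤ ρ x ∧ ρ x ≤ b) :
    a ≤ sInf (ρ '' unitCube d) ∧ sInf (ρ '' unitCube d) ≤ sSup (ρ '' unitCube d) ∧
      sSup (ρ '' unitCube d) ≤ b ∧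
      ∀ x ∈ unitCube d, ρ x ∈ Set.Icc (sInf (ρ '' unitCube d)) (sSup (ρ '' unitCube d)) := by
  have hne : (ρ '' unitCube d).Nonempty := ⟨ρ 0, 0, fun _ => ⟨le_rfl, zero_le_one⟩, rfl⟩
  have ha : a ∈ lowerBounds (ρ '' unitCube d) := Set.forall_mem_image.2 fun x hx => (h x hx).1
  have hb : b ∈ upperBounds (ρ '' unitCube d) := Set.forall_mem_image.2 fun x hx => (h x hx).2
  exact ⟨le_csInf hne ha, csInf_le_csSup hne ⟨a, ha⟩ ⟨b, hb⟩, csSup_le hne hb,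
    Set.forall_mem_image.1 (subset_Icc_csInf_csSup ⟨a, ha⟩ ⟨b, hb⟩)⟩

theorem exists_one_add_mul_pow_le (d : ℕ) {C X : ℝ} (hC : 0 ≤ C) (hX : 0 ≤ X) :
    ∃ Δ, 0 < Δ ∧ ∀ x, 0 ≤ x → x ≤ X → (1 + C * x) ^ d ≤ 1 + Δ * x := by
  refine ⟨C * d * (1 + C * X) ^ (d - 1) + 1, by positivity, fun x hx hxX => ?_⟩
  have h0 : 0 ≤ C * x := by positivity
  have hpow := abs_pow_sub_pow_le (1 + C * x) 1 d
  rw [one_pow, add_sub_cancel_left, abs_of_nonneg h0, abs_of_nonneg (by linarith : 0 ≤ 1 + C * x),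
    abs_one, max_eq_left (by linarith)] at hpow
  calc (1 + C * x) ^ d ≤ 1 + C * x * d * (1 + C * x) ^ (d - 1) := by
        linarith [le_abs_self ((1 + C * x) ^ d - 1)]
    _ ≤ 1 + C * x * d * (1 + C * X) ^ (d - 1) := by gcongr
    _ ≤ 1 + (C * d * (1 + C * X) ^ (d - 1) + 1) * x := by linarith

end UnitCube

end RiviereYe

/-- (Rivière–Ye smoothing.) If `ρ` is a density on `[0,1]^d`, constant on each cube of
`𝒯_{2^l}`, with total integral `1` and `θ ≤ ρ ≤ 1/θ`, then there is a Lipschitz map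
`f : [0,1]^d → ℝ^d` pushing `ρ·ℒ` forward to `ℒ|_{[0,1]^d}`, with
`Lip(f) ≤ (1 + Δ·(max ρ − min ρ))^l` for a constant `Δ = Δ(d,θ)`. -/
theorem stmt_5 (d : ℕ) (hd : 1 ≤ d) (θ : ℝ) (hθ0 : 0 < θ) (hθ1 : θ < 1) :
    ∃ Δ : ℝ, 0 < Δ ∧
      ∀ (l : ℕ) (ρ : (Fin d → ℝ) → ℝ),
        (∀ p : Fin d → Fin (2 ^ l), ∀ x ∈ dyadicCube (2 ^ l) p, ∀ y ∈ dyadicCube (2 ^ l) p,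
          ρ x = ρ y) →
        (∫ x in unitCube d, ρ x) = 1 →
        (∀ x ∈ unitCube d, θ ≤ ρ x ∧ ρ x ≤ 1 / θ) →
        ∃ f : (Fin d → ℝ) → (Fin d → ℝ),
          (∀ x ∈ unitCube d, ∀ y ∈ unitCube d,
            eudist (f x) (f y) ≤
              (1 + Δ * (sSup (ρ '' unitCube d) - sInf (ρ '' unitCube d))) ^ l *
                eudist x y) ∧
          Measure.map f
              ((volume.restrict (unitCube d)).withDensity fun x => ENNReal.ofReal (ρ x)) =
            volume.restrict (unitCube d) := by
  obtain ⟨n, rfl⟩ := Nat.exists_eq_add_of_le' hd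
  obtain ⟨C, hC, hchain⟩ := RiviereYe.exists_eudist_le_measurePreserving_smul n hθ0
  obtain ⟨Δ, hΔ, hpow⟩ := RiviereYe.exists_one_add_mul_pow_le (n + 1) hC (one_div_pos.2 hθ0).le
  refine ⟨Δ, hΔ, fun l ρ hconst hmass hbound => ?_⟩
  obtain ⟨hm, hmM, hM, hρ⟩ := RiviereYe.bounds_sInf_sSup_image_unitCube hbound
  set M := sSup (ρ '' unitCube (n + 1))
  set m := sInf (ρ '' unitCube (n + 1))
  obtain ⟨q, hq, hρq⟩ := RiviereYe.exists_eqOn_comp_cell hconst hρ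
  obtain ⟨f, κ, hf, hmp⟩ := hchain m M hm hM ((n + 1) * l) (fun _ => l) q (by simp) (by simp) hq
  rw [← RiviereYe.withDensity_unitCube_eq_cellMeasure hρq,
    ← Measure.restrict_congr_set (RiviereYe.unitCube_ae_eq_pi_Ioc (n + 1))] at hmp
  have hκ : κ = 1 := RiviereYe.eq_one_of_measurePreserving_smul
    (RiviereYe.withDensity_unitCube_univ hmass fun x hx => hθ0.le.trans (hbound x hx).1)
    (by simp [RiviereYe.unitCube_eq_Icc, Real.volume_Icc_pi]) hmp
  refine ⟨f, fun x _ y _ => (hf x y).trans ?_, by rw [hmp.map_eq, hκ, one_smul]⟩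
  refine mul_le_mul_of_nonneg_right ?_ (Real.sqrt_nonneg _)
  rw [pow_mul]
  have : 0 ≤ M - m := sub_nonneg.2 hmM
  exact pow_le_pow_left₀ (by positivity) (hpow (M - m) this (by linarith)) l
end
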